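/- arXiv:1312.2487 — 6 statements merged into one kernel-verified Lean document; each statement's English description precedes it below -/
import Mathlib

section
/- Let μ and ν be Borel probability measures on [0,∞) such that ψ_μ(z) = ψ_ν(z) for every z ∈ Ω = ℂ∖[0,∞). Then μ = ν. -/
open MeasureTheory Complex Set Filter

/-- The ψ-transform of a measure on `[0,∞)`: `ψ_μ(z) = ∫ xz/(1-xz) dμ(x)`. -/
noncomputable def psiT (μ : Measure ℝ) (z : ℂ) : ℂ :=
  ∫ x, ((x : ℂ) * z) / (1 - (x : ℂ) * z) ∂μ

/-- The domain `Ω = ℂ ∖ [0,∞)`. -/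
def OmegaDom : Set ℂ := {z : ℂ | ¬ (z.im = 0 ∧ 0 ≤ z.re)}

/-!
The substitution `v = x / (1 + x)` turns a measure on `[0,∞)` into one on `[0,1)`, and
`1 / (1 - (1 + z) v) = 1 + (1 + z) / z * (x z / (1 - x z))`. So near `z = -1` the transform `ψ_μ`
and the total mass determine the generating function `∑ wⁿ ∫ vⁿ dμ`, `w = 1 + z`, of the moments
of `v`. The law of the bounded variable `v` is determined by its moments, and `v` determines `x`.
-/

open ProbabilityTheory Topology

lemma eventuallyEq_of_iteratedDeriv_eq {𝕜 : Type*} [NontriviallyNormedField 𝕜]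
    [CompleteSpace 𝕜] [CharZero 𝕜] {f g : 𝕜 → 𝕜} {x : 𝕜} (hf : AnalyticAt 𝕜 f x)
    (hg : AnalyticAt 𝕜 g x) (h : ∀ n, iteratedDeriv n f x = iteratedDeriv n g x) :
    f =ᶠ[𝓝 x] g := by
  have hf_series := hf.hasFPowerSeriesAt
  simp only [h] at hf_series
  filter_upwards [hf_series.eventually_hasSum_sub, hg.hasFPowerSeriesAt.eventually_hasSum_sub]
    with z hfz hgz using hfz.unique hgz

section RandomVariables

variable {α β : Type*} {mα : MeasurableSpace α} {mβ : MeasurableSpace β}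
  {μ : Measure α} {ν : Measure β} {X : α → ℝ} {Y : β → ℝ}

lemma integral_ofReal_pow_eq_moment (n : ℕ) : ∫ ω, (X ω : ℂ) ^ n ∂μ = moment X n μ := by
  simp only [← ofReal_pow, integral_complex_ofReal, moment, Pi.pow_apply]

lemma iteratedDeriv_complexMGF_zero (h : 0 ∈ interior (integrableExpSet X μ)) (n : ℕ) :
    iteratedDeriv n (complexMGF X μ) 0 = moment X n μ := by
  rw [iteratedDeriv_complexMGF (by simpa using h), ← integral_ofReal_pow_eq_moment]
  simp

lemma map_eq_map_of_moment_eq [IsFiniteMeasure μ] [IsFiniteMeasure ν]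
    (hX : 0 ∈ interior (integrableExpSet X μ)) (hY : 0 ∈ interior (integrableExpSet Y ν))
    (h : ∀ n, moment X n μ = moment Y n ν) : μ.map X = ν.map Y := by
  let strip : Set ℂ :=
    re ⁻¹' (interior (integrableExpSet X μ) ∩ interior (integrableExpSet Y ν))
  have strip_preconnected : IsPreconnected strip :=
    ((convex_integrableExpSet.interior.inter convex_integrableExpSet.interior).linear_preimage
      reLm).isPreconnected
  have analytic_X : AnalyticOnNhd ℂ (complexMGF X μ) strip :=
    analyticOnNhd_complexMGF.mono fun _ hz ↦ hz.1
  have analytic_Y : AnalyticOnNhd ℂ (complexMGF Y ν) strip :=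
    analyticOnNhd_complexMGF.mono fun _ hz ↦ hz.2
  have zero_mem : (0 : ℂ) ∈ strip := ⟨hX, hY⟩
  have eventuallyEq_zero : complexMGF X μ =ᶠ[𝓝 0] complexMGF Y ν :=
    eventuallyEq_of_iteratedDeriv_eq (analytic_X 0 zero_mem) (analytic_Y 0 zero_mem)
      fun n ↦ by
        rw [iteratedDeriv_complexMGF_zero hX, iteratedDeriv_complexMGF_zero hY, h]
  apply Measure.ext_of_charFun
  funext t
  rw [← complexMGF_mul_I (aemeasurable_of_mem_interior_integrableExpSet hX),
    ← complexMGF_mul_I (aemeasurable_of_mem_interior_integrableExpSet hY)]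
  refine analytic_X.eqOn_of_preconnected_of_eventuallyEq analytic_Y strip_preconnected zero_mem
    eventuallyEq_zero ?_
  simpa [strip] using And.intro hX hY

lemma integrableExpSet_eq_univ_of_mem_Icc [IsFiniteMeasure μ] {a b : ℝ} (hX : AEMeasurable X μ)
    (hab : ∀ᵐ ω ∂μ, X ω ∈ Icc a b) : integrableExpSet X μ = univ :=
  eq_univ_of_forall fun _ ↦ integrable_exp_mul_of_mem_Icc hX hab

lemma hasFPowerSeriesAt_integral_inv_one_sub_mul {𝕜 : Type*} [RCLike 𝕜] [IsFiniteMeasure μ]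
    {Z : α → 𝕜} {R : ℝ} (hZ : AEStronglyMeasurable Z μ) (hR : ∀ᵐ ω ∂μ, ‖Z ω‖ ≤ R) :
    HasFPowerSeriesAt (fun w ↦ ∫ ω, (1 - w * Z ω)⁻¹ ∂μ)
      (.ofScalars 𝕜 fun n ↦ ∫ ω, Z ω ^ n ∂μ) 0 := by
  have small : ∀ᶠ w : 𝕜 in 𝓝 0, |‖w‖ * R| < 1 :=
    ContinuousAt.eventually_lt (by fun_prop) continuousAt_const (by simp)
  rw [hasFPowerSeriesAt_iff]
  filter_upwards [small] with w hw
  have norm_mul_le : ∀ᵐ ω ∂μ, ‖w * Z ω‖ ≤ ‖w‖ * R := by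
    filter_upwards [hR] with ω hω
    rw [norm_mul]
    gcongr
  have termwise := hasSum_integral_of_dominated_convergence (μ := μ)
    (F := fun n ω ↦ (w * Z ω) ^ n) (f := fun ω ↦ (1 - w * Z ω)⁻¹) (fun n _ ↦ (‖w‖ * R) ^ n)
    (fun n ↦ (hZ.const_mul w).pow n)
    (fun n ↦ by
      filter_upwards [norm_mul_le] with ω hω
      rw [norm_pow]
      gcongr)
    (.of_forall fun _ ↦ summable_geometric_of_abs_lt_one hw)
    (integrable_const _)
    (by
      filter_upwards [norm_mul_le] with ω hω
      exact hasSum_geometric_of_norm_lt_one (hω.trans_lt (lt_of_abs_lt hw)))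
  simpa only [mul_pow, integral_const_mul, FormalMultilinearSeries.coeff_ofScalars, smul_eq_mul,
    zero_add] using termwise

lemma moment_eq_of_frequently_integral_inv_one_sub_mul_eq [IsFiniteMeasure μ] [IsFiniteMeasure ν]
    {R S : ℝ} (hX : AEMeasurable X μ) (hY : AEMeasurable Y ν)
    (hXR : ∀ᵐ ω ∂μ, |X ω| ≤ R) (hYS : ∀ᵐ ω ∂ν, |Y ω| ≤ S)
    (h : ∃ᶠ w : ℂ in 𝓝[≠] 0, ∫ ω, (1 - w * X ω)⁻¹ ∂μ = ∫ ω, (1 - w * Y ω)⁻¹ ∂ν) (n : ℕ) :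
    moment X n μ = moment Y n ν := by
  have series_X := hasFPowerSeriesAt_integral_inv_one_sub_mul (μ := μ) (Z := fun ω ↦ (X ω : ℂ))
    (R := R) (by fun_prop) (by simpa using hXR)
  have series_Y := hasFPowerSeriesAt_integral_inv_one_sub_mul (μ := ν) (Z := fun ω ↦ (Y ω : ℂ))
    (R := S) (by fun_prop) (by simpa using hYS)
  have series_eq := series_X.eq_formalMultilinearSeries_of_eventually series_Y
    ((series_X.analyticAt.frequently_eq_iff_eventually_eq series_Y.analyticAt).mp h)
  have coeff_eq := congrFun (FormalMultilinearSeries.ofScalars_series_injective ℂ ℂ series_eq) n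
  simpa only [integral_ofReal_pow_eq_moment, ofReal_inj] using coeff_eq

lemma map_eq_map_of_frequently_integral_inv_one_sub_mul_eq [IsFiniteMeasure μ]
    [IsFiniteMeasure ν] {R S : ℝ} (hX : AEMeasurable X μ) (hY : AEMeasurable Y ν)
    (hXR : ∀ᵐ ω ∂μ, |X ω| ≤ R) (hYS : ∀ᵐ ω ∂ν, |Y ω| ≤ S)
    (h : ∃ᶠ w : ℂ in 𝓝[≠] 0, ∫ ω, (1 - w * X ω)⁻¹ ∂μ = ∫ ω, (1 - w * Y ω)⁻¹ ∂ν) :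
    μ.map X = ν.map Y := by
  refine map_eq_map_of_moment_eq ?_ ?_
    (moment_eq_of_frequently_integral_inv_one_sub_mul_eq hX hY hXR hYS h)
  · simp [integrableExpSet_eq_univ_of_mem_Icc hX (hXR.mono fun _ ↦ abs_le.mp)]
  · simp [integrableExpSet_eq_univ_of_mem_Icc hY (hYS.mono fun _ ↦ abs_le.mp)]

end RandomVariables

/-- The bijection `x ↦ x / (1 + x)` of `[0,∞)` onto `[0,1)`, which carries measures on `[0,∞)` to
measures with bounded support. Written as `1 - (1 + x)⁻¹`, it is injective on all of `ℝ`, the junk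
value at `x = -1` included. -/
noncomputable def compress (x : ℝ) : ℝ := 1 - (1 + x)⁻¹

lemma compress_injective : Function.Injective compress := fun x y h ↦ by
  simpa [compress] using h

lemma measurable_compress : Measurable compress := by
  unfold compress
  fun_prop

lemma abs_compress_le_one {x : ℝ} (hx : 0 ≤ x) : |compress x| ≤ 1 := by
  have inv_le_one : (1 + x)⁻¹ ≤ 1 := inv_le_one_of_one_le₀ (by linarith)
  have inv_nonneg : 0 ≤ (1 + x)⁻¹ := by positivity
  rw [abs_le, compress]
  constructor <;> linarith

lemma map_compress_injective : Function.Injective (Measure.map compress) :=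
  (measurable_compress.measurableEmbedding compress_injective).map_injective

section PsiTransform

variable {μ : Measure ℝ} {z : ℂ}

lemma ae_nonneg_of_measure_Iio_eq_zero (hμ : μ (Iio 0) = 0) : ∀ᵐ x ∂μ, 0 ≤ x := by
  simpa [ae_iff, Iio] using hμ

lemma one_sub_mul_re_le_norm (x : ℝ) (z : ℂ) : 1 - x * z.re ≤ ‖1 - x * z‖ := by
  simpa using re_le_norm (1 - x * z)

lemma one_sub_ofReal_mul_ne_zero {x : ℝ} (hx : 0 ≤ x) (hz : z.re < 0) : 1 - x * z ≠ 0 := by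
  rw [← norm_pos_iff]
  have := mul_nonpos_of_nonneg_of_nonpos hx hz.le
  linarith [one_sub_mul_re_le_norm x z]

lemma norm_mul_div_one_sub_mul_le {x : ℝ} (hx : 0 ≤ x) (hz : z.re < 0) :
    ‖x * z / (1 - x * z)‖ ≤ ‖z‖ / -z.re := by
  have denom_pos := norm_pos_iff.mpr (one_sub_ofReal_mul_ne_zero hx hz)
  rw [norm_div, div_le_div_iff₀ denom_pos (neg_pos.mpr hz)]
  calc ‖x * z‖ * -z.re = ‖z‖ * -(x * z.re) := by
        rw [norm_mul, Complex.norm_of_nonneg hx]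
        ring
    _ ≤ ‖z‖ * ‖1 - x * z‖ := by
        gcongr
        linarith [one_sub_mul_re_le_norm x z]

lemma integrable_mul_div_one_sub_mul [IsFiniteMeasure μ] (hμ : μ (Iio 0) = 0) (hz : z.re < 0) :
    Integrable (fun x : ℝ ↦ x * z / (1 - x * z)) μ :=
  .of_bound (Measurable.aestronglyMeasurable (by fun_prop)) (‖z‖ / -z.re) <| by
    filter_upwards [ae_nonneg_of_measure_Iio_eq_zero hμ] with x hx
      using norm_mul_div_one_sub_mul_le hx hz

lemma inv_one_sub_mul_compress {x : ℝ} (hx : 0 ≤ x) (hz : z.re < 0) :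
    (1 - (1 + z) * compress x)⁻¹ = 1 + (1 + z) / z * (x * z / (1 - x * z)) := by
  have z_ne_zero : z ≠ 0 := fun h ↦ by simp [h] at hz
  have denom_ne_zero := one_sub_ofReal_mul_ne_zero hx hz
  have one_add_ne_zero : (1 + x : ℂ) ≠ 0 := by
    norm_cast
    positivity
  have denom_eq : 1 - (1 + z) * compress x = (1 - x * z) / (1 + x) := by
    rw [compress]
    push_cast
    field_simp
    ring
  rw [denom_eq]
  field_simp
  ring

lemma integral_inv_one_sub_mul_compress [IsFiniteMeasure μ] (hμ : μ (Iio 0) = 0)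
    (hz : z.re < 0) :
    ∫ x, (1 - (1 + z) * compress x)⁻¹ ∂μ = μ.real univ + (1 + z) / z * psiT μ z := by
  calc ∫ x, (1 - (1 + z) * compress x)⁻¹ ∂μ
      = ∫ x : ℝ, 1 + (1 + z) / z * (x * z / (1 - x * z)) ∂μ := by
        apply integral_congr_ae
        filter_upwards [ae_nonneg_of_measure_Iio_eq_zero hμ] with x hx
          using inv_one_sub_mul_compress hx hz
    _ = μ.real univ + (1 + z) / z * psiT μ z := by
        rw [integral_add (integrable_const _)
          ((integrable_mul_div_one_sub_mul hμ hz).const_mul _), integral_const_mul, psiT]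
        simp

lemma eventually_re_neg_nhdsNE_neg_one : ∀ᶠ z : ℂ in 𝓝[≠] (-1), z.re < 0 :=
  nhdsWithin_le_nhds (continuous_re.continuousAt.eventually_lt continuousAt_const (by simp))

lemma mem_OmegaDom_of_re_neg (hz : z.re < 0) : z ∈ OmegaDom := fun h ↦ hz.not_ge h.2

end PsiTransform

theorem psi_transform_injective_general (μ ν : Measure ℝ) [IsFiniteMeasure μ] [IsFiniteMeasure ν]
    (hμ : μ (Iio 0) = 0) (hν : ν (Iio 0) = 0) (hmass : μ univ = ν univ)
    (h : ∃ᶠ z in 𝓝[≠] (-1), psiT μ z = psiT ν z) : μ = ν := by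
  have tendsto_one_add : Tendsto (fun z : ℂ ↦ 1 + z) (𝓝[≠] (-1)) (𝓝[≠] 0) := by
    simp [Tendsto]
  have resolvent_eq : ∃ᶠ w : ℂ in 𝓝[≠] 0,
      ∫ x, (1 - w * compress x)⁻¹ ∂μ = ∫ x, (1 - w * compress x)⁻¹ ∂ν := by
    refine tendsto_one_add.frequently
      ((h.and_eventually eventually_re_neg_nhdsNE_neg_one).mono fun z ⟨hψ, hz⟩ ↦ ?_)
    rw [integral_inv_one_sub_mul_compress hμ hz, integral_inv_one_sub_mul_compress hν hz, hψ,
      measureReal_def, hmass, measureReal_def]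
  exact map_compress_injective <| map_eq_map_of_frequently_integral_inv_one_sub_mul_eq
    measurable_compress.aemeasurable measurable_compress.aemeasurable
    ((ae_nonneg_of_measure_Iio_eq_zero hμ).mono fun _ ↦ abs_compress_le_one)
    ((ae_nonneg_of_measure_Iio_eq_zero hν).mono fun _ ↦ abs_compress_le_one) resolvent_eq

/-- If two Borel probability measures on `[0,∞)` have the same `ψ`-transform on
`Ω = ℂ ∖ [0,∞)`, then they are equal. -/
theorem psi_transform_injective (μ ν : Measure ℝ)
    [IsProbabilityMeasure μ] [IsProbabilityMeasure ν]
    (hμ : μ (Set.Iio (0 : ℝ)) = 0) (hν : ν (Set.Iio (0 : ℝ)) = 0)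
    (h : ∀ z ∈ OmegaDom, psiT μ z = psiT ν z) : μ = ν :=
  psi_transform_injective_general μ ν hμ hν (by simp)
    (eventually_re_neg_nhdsNE_neg_one.mono fun z hz ↦ h z (mem_OmegaDom_of_re_neg hz)).frequently
end

section
/- Let ν, μ₁, μ₂, … be measures in M₊. Then μ_n converges weakly to ν if and only if the sequence of functions B_{μ_n} converges to B_ν uniformly on every compact subset of the domain Ω = ℂ∖[0,∞). -/
open MeasureTheory Complex Set Filter

/-- The η-transform: `η_μ(z) = ψ_μ(z)/(1+ψ_μ(z))`. -/
noncomputable def etaT (μ : Measure ℝ) (z : ℂ) : ℂ :=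
  psiT μ z / (1 + psiT μ z)

/-- The B-transform: `B_μ(z) = z/η_μ(z)`. -/
noncomputable def BT (μ : Measure ℝ) (z : ℂ) : ℂ :=
  z / etaT μ z

/-!
The substitution `u = 1 / (1 + x)` turns weak convergence on `[0, ∞)` into weak convergence on the
compact interval `[0, 1]`, where the integrand of `ψ` becomes a kernel `psiKernel z` continuous in
`u`, and `B(z) = z + z / ψ(z)` turns convergence of `B` into convergence of `ψ`.

Since `∫ f dρ` is jointly continuous in `f` and `ρ`, weak convergence gives `ψ_{μ i} → ψ_ν`
uniformly on compact sets. To divide, one needs `ψ_ν ≠ 0`: writing `z = -s ^ 2` with `0 < re s`, the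
integrand of `-s⁻¹ * ψ_ν(z)` has positive real part for `x ≠ 0`.

Conversely, the resolvent identity `(z - w) ψ_z ψ_w = w ψ_z - z ψ_w` for the kernels shows that the
closed span of `1` and the kernels at the points `-t`, `t > 0`, is an algebra, hence all of
`C([0, 1])` by Stone–Weierstrass. So already pointwise convergence of `B` on the negative half-line
forces weak convergence.
-/

section WeakConvergence

open Topology

variable {X Y ι : Type*} [TopologicalSpace X] [MeasurableSpace X] [OpensMeasurableSpace X]
  [TopologicalSpace Y] [MeasurableSpace Y] [BorelSpace Y]
  [HasOuterApproxClosed Y] {l : Filter ι} [l.IsCountablyGenerated]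

theorem tendsto_map_iff_of_isInducing_domRestrict {f : X → Y} (hf : Continuous f) {s : Set X}
    (hfs : IsInducing (s.domRestrict f)) {μ : ι → ProbabilityMeasure X} {ν : ProbabilityMeasure X}
    (hμ : ∀ i, ∀ᵐ x ∂(μ i : Measure X), x ∈ s) (hν : ∀ᵐ x ∂(ν : Measure X), x ∈ s) :
    Tendsto (fun i ↦ (μ i).map hf.measurable.aemeasurable) l
        (𝓝 (ν.map hf.measurable.aemeasurable)) ↔ Tendsto μ l (𝓝 ν) := by
  refine ⟨fun h ↦ tendsto_of_forall_isOpen_le_liminf' fun G hG ↦ ?_,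
    fun h ↦ ProbabilityMeasure.tendsto_map_of_tendsto_of_continuous μ ν h hf⟩
  obtain ⟨V, hV, hGV⟩ := hfs.isOpen_iff.mp (hG.preimage continuous_subtype_val)
  have measure_eq {ρ : ProbabilityMeasure X} (hρ : ∀ᵐ x ∂(ρ : Measure X), x ∈ s) :
      (ρ : Measure X) G = (ρ.map hf.measurable.aemeasurable : Measure Y) V := by
    rw [ProbabilityMeasure.map_apply' _ _ hV.measurableSet]
    refine measure_congr (hρ.mono fun x hx ↦ propext ?_)
    exact (Set.ext_iff.mp hGV ⟨x, hx⟩).symm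
  simp only [measure_eq hν, measure_eq (hμ _)]
  exact ProbabilityMeasure.le_liminf_measure_open_of_tendsto h hV

end WeakConvergence

section CompactSpace

open Topology

variable {X 𝕜 ι : Type*} [TopologicalSpace X] [CompactSpace X] [RCLike 𝕜]

theorem topologicalClosure_span_eq_top_of_separatesPoints {S : Set C(X, 𝕜)} (h_one : 1 ∈ S)
    (h_star : ∀ f ∈ S, star f ∈ S) (h_sep : ∀ x y, x ≠ y → ∃ f ∈ S, f x ≠ f y)
    (h_mul : ∀ f ∈ S, ∀ g ∈ S, f * g ∈ (Submodule.span 𝕜 S).topologicalClosure) :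
    (Submodule.span 𝕜 S).topologicalClosure = ⊤ := by
  set V := (Submodule.span 𝕜 S).topologicalClosure
  have subset_V : S ⊆ V :=
    fun f hf ↦ Submodule.le_topologicalClosure _ (Submodule.subset_span hf)
  have isClosed_V : IsClosed (V : Set C(X, 𝕜)) := Submodule.isClosed_topologicalClosure _
  have span_mul_span_le : Submodule.span 𝕜 S * Submodule.span 𝕜 S ≤ V := by
    rw [Submodule.span_mul_span, Submodule.span_le]
    rintro _ ⟨f, hf, g, hg, rfl⟩
    exact h_mul f hf g hg
  have mul_mem (f g) (hf : f ∈ V) (hg : g ∈ V) : f * g ∈ V :=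
    isClosed_V.closure_subset <| map_mem_closure₂ continuous_mul hf hg
      fun a ha b hb ↦ span_mul_span_le (Submodule.mul_mem_mul ha hb)
  have star_mem (f) (hf : f ∈ V) : star f ∈ V := by
    refine isClosed_V.closure_subset <| map_mem_closure continuous_star hf fun a ha ↦ ?_
    induction ha using Submodule.span_induction with
    | mem a ha => exact subset_V (h_star a ha)
    | zero => simp
    | add a b _ _ ha hb => simpa using V.add_mem ha hb
    | smul c a _ ha => simpa using V.smul_mem (star c) ha
  let A : StarSubalgebra 𝕜 C(X, 𝕜) :=
    { V.toSubalgebra (subset_V h_one) mul_mem with star_mem' := @star_mem }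
  have separatesPoints_A : A.SeparatesPoints := fun x y hxy ↦ by
    obtain ⟨f, hf, hfxy⟩ := h_sep x y hxy
    exact ⟨f, ⟨f, subset_V hf, rfl⟩, hfxy⟩
  have closure_A := ContinuousMap.starSubalgebra_topologicalClosure_eq_top_of_separatesPoints A
    separatesPoints_A
  refine SetLike.coe_injective ?_
  rw [← isClosed_V.closure_eq]
  exact congrArg SetLike.coe closure_A

variable [MeasurableSpace X] [OpensMeasurableSpace X] {E : Type*} [NormedAddCommGroup E]

theorem integrable_of_compactSpace (μ : Measure X) [IsFiniteMeasure μ] (f : C(X, E)) :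
    Integrable f μ :=
  f.continuous.integrable_of_hasCompactSupport (HasCompactSupport.of_compactSpace f)

theorem lipschitzWith_integral [NormedSpace ℝ E] (μ : Measure X) [IsProbabilityMeasure μ] :
    LipschitzWith 1 fun f : C(X, E) ↦ ∫ x, f x ∂μ := by
  refine LipschitzWith.of_dist_le_mul fun f g ↦ ?_
  rw [dist_eq_norm,
    ← integral_sub (integrable_of_compactSpace μ f) (integrable_of_compactSpace μ g)]
  simpa [dist_eq_norm] using
    norm_integral_le_of_norm_le_const (μ := μ) (.of_forall (f - g).norm_coe_le_norm)

theorem tendsto_iff_forall_integral_continuousMap {l : Filter ι} {μ : ι → ProbabilityMeasure X}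
    {ν : ProbabilityMeasure X} : Tendsto μ l (𝓝 ν) ↔ ∀ f : C(X, 𝕜),
      Tendsto (fun i ↦ ∫ x, f x ∂(μ i : Measure X)) l (𝓝 (∫ x, f x ∂(ν : Measure X))) :=
  (ProbabilityMeasure.tendsto_iff_forall_integral_rclike_tendsto 𝕜).trans
    ⟨fun h f ↦ h (.mkOfCompact f), fun h f ↦ h f⟩

theorem continuous_integral_prod :
    Continuous fun p : C(X, 𝕜) × ProbabilityMeasure X ↦ ∫ x, p.1 x ∂(p.2 : Measure X) :=
  continuous_prod_of_continuous_lipschitzWith _ 1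
    (fun f ↦ continuous_iff_continuousAt.mpr fun _ ↦
      tendsto_iff_forall_integral_continuousMap.mp tendsto_id f)
    fun μ ↦ lipschitzWith_integral (μ : Measure X)

theorem tendsto_of_forall_mem_tendsto_integral {S : Set C(X, 𝕜)}
    (hS : (Submodule.span 𝕜 S).topologicalClosure = ⊤) {l : Filter ι}
    {μ : ι → ProbabilityMeasure X} {ν : ProbabilityMeasure X}
    (h : ∀ f ∈ S,
      Tendsto (fun i ↦ ∫ x, f x ∂(μ i : Measure X)) l (𝓝 (∫ x, f x ∂(ν : Measure X)))) :
    Tendsto μ l (𝓝 ν) := by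
  have isClosed_setOf_tendsto : IsClosed {f : C(X, 𝕜) |
      Tendsto (fun i ↦ ∫ x, f x ∂(μ i : Measure X)) l (𝓝 (∫ x, f x ∂(ν : Measure X)))} :=
    (LipschitzWith.uniformEquicontinuous _ 1 fun i ↦
      lipschitzWith_integral (μ i : Measure X)).equicontinuous.isClosed_setOfPred_tendsto
        (lipschitzWith_integral (ν : Measure X)).continuous
  have tendsto_of_mem_span (f) (hf : f ∈ Submodule.span 𝕜 S) :
      Tendsto (fun i ↦ ∫ x, f x ∂(μ i : Measure X)) l (𝓝 (∫ x, f x ∂(ν : Measure X))) := by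
    induction hf using Submodule.span_induction with
    | mem f hf => exact h f hf
    | zero => simpa using tendsto_const_nhds
    | add f g _ _ hf hg =>
      simpa [integral_add (integrable_of_compactSpace _ f) (integrable_of_compactSpace _ g)]
        using hf.add hg
    | smul c f _ hf => simpa [integral_const_mul] using hf.const_mul c
  refine tendsto_iff_forall_integral_continuousMap (𝕜 := 𝕜).mpr fun f ↦ ?_
  exact closure_minimal tendsto_of_mem_span isClosed_setOf_tendsto
    (Submodule.dense_iff_topologicalClosure_eq_top.mpr hS f)

end CompactSpace

section Domain

theorem neg_mem_slitPlane_iff {z : ℂ} : -z ∈ slitPlane ↔ z ∈ OmegaDom := by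
  simp only [mem_slitPlane_iff, OmegaDom, mem_ofPred_eq, neg_re, neg_im, Left.neg_pos_iff,
    neg_ne_zero]
  rw [not_and_or, not_le, or_comm]

theorem isOpen_OmegaDom : IsOpen OmegaDom := by
  simpa only [preimage, neg_mem_slitPlane_iff, ofPred_mem_eq] using
    isOpen_slitPlane.preimage continuous_neg

theorem ne_zero_of_mem_OmegaDom {z : ℂ} (hz : z ∈ OmegaDom) : z ≠ 0 :=
  neg_ne_zero.mp (slitPlane_ne_zero (neg_mem_slitPlane_iff.mpr hz))

theorem exists_sq_eq_re_pos {w : ℂ} (hw : w ∈ slitPlane) : ∃ s : ℂ, s ^ 2 = w ∧ 0 < s.re := by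
  refine ⟨w ^ (2⁻¹ : ℂ), cpow_nat_inv_pow w two_ne_zero, ?_⟩
  have norm_add_re_pos : 0 < ‖w‖ + w.re := by
    rcases mem_slitPlane_iff.mp hw with hre | him
    · positivity
    · linarith [(abs_lt.mp (abs_re_lt_norm.mpr him)).1]
  rw [cpow_inv_two_re]
  positivity

theorem re_inv_pos {w : ℂ} (hw : 0 < w.re) : 0 < w⁻¹.re := by
  rw [inv_re]
  exact div_pos hw (normSq_pos.mpr fun h ↦ hw.ne' (by simp [h]))

/-- The point `-t` of `Ω`, for `t > 0`. -/
def negPoint : C(Ioi (0 : ℝ), OmegaDom) where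
  toFun t := ⟨-(t : ℝ), by simpa [OmegaDom] using mem_Ioi.mp t.2⟩
  continuous_toFun := by fun_prop

end Domain

section Kernel

open Topology unitInterval

/-- The homeomorphism `x ↦ 1 / (1 + x)` of `[0, ∞)` onto `(0, 1]`, extended to the real line by
the constant `1` on `(-∞, 0]`. -/
noncomputable def toUnit : C(ℝ, I) where
  toFun x := ⟨(1 + max x 0)⁻¹, by positivity, inv_le_one_of_one_le₀ (by simp)⟩
  continuous_toFun := .subtype_mk (.inv₀ (by fun_prop) fun x ↦ by positivity) _

theorem coe_toUnit {x : ℝ} (hx : 0 ≤ x) : (toUnit x : ℝ) = (1 + x)⁻¹ := by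
  simp [toUnit, hx]

theorem isInducing_domRestrict_toUnit : IsInducing ((Ici 0).domRestrict toUnit) := by
  refine isInducing_iff_nhds.mpr fun x ↦ le_antisymm
    (toUnit.continuous.comp continuous_subtype_val).continuousAt.tendsto.le_comap ?_
  have inv_toUnit_sub_one (y : Ici (0 : ℝ)) : ((toUnit y : ℝ))⁻¹ - 1 = y := by
    simp [coe_toUnit y.2]
  have toUnit_ne_zero : (toUnit x : ℝ) ≠ 0 := by
    rw [coe_toUnit x.2]
    exact inv_ne_zero (add_pos_of_pos_of_nonneg one_pos x.2).ne'
  have tendsto_inv_sub_one : Tendsto (fun u : I ↦ (u : ℝ)⁻¹ - 1) (𝓝 (toUnit x)) (𝓝 x) := by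
    have := ((continuous_subtype_val.tendsto (toUnit x)).inv₀ toUnit_ne_zero).sub_const 1
    rwa [inv_toUnit_sub_one] at this
  rw [nhds_subtype (x := x), ← map_le_iff_le_comap]
  exact (tendsto_inv_sub_one.comp tendsto_comap).congr inv_toUnit_sub_one

theorem psiKernel_denom_ne_zero (z : OmegaDom) (u : I) : (u : ℂ) - (1 - u) * z ≠ 0 := by
  have convex_comb : (u : ℂ) - (1 - u) * z = (u : ℝ) • (1 : ℂ) + (σ u : ℝ) • (-(z : ℂ)) := by
    rw [real_smul, real_smul, unitInterval.coe_symm_eq]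
    push_cast
    ring
  rw [convex_comb]
  exact slitPlane_ne_zero <|
    starConvex_one_slitPlane (neg_mem_slitPlane_iff.mpr z.2) u.2.1 (σ u).2.1 (by simp)

/-- The integrand `x * z / (1 - x * z)` of the `ψ`-transform in the variable `u = 1 / (1 + x)`,
which makes it continuous up to `u = 0`, that is, up to `x = ∞`. -/
noncomputable def psiKernel : C(OmegaDom, C(I, ℂ)) :=
  ContinuousMap.curry
    ⟨fun p ↦ (1 - p.2) * p.1 / (p.2 - (1 - p.2) * p.1),
      .div (by fun_prop) (by fun_prop) fun p ↦ psiKernel_denom_ne_zero p.1 p.2⟩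

theorem psiKernel_apply (z : OmegaDom) (u : I) :
    psiKernel z u = (1 - u) * z / (u - (1 - u) * z) := rfl

theorem psiKernel_toUnit (z : OmegaDom) {x : ℝ} (hx : 0 ≤ x) :
    psiKernel z (toUnit x) = x * z / (1 - x * z) := by
  have h : (1 + x : ℂ) ≠ 0 := by exact_mod_cast (by positivity : 1 + x ≠ 0)
  rw [psiKernel_apply, ← mul_div_mul_left _ _ h, coe_toUnit hx]
  push_cast
  congr 1 <;> field_simp <;> ring

theorem sub_smul_psiKernel_mul_psiKernel (z w : OmegaDom) :
    (z - w : ℂ) • (psiKernel z * psiKernel w) =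
      (w : ℂ) • psiKernel z - (z : ℂ) • psiKernel w := by
  ext u
  simp only [psiKernel_apply, ContinuousMap.smul_apply, ContinuousMap.mul_apply,
    ContinuousMap.sub_apply, smul_eq_mul]
  rw [div_mul_div_comm, mul_div_assoc', mul_div_assoc', mul_div_assoc',
    div_sub_div _ _ (psiKernel_denom_ne_zero z u) (psiKernel_denom_ne_zero w u)]
  congr 1
  ring

theorem star_psiKernel_negPoint (t : Ioi (0 : ℝ)) :
    star (psiKernel (negPoint t)) = psiKernel (negPoint t) := by
  ext u
  simp [psiKernel_apply, negPoint]

theorem psiKernel_negPoint_one (u : I) :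
    psiKernel (negPoint ⟨1, mem_Ioi.mpr one_pos⟩) u = u - 1 := by
  simp [psiKernel_apply, negPoint]

theorem psiKernel_negPoint_mul_mem (s t : Ioi (0 : ℝ)) :
    psiKernel (negPoint s) * psiKernel (negPoint t) ∈
      (Submodule.span ℂ (range (psiKernel ∘ negPoint))).topologicalClosure := by
  set V := Submodule.span ℂ (range (psiKernel ∘ negPoint))
  have mem_V (r) : psiKernel (negPoint r) ∈ V := Submodule.subset_span ⟨r, rfl⟩
  have mul_mem_of_ne (r : ({t}ᶜ : Set (Ioi (0 : ℝ)))) :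
      psiKernel (negPoint r) * psiKernel (negPoint t) ∈ V.topologicalClosure := by
    have negPoint_ne : (negPoint r : ℂ) ≠ negPoint t := by
      simpa [negPoint, Subtype.ext_iff] using notMem_singleton_iff.mp r.2
    refine V.le_topologicalClosure ((V.smul_mem_iff (sub_ne_zero.mpr negPoint_ne)).mp ?_)
    rw [sub_smul_psiKernel_mul_psiKernel]
    exact V.sub_mem (V.smul_mem _ (mem_V r)) (V.smul_mem _ (mem_V t))
  have : ConnectedSpace (Ioi (0 : ℝ)) := Subtype.connectedSpace isConnected_Ioi
  -- For `r = t` the resolvent identity is void, but `{t}ᶜ` is dense.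
  refine (dense_compl_singleton t).denseRange_val.induction_on s ?_ mul_mem_of_ne
  exact V.isClosed_topologicalClosure.preimage
    (f := fun r ↦ psiKernel (negPoint r) * psiKernel (negPoint t)) (by fun_prop)

theorem topologicalClosure_span_psiKernel_eq_top :
    (Submodule.span ℂ (insert 1 (range (psiKernel ∘ negPoint)))).topologicalClosure = ⊤ := by
  set S : Set C(I, ℂ) := insert 1 (range (psiKernel ∘ negPoint))
  have mem_closure (f) (hf : f ∈ S) : f ∈ (Submodule.span ℂ S).topologicalClosure :=
    Submodule.le_topologicalClosure _ (Submodule.subset_span hf)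
  apply topologicalClosure_span_eq_top_of_separatesPoints
  · exact mem_insert 1 _
  · rintro _ (rfl | ⟨t, rfl⟩)
    · simpa only [star_one] using mem_insert 1 _
    · exact (star_psiKernel_negPoint t).symm ▸ mem_insert_of_mem 1 ⟨t, rfl⟩
  · intro u v huv
    refine ⟨_, mem_insert_of_mem 1 ⟨⟨1, mem_Ioi.mpr one_pos⟩, rfl⟩, ?_⟩
    simpa only [Function.comp_apply, psiKernel_negPoint_one, ne_eq, sub_left_inj, ofReal_inj,
      Subtype.ext_iff] using huv
  · rintro f (rfl | ⟨s, rfl⟩) g hg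
    · simpa using mem_closure g hg
    · rcases hg with (rfl | ⟨t, rfl⟩)
      · simpa using mem_closure _ (mem_insert_of_mem 1 ⟨s, rfl⟩)
      · exact Submodule.topologicalClosure_mono (Submodule.span_mono (subset_insert _ _))
          (psiKernel_negPoint_mul_mem s t)

theorem re_psiKernel_pos {z : OmegaDom} {s : ℂ} (hs : s ^ 2 = -z) (hs_re : 0 < s.re) {u : I}
    (hu : u ≠ 1) : 0 < (-s⁻¹ * psiKernel z u).re := by
  have one_sub_pos : 0 < 1 - (u : ℝ) := sub_pos.mpr (u.2.2.lt_of_ne fun h ↦ hu (Subtype.ext h))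
  have one_sub_ne_zero : (1 - u : ℂ) ≠ 0 := by exact_mod_cast one_sub_pos.ne'
  have s_ne_zero : s ≠ 0 := by rintro rfl; simp at hs_re
  have inv_eq : (-s⁻¹ * psiKernel z u)⁻¹ = ((u / (1 - u) : ℝ) : ℂ) * s⁻¹ + s := by
    rw [psiKernel_apply, ← neg_neg (z : ℂ), ← hs]
    push_cast
    field_simp
    ring
  rw [← inv_inv (-s⁻¹ * psiKernel z u), inv_eq]
  refine re_inv_pos ?_
  rw [add_re, re_ofReal_mul]
  exact add_pos_of_nonneg_of_pos
    (mul_nonneg (div_nonneg u.2.1 one_sub_pos.le) (re_inv_pos hs_re).le) hs_re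

theorem ae_eq_one_of_integral_psiKernel_eq_zero {ρ : Measure I} [IsFiniteMeasure ρ] {z : OmegaDom}
    (h : ∫ u, psiKernel z u ∂ρ = 0) : ∀ᵐ u ∂ρ, u = 1 := by
  obtain ⟨s, hs, hs_re⟩ := exists_sq_eq_re_pos (neg_mem_slitPlane_iff.mpr z.2)
  have re_nonneg (u : I) : 0 ≤ (-s⁻¹ * psiKernel z u).re := by
    rcases eq_or_ne u 1 with rfl | hu
    · simp [psiKernel_apply]
    · exact (re_psiKernel_pos hs hs_re hu).le
  have integrable : Integrable (fun u ↦ -s⁻¹ * psiKernel z u) ρ :=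
    (integrable_of_compactSpace ρ (psiKernel z)).const_mul _
  have integral_re_eq_zero : ∫ u, (-s⁻¹ * psiKernel z u).re ∂ρ = 0 := by
    refine (integral_re integrable).trans ?_
    rw [integral_const_mul, h, mul_zero, map_zero]
  filter_upwards [(integral_eq_zero_iff_of_nonneg re_nonneg integrable.re).mp integral_re_eq_zero]
    with u hu
  by_contra hu1
  exact (re_psiKernel_pos hs hs_re hu1).ne' hu

end Kernel

section Transform

open Topology unitInterval

theorem BT_eq_div_psiT_add {μ : Measure ℝ} {z : ℂ} (h : psiT μ z ≠ 0) :
    BT μ z = z / psiT μ z + z := by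
  rw [BT, etaT, div_div_eq_mul_div, mul_add, mul_one, add_div, mul_div_cancel_right₀ _ h]

theorem psiT_eq_div_BT_sub {μ : Measure ℝ} {z : ℂ} (hz : z ≠ 0) (h : psiT μ z ≠ 0) :
    psiT μ z = z / (BT μ z - z) := by
  rw [BT_eq_div_psiT_add h, add_sub_cancel_right, div_div_cancel₀ hz]

/-- The law of `toUnit x` under `μ`. -/
noncomputable def pushUnit (μ : ProbabilityMeasure ℝ) : ProbabilityMeasure I :=
  μ.map toUnit.continuous.measurable.aemeasurable

theorem tendsto_pushUnit_iff {ι : Type*} {l : Filter ι} [l.IsCountablyGenerated]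
    {μ : ι → ProbabilityMeasure ℝ} {ν : ProbabilityMeasure ℝ}
    (hμ : ∀ i, ∀ᵐ x ∂(μ i : Measure ℝ), 0 ≤ x) (hν : ∀ᵐ x ∂(ν : Measure ℝ), 0 ≤ x) :
    Tendsto (fun i ↦ pushUnit (μ i)) l (𝓝 (pushUnit ν)) ↔ Tendsto μ l (𝓝 ν) :=
  tendsto_map_iff_of_isInducing_domRestrict toUnit.continuous isInducing_domRestrict_toUnit hμ hν

/-- The `ψ`-transform as a function on `Ω`, for measures transported to the unit interval by
`toUnit`; the topology of `C(OmegaDom, ℂ)` is that of uniform convergence on compact sets. -/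
noncomputable def psiUnit : C(ProbabilityMeasure I, C(OmegaDom, ℂ)) :=
  ContinuousMap.curry ⟨fun p ↦ ∫ u, psiKernel p.2 u ∂(p.1 : Measure I),
    continuous_integral_prod.comp
      ((psiKernel.continuous.comp continuous_snd).prodMk continuous_fst)⟩

theorem psiUnit_apply (ρ : ProbabilityMeasure I) (z : OmegaDom) :
    psiUnit ρ z = ∫ u, psiKernel z u ∂(ρ : Measure I) := rfl

variable {μ : ProbabilityMeasure ℝ}

theorem psiUnit_pushUnit (hμ : ∀ᵐ x ∂(μ : Measure ℝ), 0 ≤ x) (z : OmegaDom) :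
    psiUnit (pushUnit μ) z = psiT μ z := by
  rw [psiUnit_apply, pushUnit, ProbabilityMeasure.toMeasure_map,
    integral_map toUnit.continuous.measurable.aemeasurable
      (psiKernel z).continuous.aestronglyMeasurable]
  exact integral_congr_ae (hμ.mono fun x hx ↦ psiKernel_toUnit z hx)

theorem tendsto_of_forall_tendsto_psiUnit {ι : Type*} {l : Filter ι}
    {ρ : ι → ProbabilityMeasure I} {ρ' : ProbabilityMeasure I}
    (h : ∀ t, Tendsto (fun i ↦ psiUnit (ρ i) (negPoint t)) l (𝓝 (psiUnit ρ' (negPoint t)))) :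
    Tendsto ρ l (𝓝 ρ') := by
  refine tendsto_of_forall_mem_tendsto_integral topologicalClosure_span_psiKernel_eq_top ?_
  rintro _ (rfl | ⟨t, rfl⟩)
  · simpa using tendsto_const_nhds
  · exact h t

theorem psiT_ne_zero (hμ : ∀ᵐ x ∂(μ : Measure ℝ), 0 ≤ x) (hμ0 : (μ : Measure ℝ) ≠ .dirac 0)
    {z : ℂ} (hz : z ∈ OmegaDom) : psiT μ z ≠ 0 := by
  intro h
  rw [← psiUnit_pushUnit hμ ⟨z, hz⟩, psiUnit_apply] at h
  have toUnit_eq_one : ∀ᵐ x ∂(μ : Measure ℝ), toUnit x = 1 :=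
    ae_of_ae_map toUnit.continuous.measurable.aemeasurable
      (ae_eq_one_of_integral_psiKernel_eq_zero h)
  have id_eq_zero : id =ᵐ[(μ : Measure ℝ)] fun _ ↦ 0 := by
    filter_upwards [hμ, toUnit_eq_one] with x hx hx1
    have := coe_toUnit hx
    rw [hx1] at this
    simpa using this
  refine hμ0 ?_
  rw [← Measure.map_id (μ := (μ : Measure ℝ)), Measure.map_congr id_eq_zero, Measure.map_const]
  simp

end Transform

section General

open Topology unitInterval

variable {ι : Type*} {l : Filter ι} [l.IsCountablyGenerated] {μ : ι → ProbabilityMeasure ℝ}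
  {ν : ProbabilityMeasure ℝ}

theorem tendstoLocallyUniformlyOn_BT
    (hμ : ∀ i, ∀ᵐ x ∂(μ i : Measure ℝ), 0 ≤ x) (hμ0 : ∀ i, (μ i : Measure ℝ) ≠ .dirac 0)
    (hν : ∀ᵐ x ∂(ν : Measure ℝ), 0 ≤ x) (hν0 : (ν : Measure ℝ) ≠ .dirac 0)
    (h : Tendsto μ l (𝓝 ν)) :
    TendstoLocallyUniformlyOn (fun i ↦ BT (μ i)) (BT ν) l OmegaDom := by
  have : LocallyCompactSpace OmegaDom := isOpen_OmegaDom.locallyCompactSpace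
  have psi_tendsto := ContinuousMap.tendsto_iff_tendstoLocallyUniformly.mp <|
    (psiUnit.continuous.tendsto _).comp ((tendsto_pushUnit_iff hμ hν).mpr h)
  have coe_tendsto := ContinuousMap.tendsto_iff_tendstoLocallyUniformly.mp <|
    tendsto_const_nhds (f := l) (x := (⟨Subtype.val, continuous_subtype_val⟩ : C(OmegaDom, ℂ)))
  have psi_ne_zero (z) : psiUnit (pushUnit ν) z ≠ 0 :=
    psiUnit_pushUnit hν z ▸ psiT_ne_zero hν hν0 z.2
  rw [tendstoLocallyUniformlyOn_iff_tendstoLocallyUniformly_comp_coe]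
  refine (((coe_tendsto.div₀ psi_tendsto (map_continuous _) (map_continuous _) psi_ne_zero).add
    coe_tendsto).congr fun i z ↦ ?_).congr_right fun z ↦ ?_
  · simp [BT_eq_div_psiT_add (psiT_ne_zero (hμ i) (hμ0 i) z.2), psiUnit_pushUnit (hμ i)]
  · simp [BT_eq_div_psiT_add (psiT_ne_zero hν hν0 z.2), psiUnit_pushUnit hν]

theorem tendsto_of_forall_tendsto_BT
    (hμ : ∀ i, ∀ᵐ x ∂(μ i : Measure ℝ), 0 ≤ x) (hμ0 : ∀ i, (μ i : Measure ℝ) ≠ .dirac 0)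
    (hν : ∀ᵐ x ∂(ν : Measure ℝ), 0 ≤ x) (hν0 : (ν : Measure ℝ) ≠ .dirac 0)
    (h : ∀ t : Ioi (0 : ℝ), Tendsto (fun i ↦ BT (μ i) (negPoint t)) l (𝓝 (BT ν (negPoint t)))) :
    Tendsto μ l (𝓝 ν) := by
  refine (tendsto_pushUnit_iff hμ hν).mp (tendsto_of_forall_tendsto_psiUnit fun t ↦ ?_)
  have ne_zero := ne_zero_of_mem_OmegaDom (negPoint t).2
  have psiT_ν_ne_zero := psiT_ne_zero hν hν0 (negPoint t).2
  have psiT_μ_ne_zero (i) := psiT_ne_zero (hμ i) (hμ0 i) (negPoint t).2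
  have BT_sub_ne_zero : BT ν (negPoint t) - negPoint t ≠ 0 := by
    rw [BT_eq_div_psiT_add psiT_ν_ne_zero, add_sub_cancel_right]
    exact div_ne_zero ne_zero psiT_ν_ne_zero
  simp only [psiUnit_pushUnit (hμ _), psiUnit_pushUnit hν,
    psiT_eq_div_BT_sub ne_zero (psiT_μ_ne_zero _), psiT_eq_div_BT_sub ne_zero psiT_ν_ne_zero]
  exact tendsto_const_nhds.div ((h t).sub_const _) BT_sub_ne_zero

theorem weak_convergence_iff_B_transform_general
    (hμ : ∀ i, ∀ᵐ x ∂(μ i : Measure ℝ), 0 ≤ x) (hμ0 : ∀ i, (μ i : Measure ℝ) ≠ .dirac 0)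
    (hν : ∀ᵐ x ∂(ν : Measure ℝ), 0 ≤ x) (hν0 : (ν : Measure ℝ) ≠ .dirac 0) :
    List.TFAE [Tendsto μ l (𝓝 ν),
      TendstoLocallyUniformlyOn (fun i ↦ BT (μ i)) (BT ν) l OmegaDom,
      ∀ t : ℝ, 0 < t → Tendsto (fun i ↦ BT (μ i) (-t)) l (𝓝 (BT ν (-t)))] := by
  tfae_have 1 → 2 := tendstoLocallyUniformlyOn_BT hμ hμ0 hν hν0
  tfae_have 2 → 3 := fun h t ht ↦ h.tendsto_at (negPoint ⟨t, ht⟩).2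
  tfae_have 3 → 1 := fun h ↦ tendsto_of_forall_tendsto_BT hμ hμ0 hν hν0 fun t ↦ h t t.2
  tfae_finish

end General

/-- For measures `ν, μ₁, μ₂, …` in `M₊` (probability measures on `[0,∞)` other than `δ₀`),
weak convergence `μ_n ⇒ ν` holds if and only if `B_{μ_n} → B_ν` uniformly on every
compact subset of `Ω = ℂ ∖ [0,∞)`. -/
theorem weak_convergence_iff_B_transform (ν : Measure ℝ) (μ : ℕ → Measure ℝ)
    [IsProbabilityMeasure ν] [∀ n, IsProbabilityMeasure (μ n)]
    (hνs : ν (Set.Iio (0 : ℝ)) = 0) (hν0 : ν ≠ Measure.dirac 0)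
    (hμs : ∀ n, (μ n) (Set.Iio (0 : ℝ)) = 0) (hμ0 : ∀ n, μ n ≠ Measure.dirac 0) :
    (∀ f : BoundedContinuousFunction ℝ ℝ,
        Tendsto (fun n => ∫ x, f x ∂(μ n)) atTop (nhds (∫ x, f x ∂ν)))
      ↔ (∀ K : Set ℂ, K ⊆ OmegaDom → IsCompact K →
          TendstoUniformlyOn (fun n z => BT (μ n) z) (BT ν) atTop K) := by
  have ae_nonneg {ρ : Measure ℝ} (hρ : ρ (Iio 0) = 0) : ∀ᵐ x ∂ρ, 0 ≤ x := by
    simpa only [ae_iff, not_le] using! hρ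
  rw [← tendstoLocallyUniformlyOn_iff_forall_isCompact isOpen_OmegaDom]
  have weak_tfae := weak_convergence_iff_B_transform_general (l := atTop) (ν := ⟨ν, inferInstance⟩)
    (μ := fun n ↦ ⟨μ n, inferInstance⟩) (fun n ↦ ae_nonneg (hμs n)) hμ0 (ae_nonneg hνs) hν0
  exact ProbabilityMeasure.tendsto_iff_forall_integral_tendsto.symm.trans (weak_tfae.out 0 1)
end

section
/- Let {μ_{nj} : n ≥ 1, 1 ≤ j ≤ k_n} be an infinitesimal triangular array of Borel probability measures on [0,∞). Let D be a closed disc with center on the negative real axis contained in the open left half-plane {z ∈ ℂ : Re z < 0}, and suppose that for all n and 1 ≤ j ≤ k_n there are functions S_{nj}, analytic on an open set containing D, such that z·S_{nj}(z) ∈ Ω and η_{μ°_{nj}}(z·S_{nj}(z)) = z for all z ∈ D (i.e., the Σ-transforms Σ_{μ°_{nj}} = S_{nj} are defined on D). Then there exists a smaller closed disc D₁ ⊆ D with center on the negative real axis such that for every ε > 0 there is N with: for all n ≥ N, all 1 ≤ j ≤ k_n, and all z ∈ D₁, |Log S_{nj}(z) − g_{nj}(z)| ≤ ε |g_{nj}(z)|,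 where Log denotes the principal branch of the complex logarithm; that is, Log Σ_{μ°_{nj}}(z) = g_{nj}(z)(1+o(1)) uniformly in j and in z ∈ D₁ as n → ∞. -/
open MeasureTheory Complex Set Filter

/-- The scaling constant `b_μ = exp(∫_{[1/e,e]} log x dμ(x))`. -/
noncomputable def bScale (μ : Measure ℝ) : ℝ :=
  Real.exp (∫ x in Set.Icc (Real.exp 1)⁻¹ (Real.exp 1), Real.log x ∂μ)

/-- The scaled measure `μ°`, with `μ°(A) = μ(b_μ · A)`,
i.e. the pushforward of `μ` under `x ↦ x / b_μ`. -/
noncomputable def scaledM (μ : Measure ℝ) : Measure ℝ :=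
  Measure.map (fun x => x / bScale μ) μ

/-- The auxiliary function `g(z) = ∫ (z−1)(1−x)/(xz−1) dμ°(x)`. -/
noncomputable def gAux (μ : Measure ℝ) (z : ℂ) : ℂ :=
  ∫ x, ((z - 1) * (1 - (x : ℂ))) / ((x : ℂ) * z - 1) ∂(scaledM μ)

/-!
The truncated first moment `d = ∫ min(1, |1 - x|) dν(x)` controls everything. In the left
half-plane `|ψ_ν(w) - w/(1 - w)| ≤ 2d`, so a solution of `η_ν(w) = z` with `Re w ≤ 0` lies within
`O(d)` of `z`. At a real point `w = z S(z)` is a negative real, and it cannot cross the imaginary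
axis as `z` runs through a connected set, because there it would still be close to `z`.

For `η_ν(w) = z` the exact formula `g(w) = (w - z)/w · (1 - w)/(1 - z)` holds, and `g(z) - g(w)` is
`w - z` times an integral of size `O(d)`. Hence, with `u = (w - z)/w = 1 - 1/S(z)`, both `g(z)` and
`Log S(z) = -Log (1 - u)` equal `u (1 + O(d))`. No shrinking of the disc is needed.
-/

/-- The truncated first moment `∫ min(1, |1 - x|) dμ(x)`, which measures how far `μ` is from the
unit mass at `1`; an array is infinitesimal exactly when it tends to `0` uniformly along the
rows. -/
noncomputable def truncDist (μ : Measure ℝ) : ℝ :=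
  ∫ x, min 1 |1 - x| ∂μ

/-- The transform `z ↦ ∫ (z-1)(1-x)/(xz-1) dν(x)`, so that `gAux μ = gTransform (scaledM μ)`. -/
noncomputable def gTransform (ν : Measure ℝ) (z : ℂ) : ℂ :=
  ∫ x, ((z - 1) * (1 - (x : ℂ))) / ((x : ℂ) * z - 1) ∂ν

section TruncDist

variable {μ : Measure ℝ}

lemma integrable_min_one_abs_one_sub [IsFiniteMeasure μ] :
    Integrable (fun x : ℝ ↦ min 1 |1 - x|) μ := by
  refine .of_bound (C := 1) (Measurable.aestronglyMeasurable (by fun_prop)) (.of_forall fun x ↦ ?_)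
  rw [Real.norm_of_nonneg (by positivity)]
  exact min_le_left _ _

lemma truncDist_nonneg : 0 ≤ truncDist μ :=
  integral_nonneg fun x ↦ by positivity

lemma truncDist_le_of_le_measure_Ioo [IsProbabilityMeasure μ] {δ : ℝ}
    (h : 1 - δ ≤ (μ (Ioo (1 - δ) (1 + δ))).toReal) : truncDist μ ≤ 2 * δ := by
  set A : Set ℝ := Ioo (1 - δ) (1 + δ)
  have hA : MeasurableSet Aᶜ := measurableSet_Ioo.compl
  have hAc : μ.real Aᶜ ≤ δ := by
    rw [probReal_compl_eq_one_sub measurableSet_Ioo, sub_le_comm]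
    exact h
  have hδ : 0 ≤ δ := measureReal_nonneg.trans hAc
  have hind : Integrable (Aᶜ.indicator fun _ ↦ (1 : ℝ)) μ := (integrable_const 1).indicator hA
  calc truncDist μ ≤ ∫ x, (δ + Aᶜ.indicator (fun _ ↦ 1) x) ∂μ := by
        refine integral_mono integrable_min_one_abs_one_sub ((integrable_const δ).add hind)
          fun x ↦ ?_
        by_cases hx : x ∈ A
        · have : |1 - x| ≤ δ := abs_le.2 ⟨by linarith [hx.2], by linarith [hx.1]⟩
          simpa [hx] using Or.inr this
        · simpa [hx] using Or.inl hδ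
    _ = δ + μ.real Aᶜ := by
        rw [integral_add (integrable_const δ) hind, integral_indicator hA]
        simp
    _ ≤ 2 * δ := by linarith

lemma truncDist_map_mul_const_le [IsProbabilityMeasure μ] {a : ℝ} (ha : 0 ≤ a) :
    truncDist (μ.map (· * a)) ≤ |1 - a| + a * truncDist μ := by
  have hpoint (x : ℝ) : min 1 |1 - x * a| ≤ |1 - a| + a * min 1 |1 - x| := by
    rw [mul_min_of_nonneg _ _ ha, ← min_add_add_left]
    refine min_le_min ?_ ?_
    · linarith [le_abs_self (1 - a)]
    · calc |1 - x * a| = |(1 - a) + a * (1 - x)| := by ring_nf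
        _ ≤ |1 - a| + |a * (1 - x)| := abs_add_le _ _
        _ = |1 - a| + a * |1 - x| := by rw [abs_mul, abs_of_nonneg ha]
  have : IsProbabilityMeasure (μ.map (· * a)) :=
    Measure.isProbabilityMeasure_map (by fun_prop)
  have hint : Integrable (fun x ↦ min 1 |1 - x * a|) μ :=
    integrable_min_one_abs_one_sub.comp_measurable (f := (· * a)) (by fun_prop)
  have hbound := integrable_min_one_abs_one_sub (μ := μ) |>.const_mul a
  calc truncDist (μ.map (· * a)) = ∫ x, min 1 |1 - x * a| ∂μ :=
        integral_map (by fun_prop) (Measurable.aestronglyMeasurable (by fun_prop))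
    _ ≤ ∫ x, (|1 - a| + a * min 1 |1 - x|) ∂μ :=
        integral_mono hint ((integrable_const _).add hbound) hpoint
    _ = |1 - a| + a * truncDist μ := by
        rw [integral_add (integrable_const _) hbound, integral_const_mul, truncDist]
        simp

lemma abs_log_le_exp_one_mul_min {x : ℝ} (hx : x ∈ Icc (Real.exp 1)⁻¹ (Real.exp 1)) :
    |Real.log x| ≤ Real.exp 1 * min 1 |1 - x| := by
  have hx0 : 0 < x := (by positivity : 0 < (Real.exp 1)⁻¹).trans_le hx.1
  have he : 1 ≤ Real.exp 1 := Real.one_le_exp zero_le_one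
  have hinv : x⁻¹ ≤ Real.exp 1 := inv_le_of_inv_le₀ (by positivity) hx.1
  have hlog_one : |Real.log x| ≤ 1 := by
    rw [abs_le, Real.le_log_iff_exp_le hx0, Real.log_le_iff_le_exp hx0, Real.exp_neg]
    exact hx
  have hlog_sub : |Real.log x| ≤ Real.exp 1 * |1 - x| := by
    rw [abs_le]
    constructor
    · calc -(Real.exp 1 * |1 - x|) ≤ -(x⁻¹ * |1 - x|) := by gcongr
        _ ≤ -(x⁻¹ * (1 - x)) := by gcongr; exact le_abs_self _
        _ = 1 - x⁻¹ := by field_simp; ring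
        _ ≤ Real.log x := Real.one_sub_inv_le_log_of_pos hx0
    · calc Real.log x ≤ x - 1 := Real.log_le_sub_one_of_pos hx0
        _ ≤ |1 - x| := by rw [abs_sub_comm]; exact le_abs_self _
        _ ≤ Real.exp 1 * |1 - x| := le_mul_of_one_le_left (abs_nonneg _) he
  rw [mul_min_of_nonneg _ _ (Real.exp_pos 1).le, mul_one]
  exact le_min (hlog_one.trans he) hlog_sub

lemma abs_setIntegral_log_le [IsFiniteMeasure μ] :
    |∫ x in Icc (Real.exp 1)⁻¹ (Real.exp 1), Real.log x ∂μ| ≤ Real.exp 1 * truncDist μ := by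
  have hint := integrable_min_one_abs_one_sub (μ := μ) |>.const_mul (Real.exp 1)
  calc |∫ x in Icc (Real.exp 1)⁻¹ (Real.exp 1), Real.log x ∂μ|
      ≤ ∫ x in Icc (Real.exp 1)⁻¹ (Real.exp 1), Real.exp 1 * min 1 |1 - x| ∂μ := by
        rw [← Real.norm_eq_abs]
        exact norm_integral_le_of_norm_le hint.integrableOn <|
          (ae_restrict_mem measurableSet_Icc).mono fun _ ↦ abs_log_le_exp_one_mul_min
    _ ≤ ∫ x, Real.exp 1 * min 1 |1 - x| ∂μ :=
        setIntegral_le_integral hint (.of_forall fun x ↦ by dsimp; positivity)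
    _ = Real.exp 1 * truncDist μ := integral_const_mul _ _

lemma truncDist_scaledM_le [IsProbabilityMeasure μ] (h : Real.exp 1 * truncDist μ ≤ 1 / 2) :
    truncDist (scaledM μ) ≤ 2 * (Real.exp 1 + 1) * truncDist μ := by
  set y := ∫ x in Icc (Real.exp 1)⁻¹ (Real.exp 1), Real.log x ∂μ
  have hy : |y| ≤ Real.exp 1 * truncDist μ := abs_setIntegral_log_le
  have hexp : |1 - Real.exp (-y)| ≤ 2 * |y| := by
    rw [abs_sub_comm, ← abs_neg y]
    exact Real.abs_exp_sub_one_le (by rw [abs_neg]; linarith)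
  have hexp_le : Real.exp (-y) ≤ 2 := by linarith [neg_le_abs (1 - Real.exp (-y))]
  have hscaled : scaledM μ = μ.map (· * Real.exp (-y)) := by
    simp only [scaledM, bScale, div_eq_mul_inv, Real.exp_neg, y]
  calc truncDist (scaledM μ) ≤ |1 - Real.exp (-y)| + Real.exp (-y) * truncDist μ := by
        rw [hscaled]; exact truncDist_map_mul_const_le (Real.exp_pos _).le
    _ ≤ 2 * (Real.exp 1 * truncDist μ) + 2 * truncDist μ := by
        have := truncDist_nonneg (μ := μ)
        gcongr
        linarith
    _ = 2 * (Real.exp 1 + 1) * truncDist μ := by ring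

lemma exists_le_measure_Ioo_imp_truncDist_scaledM_lt {d : ℝ} (hd : 0 < d) :
    ∃ δ > 0, ∀ (μ : Measure ℝ) [IsProbabilityMeasure μ],
      1 - δ ≤ (μ (Ioo (1 - δ) (1 + δ))).toReal → truncDist (scaledM μ) < d := by
  have hsmall : ∀ᶠ δ : ℝ in nhdsWithin 0 (Ioi 0),
      Real.exp 1 * (2 * δ) < 1 / 2 ∧ 2 * (Real.exp 1 + 1) * (2 * δ) < d := by
    refine nhdsWithin_le_nhds (Eventually.and ?_ ?_) <;>
      exact (Continuous.tendsto (by fun_prop) 0).eventually_lt_const (by simp [hd])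
  obtain ⟨δ, ⟨hδ_exp, hδd⟩, hδ⟩ := (hsmall.and self_mem_nhdsWithin).exists
  refine ⟨δ, hδ, fun μ _ hμδ ↦ ?_⟩
  have hdμ : truncDist μ ≤ 2 * δ := truncDist_le_of_le_measure_Ioo hμδ
  have hd_exp : Real.exp 1 * truncDist μ ≤ 1 / 2 :=
    (mul_le_mul_of_nonneg_left hdμ (Real.exp_pos 1).le).trans hδ_exp.le
  calc truncDist (scaledM μ) ≤ 2 * (Real.exp 1 + 1) * truncDist μ := truncDist_scaledM_le hd_exp
    _ ≤ 2 * (Real.exp 1 + 1) * (2 * δ) := by gcongr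
    _ < d := hδd

instance isProbabilityMeasure_scaledM [IsProbabilityMeasure μ] :
    IsProbabilityMeasure (scaledM μ) :=
  Measure.isProbabilityMeasure_map (by fun_prop)

lemma ae_nonneg_scaledM (hμ : ∀ᵐ x ∂μ, 0 ≤ x) : ∀ᵐ x ∂scaledM μ, 0 ≤ x := by
  rw [scaledM, ae_map_iff (by fun_prop) measurableSet_Ici]
  exact hμ.mono fun x hx ↦ div_nonneg hx (Real.exp_pos _).le

end TruncDist

section HalfPlane

variable {w : ℂ}

lemma norm_le_norm_one_sub (hw : w.re ≤ 0) : ‖w‖ ≤ ‖1 - w‖ := by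
  rw [← sq_le_sq₀ (norm_nonneg _) (norm_nonneg _), Complex.sq_norm, Complex.sq_norm,
    normSq_apply, normSq_apply]
  simp only [sub_re, sub_im, one_re, one_im]
  nlinarith

lemma one_le_norm_one_sub (hw : w.re ≤ 0) : 1 ≤ ‖1 - w‖ := by
  have := re_le_norm (1 - w)
  rw [sub_re, one_re] at this
  linarith

lemma ne_zero_of_re_neg (hw : w.re < 0) : w ≠ 0 := by
  rintro rfl
  exact hw.ne rfl

lemma one_sub_ne_zero_of_re_nonpos (hw : w.re ≤ 0) : 1 - w ≠ 0 :=
  norm_pos_iff.1 (zero_lt_one.trans_le (one_le_norm_one_sub hw))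

lemma norm_div_one_sub_le_one (hw : w.re ≤ 0) : ‖w / (1 - w)‖ ≤ 1 := by
  rw [norm_div]
  exact div_le_one_of_le₀ (norm_le_norm_one_sub hw) (norm_nonneg _)

lemma norm_one_sub_ofReal (x : ℝ) : ‖1 - (x : ℂ)‖ = |1 - x| := by
  rw [← ofReal_one, ← ofReal_sub, norm_real, Real.norm_eq_abs]

lemma ofReal_mul_re_nonpos {x : ℝ} (hx : 0 ≤ x) (hw : w.re ≤ 0) : ((x : ℂ) * w).re ≤ 0 := by
  rw [re_ofReal_mul]
  exact mul_nonpos_of_nonneg_of_nonpos hx hw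

lemma abs_one_sub_div_norm_le {m x : ℝ} (hm : 0 < m) (hx : 0 ≤ x) (hw : w.re ≤ -m) :
    |1 - x| / ‖1 - (x : ℂ) * w‖ ≤ 1 + m⁻¹ := by
  have hden : 1 + x * m ≤ ‖1 - (x : ℂ) * w‖ := by
    refine le_trans ?_ (re_le_norm _)
    rw [sub_re, one_re, re_ofReal_mul]
    nlinarith
  have hxm : 0 ≤ x * m := by positivity
  rw [div_le_iff₀ (by linarith)]
  calc |1 - x| ≤ 1 + m⁻¹ + x * m + x := by
        have : 0 < m⁻¹ := by positivity
        exact abs_le.2 ⟨by linarith, by linarith⟩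
    _ = (1 + m⁻¹) * (1 + x * m) := by field_simp; ring
    _ ≤ (1 + m⁻¹) * ‖1 - (x : ℂ) * w‖ := by gcongr

end HalfPlane

section Eta

variable {ν : Measure ℝ} {w z : ℂ}

lemma integrable_psiT [IsFiniteMeasure ν] (hν : ∀ᵐ x ∂ν, 0 ≤ x) (hw : w.re ≤ 0) :
    Integrable (fun x : ℝ ↦ ((x : ℂ) * w) / (1 - (x : ℂ) * w)) ν :=
  .of_bound (C := 1) (Measurable.aestronglyMeasurable (by fun_prop)) <|
    hν.mono fun _ hx ↦ norm_div_one_sub_le_one (ofReal_mul_re_nonpos hx hw)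

lemma norm_psiT_sub_le [IsProbabilityMeasure ν] (hν : ∀ᵐ x ∂ν, 0 ≤ x) (hw : w.re ≤ 0) :
    ‖psiT ν w - w / (1 - w)‖ ≤ 2 * truncDist ν := by
  have hpoint (x : ℝ) (hx : 0 ≤ x) :
      ‖(x : ℂ) * w / (1 - (x : ℂ) * w) - w / (1 - w)‖ ≤ 2 * min 1 |1 - x| := by
    have hxw := ofReal_mul_re_nonpos hx hw
    rw [mul_min_of_nonneg _ _ zero_le_two]
    refine le_min ?_ ?_
    · linarith [norm_sub_le ((x : ℂ) * w / (1 - (x : ℂ) * w)) (w / (1 - w)),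
        norm_div_one_sub_le_one hxw, norm_div_one_sub_le_one hw]
    · have hne := one_sub_ne_zero_of_re_nonpos hxw
      have hne' := one_sub_ne_zero_of_re_nonpos hw
      calc ‖(x : ℂ) * w / (1 - (x : ℂ) * w) - w / (1 - w)‖
          = ‖((x - 1 : ℝ) : ℂ) / (1 - (x : ℂ) * w) * (w / (1 - w))‖ := by
            congr 1
            push_cast
            field_simp
            ring
        _ = |1 - x| / ‖1 - (x : ℂ) * w‖ * ‖w / (1 - w)‖ := by
            rw [norm_mul, norm_div, norm_real, Real.norm_eq_abs, abs_sub_comm]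
        _ ≤ |1 - x| * 1 := by
            gcongr
            · exact div_le_self (abs_nonneg _) (one_le_norm_one_sub hxw)
            · exact norm_div_one_sub_le_one hw
        _ ≤ 2 * |1 - x| := by linarith [abs_nonneg (1 - x)]
  calc ‖psiT ν w - w / (1 - w)‖
      = ‖∫ x : ℝ, ((x : ℂ) * w / (1 - (x : ℂ) * w) - w / (1 - w)) ∂ν‖ := by
        rw [integral_sub (integrable_psiT hν hw) (integrable_const _), psiT]
        simp
    _ ≤ ∫ x, 2 * min 1 |1 - x| ∂ν :=
        norm_integral_le_of_norm_le (integrable_min_one_abs_one_sub.const_mul 2) (hν.mono hpoint)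
    _ = 2 * truncDist ν := integral_const_mul _ _

lemma psiT_eq_of_etaT_eq (hz : z ≠ 0) (h : etaT ν w = z) : psiT ν w = z / (1 - z) := by
  have hpsi : 1 + psiT ν w ≠ 0 := fun h0 ↦ hz (by rw [← h, etaT, h0, div_zero])
  rw [etaT, div_eq_iff hpsi] at h
  have hz1 : 1 - z ≠ 0 := by
    refine fun hz1 ↦ hz ?_
    linear_combination psiT ν w * hz1 - h
  rw [eq_div_iff hz1]
  linear_combination h

lemma norm_sub_le_of_etaT_eq [IsProbabilityMeasure ν] (hν : ∀ᵐ x ∂ν, 0 ≤ x) (hw : w.re ≤ 0)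
    (hz : z.re < 0) (h : etaT ν w = z) (hd : truncDist ν * ‖1 - z‖ ≤ 1 / 4) :
    ‖w - z‖ ≤ 4 * truncDist ν * ‖1 - z‖ ^ 2 := by
  have hz0 : z ≠ 0 := ne_zero_of_re_neg hz
  have hd0 : 0 ≤ truncDist ν := truncDist_nonneg
  have hw1 := one_sub_ne_zero_of_re_nonpos hw
  have hz1 := one_sub_ne_zero_of_re_nonpos hz.le
  have hψ : ‖z / (1 - z) - w / (1 - w)‖ ≤ 2 * truncDist ν := by
    rw [← psiT_eq_of_etaT_eq hz0 h]
    exact norm_psiT_sub_le hν hw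
  have hw_le : ‖1 - w‖ ≤ ‖1 - z‖ + ‖w - z‖ := by
    rw [show 1 - w = (1 - z) - (w - z) by ring]
    exact norm_sub_le _ _
  have hself : ‖w - z‖ ≤ 2 * truncDist ν * ‖1 - z‖ ^ 2 + 1 / 2 * ‖w - z‖ := calc
    ‖w - z‖ = ‖z / (1 - z) - w / (1 - w)‖ * ‖1 - z‖ * ‖1 - w‖ := by
        rw [norm_sub_rev, ← norm_mul, ← norm_mul]
        congr 1
        field_simp
        ring
    _ ≤ 2 * truncDist ν * ‖1 - z‖ * (‖1 - z‖ + ‖w - z‖) := by gcongr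
    _ = 2 * truncDist ν * ‖1 - z‖ ^ 2 + 2 * (truncDist ν * ‖1 - z‖) * ‖w - z‖ := by ring
    _ ≤ 2 * truncDist ν * ‖1 - z‖ ^ 2 + 2 * (1 / 4) * ‖w - z‖ := by gcongr
    _ = 2 * truncDist ν * ‖1 - z‖ ^ 2 + 1 / 2 * ‖w - z‖ := by ring
  linarith

lemma im_eq_zero_of_im_psiT_eq_zero (hν : ∀ᵐ x ∂ν, 0 ≤ x) (hψ : psiT ν w ≠ 0)
    (him : (psiT ν w).im = 0) : w.im = 0 := by
  by_contra hw
  have hint := Integrable.of_integral_ne_zero hψ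
  have him_eq (x : ℝ) : ((x : ℂ) * w / (1 - (x : ℂ) * w)).im =
      w.im * (x / normSq (1 - (x : ℂ) * w)) := by
    rw [div_im]
    simp only [re_ofReal_mul, im_ofReal_mul, sub_re, sub_im, one_re, one_im]
    ring
  have hzero : ∫ x : ℝ, x / normSq (1 - (x : ℂ) * w) ∂ν = 0 := by
    have := (integral_im hint).trans him
    simp only [RCLike.im_to_complex, him_eq, integral_const_mul] at this
    exact (mul_eq_zero.1 this).resolve_left hw
  have hint_div : Integrable (fun x : ℝ ↦ x / normSq (1 - (x : ℂ) * w)) ν := by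
    refine (hint.im.const_mul w.im⁻¹).congr (.of_forall fun x ↦ ?_)
    simp only [RCLike.im_to_complex, him_eq, inv_mul_cancel_left₀ hw]
  have hae := (integral_eq_zero_iff_of_nonneg_ae
    (hν.mono fun x hx ↦ div_nonneg hx (normSq_nonneg _)) hint_div).1 hzero
  refine hψ (integral_eq_zero_of_ae (hae.mono fun x hx ↦ ?_))
  obtain hx | hx := div_eq_zero_iff.1 hx
  · simp [hx]
  · simp [normSq_eq_zero.1 hx]

lemma re_neg_of_etaT_eq_ofReal (hν : ∀ᵐ x ∂ν, 0 ≤ x) (hw : w ∈ OmegaDom) {c : ℝ} (hc : c < 0)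
    (h : etaT ν w = c) : w.re < 0 := by
  have hc0 : (c : ℂ) ≠ 0 := ofReal_ne_zero.2 hc.ne
  have hψ : psiT ν w = ((c / (1 - c) : ℝ) : ℂ) := by
    rw [psiT_eq_of_etaT_eq hc0 h]
    push_cast
    rfl
  have hψ0 : psiT ν w ≠ 0 := by
    rw [hψ, ofReal_ne_zero]
    exact div_ne_zero hc.ne (by linarith)
  have him : w.im = 0 := im_eq_zero_of_im_psiT_eq_zero hν hψ0 (by rw [hψ, ofReal_im])
  exact not_le.1 fun hre ↦ hw ⟨him, hre⟩

lemma re_nonpos_of_rightInverse_etaT [IsProbabilityMeasure ν] (hν : ∀ᵐ x ∂ν, 0 ≤ x)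
    {K : Set ℂ} (hK : IsPreconnected K) {c : ℝ} (hcK : (c : ℂ) ∈ K) {f : ℂ → ℂ}
    (hf : ContinuousOn f K) (hcΩ : f c ∈ OmegaDom) (hη : ∀ z ∈ K, etaT ν (f z) = z)
    (hKre : ∀ z ∈ K, z.re < 0) (hd : ∀ z ∈ K, truncDist ν * ‖1 - z‖ ≤ 1 / 4)
    (hd_re : ∀ z ∈ K, 4 * truncDist ν * ‖1 - z‖ ^ 2 < -z.re) :
    ∀ z ∈ K, (f z).re ≤ 0 := by
  intro z hz
  by_contra! hpos
  have hc : (f c).re < 0 :=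
    re_neg_of_etaT_eq_ofReal hν hcΩ (by simpa using hKre c hcK) (hη c hcK)
  obtain ⟨y, hy, hfy⟩ : ∃ y ∈ K, (f y).re = 0 :=
    hK.intermediate_value hcK hz (continuous_re.comp_continuousOn hf) ⟨hc.le, hpos.le⟩
  have hclose := norm_sub_le_of_etaT_eq hν hfy.le (hKre y hy) (hη y hy) (hd y hy)
  have hre : -y.re ≤ ‖f y - y‖ := by
    simpa only [sub_re, hfy, zero_sub] using re_le_norm (f y - y)
  linarith [hd_re y hy]

end Eta

section GTransform

variable {ν : Measure ℝ} {m : ℝ} {w z : ℂ}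

lemma gTransform_eq_integral_div_one_sub_mul :
    gTransform ν z = ∫ x : ℝ, (1 - z) * (1 - (x : ℂ)) / (1 - x * z) ∂ν := by
  refine integral_congr_ae (.of_forall fun x ↦ ?_)
  simp only
  rw [← neg_div_neg_eq, neg_sub, ← neg_mul, neg_sub]

lemma integrable_gTransform [IsFiniteMeasure ν] (hν : ∀ᵐ x ∂ν, 0 ≤ x) (hz : z.re < 0) :
    Integrable (fun x : ℝ ↦ (1 - z) * (1 - (x : ℂ)) / (1 - x * z)) ν := by
  refine .of_bound (C := ‖1 - z‖ * (1 + (-z.re)⁻¹))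
    (Measurable.aestronglyMeasurable (by fun_prop)) (hν.mono fun x hx ↦ ?_)
  rw [norm_div, norm_mul, norm_one_sub_ofReal, mul_div_assoc]
  gcongr
  exact abs_one_sub_div_norm_le (neg_pos.2 hz) hx (neg_neg z.re).ge

lemma gTransform_eq_psiT [IsProbabilityMeasure ν] (hν : ∀ᵐ x ∂ν, 0 ≤ x) (hw : w.re < 0) :
    gTransform ν w = (1 - w) - (1 - w) ^ 2 / w * psiT ν w := by
  have hw0 : w ≠ 0 := ne_zero_of_re_neg hw
  calc gTransform ν w
      = ∫ x : ℝ, ((1 - w) - (1 - w) ^ 2 / w * ((x : ℂ) * w / (1 - (x : ℂ) * w))) ∂ν := by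
        rw [gTransform_eq_integral_div_one_sub_mul]
        refine integral_congr_ae (hν.mono fun x hx ↦ ?_)
        have hxw := one_sub_ne_zero_of_re_nonpos (ofReal_mul_re_nonpos hx hw.le)
        have hwx : 1 - w * (x : ℂ) ≠ 0 := by rwa [mul_comm]
        simp only
        field_simp
        ring
    _ = (1 - w) - (1 - w) ^ 2 / w * psiT ν w := by
        rw [integral_sub (integrable_const _) ((integrable_psiT hν hw.le).const_mul _),
          integral_const_mul, psiT]
        simp

lemma gTransform_eq_of_etaT_eq [IsProbabilityMeasure ν] (hν : ∀ᵐ x ∂ν, 0 ≤ x) (hw : w.re < 0)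
    (hz : z.re < 0) (h : etaT ν w = z) :
    gTransform ν w = (w - z) / w * ((1 - w) / (1 - z)) := by
  have hw0 : w ≠ 0 := ne_zero_of_re_neg hw
  have hz0 : z ≠ 0 := ne_zero_of_re_neg hz
  have hz1 := one_sub_ne_zero_of_re_nonpos hz.le
  rw [gTransform_eq_psiT hν hw, psiT_eq_of_etaT_eq hz0 h]
  field_simp
  ring

lemma gTransform_sub_gTransform [IsFiniteMeasure ν] (hν : ∀ᵐ x ∂ν, 0 ≤ x) (hw : w.re < 0)
    (hz : z.re < 0) :
    gTransform ν z - gTransform ν w =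
      (w - z) * ∫ x : ℝ, (1 - (x : ℂ)) ^ 2 / ((1 - x * w) * (1 - x * z)) ∂ν := by
  rw [gTransform_eq_integral_div_one_sub_mul, gTransform_eq_integral_div_one_sub_mul,
    ← integral_sub (integrable_gTransform hν hz) (integrable_gTransform hν hw),
    ← integral_const_mul]
  refine integral_congr_ae (hν.mono fun x hx ↦ ?_)
  have hxw := one_sub_ne_zero_of_re_nonpos (ofReal_mul_re_nonpos hx hw.le)
  have hxz := one_sub_ne_zero_of_re_nonpos (ofReal_mul_re_nonpos hx hz.le)
  simp only
  rw [div_sub_div _ _ hxz hxw, mul_div_assoc']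
  congr 1 <;> ring

lemma norm_integral_one_sub_sq_div_le [IsFiniteMeasure ν] (hν : ∀ᵐ x ∂ν, 0 ≤ x) (hm : 0 < m)
    (hw : w.re ≤ -m) (hz : z.re ≤ -m) :
    ‖∫ x : ℝ, (1 - (x : ℂ)) ^ 2 / ((1 - x * w) * (1 - x * z)) ∂ν‖ ≤
      (1 + m⁻¹) ^ 2 * truncDist ν := by
  have hC : 1 ≤ 1 + m⁻¹ := le_add_of_nonneg_right (by positivity)
  rw [truncDist, ← integral_const_mul]
  refine norm_integral_le_of_norm_le (integrable_min_one_abs_one_sub.const_mul _)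
    (hν.mono fun x hx ↦ ?_)
  have hxz : 1 ≤ ‖1 - (x : ℂ) * z‖ :=
    one_le_norm_one_sub (ofReal_mul_re_nonpos hx (by linarith))
  have hfactor_w := abs_one_sub_div_norm_le hm hx hw
  have hfactor_z : |1 - x| / ‖1 - (x : ℂ) * z‖ ≤ (1 + m⁻¹) * min 1 |1 - x| := by
    rw [mul_min_of_nonneg _ _ (zero_le_one.trans hC), mul_one]
    exact le_min (abs_one_sub_div_norm_le hm hx hz)
      ((div_le_self (abs_nonneg _) hxz).trans (le_mul_of_one_le_left (abs_nonneg _) hC))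
  calc ‖(1 - (x : ℂ)) ^ 2 / ((1 - x * w) * (1 - x * z))‖
      = |1 - x| / ‖1 - (x : ℂ) * w‖ * (|1 - x| / ‖1 - (x : ℂ) * z‖) := by
        rw [norm_div, norm_mul, norm_pow, norm_one_sub_ofReal, sq, mul_div_mul_comm]
    _ ≤ (1 + m⁻¹) * ((1 + m⁻¹) * min 1 |1 - x|) := by gcongr
    _ = (1 + m⁻¹) ^ 2 * min 1 |1 - x| := by ring

lemma norm_gTransform_sub_le [IsProbabilityMeasure ν] (hν : ∀ᵐ x ∂ν, 0 ≤ x) (hm : 0 < m)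
    (hw : w.re ≤ -m) (hz : z.re ≤ -m) (h : etaT ν w = z) :
    ‖gTransform ν z - (w - z) / w‖ ≤
      (‖w - z‖ + ‖w‖ * ((1 + m⁻¹) ^ 2 * truncDist ν)) * ‖(w - z) / w‖ := by
  have hw0 : w ≠ 0 := ne_zero_of_re_neg (by linarith)
  have hz1 := one_sub_ne_zero_of_re_nonpos (w := z) (by linarith)
  set J := ∫ x : ℝ, (1 - (x : ℂ)) ^ 2 / ((1 - x * w) * (1 - x * z)) ∂ν with hJ
  have hJ_le : ‖J‖ ≤ (1 + m⁻¹) ^ 2 * truncDist ν :=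
    norm_integral_one_sub_sq_div_le hν hm hw hz
  have hg : gTransform ν z - (w - z) / w = ((z - w) / (1 - z) + w * J) * ((w - z) / w) := by
    rw [← sub_add_cancel (gTransform ν z) (gTransform ν w),
      gTransform_sub_gTransform hν (by linarith) (by linarith), ← hJ,
      gTransform_eq_of_etaT_eq hν (by linarith) (by linarith) h]
    field_simp
    ring
  rw [hg, norm_mul]
  gcongr
  refine (norm_add_le _ _).trans ?_
  rw [norm_mul, norm_div, norm_sub_rev z w]
  gcongr
  exact div_le_self (norm_nonneg _) (one_le_norm_one_sub (by linarith))

lemma norm_log_one_sub_inv_sub_le {u g : ℂ} {τ : ℝ} (hτ : τ ≤ 1 / 2) (hu : ‖u‖ ≤ τ)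
    (hg : ‖g - u‖ ≤ τ * ‖u‖) : ‖Complex.log (1 - u)⁻¹ - g‖ ≤ 4 * τ * ‖g‖ := by
  have hτ0 : 0 ≤ τ := (norm_nonneg u).trans hu
  have hlog : ‖Complex.log (1 - u)⁻¹ - u‖ ≤ τ * ‖u‖ := by
    have hinv : (1 - ‖u‖)⁻¹ ≤ 2 := inv_le_of_inv_le₀ two_pos (by linarith)
    calc ‖Complex.log (1 - u)⁻¹ - u‖ ≤ ‖u‖ ^ 2 * (1 - ‖u‖)⁻¹ / 2 :=
          norm_log_one_sub_inv_sub_self_le (by linarith)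
      _ ≤ ‖u‖ ^ 2 * 2 / 2 := by gcongr
      _ = ‖u‖ * ‖u‖ := by ring
      _ ≤ τ * ‖u‖ := by gcongr
  have hu_le : ‖u‖ ≤ 2 * ‖g‖ := by
    have : τ * ‖u‖ ≤ 1 / 2 * ‖u‖ := by gcongr
    linarith [norm_sub_norm_le u g, norm_sub_rev u g]
  calc ‖Complex.log (1 - u)⁻¹ - g‖ ≤ ‖Complex.log (1 - u)⁻¹ - u‖ + ‖u - g‖ :=
        norm_sub_le_norm_sub_add_norm_sub _ _ _
    _ ≤ τ * ‖u‖ + τ * ‖u‖ := by rw [norm_sub_rev u g]; gcongr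
    _ = 2 * τ * ‖u‖ := by ring
    _ ≤ 2 * τ * (2 * ‖g‖) := by gcongr
    _ = 4 * τ * ‖g‖ := by ring

lemma norm_log_div_sub_gTransform_le [IsProbabilityMeasure ν] (hν : ∀ᵐ x ∂ν, 0 ≤ x) (hm : 0 < m)
    (hw : w.re ≤ 0) (hz : z.re ≤ -(2 * m)) (h : etaT ν w = z) {R τ : ℝ} (hR : ‖1 - z‖ ≤ R)
    (hτ : τ ≤ 1 / 2) (hdR : truncDist ν * R ≤ 1 / 4) (hdm : 4 * truncDist ν * R ^ 2 ≤ m * τ)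
    (hdτ : 4 * truncDist ν * R ^ 2 + (R + m) * ((1 + m⁻¹) ^ 2 * truncDist ν) ≤ τ) :
    ‖Complex.log (w / z) - gTransform ν z‖ ≤ 4 * τ * ‖gTransform ν z‖ := by
  have hd : 0 ≤ truncDist ν := truncDist_nonneg
  have hτ0 : 0 ≤ τ := nonneg_of_mul_nonneg_right (le_trans (by positivity) hdm) hm
  have hclose : ‖w - z‖ ≤ 4 * truncDist ν * R ^ 2 :=
    (norm_sub_le_of_etaT_eq hν hw (by linarith) h
      ((mul_le_mul_of_nonneg_left hR hd).trans hdR)).trans (by gcongr)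
  have hclose_m : ‖w - z‖ ≤ m := by nlinarith
  have hw_re : w.re ≤ -m := by
    have := re_le_norm (w - z)
    rw [sub_re] at this
    linarith
  have hw_norm : ‖w‖ ≤ R + m := calc
    ‖w‖ ≤ ‖1 - w‖ := norm_le_norm_one_sub hw
    _ = ‖(1 - z) - (w - z)‖ := by congr 1; ring
    _ ≤ ‖1 - z‖ + ‖w - z‖ := norm_sub_le _ _
    _ ≤ R + m := by gcongr
  have hw0 : w ≠ 0 := ne_zero_of_re_neg (by linarith)
  have hm_le : m ≤ ‖w‖ := by linarith [neg_le_of_abs_le (abs_re_le_norm w)]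
  have hu : ‖(w - z) / w‖ ≤ τ := by
    rw [norm_div, div_le_iff₀ (hm.trans_le hm_le)]
    calc ‖w - z‖ ≤ m * τ := hclose.trans hdm
      _ ≤ ‖w‖ * τ := by gcongr
      _ = τ * ‖w‖ := mul_comm _ _
  have hg : ‖gTransform ν z - (w - z) / w‖ ≤ τ * ‖(w - z) / w‖ := by
    refine (norm_gTransform_sub_le hν hm hw_re (by linarith) h).trans ?_
    gcongr
    exact (by gcongr : _ ≤ _).trans hdτ
  have hw_div : w / z = (1 - (w - z) / w)⁻¹ := by
    rw [one_sub_div hw0, sub_sub_cancel, inv_div]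
  rw [hw_div]
  exact norm_log_one_sub_inv_sub_le hτ hu hg

end GTransform

section CompactSets

variable {K : Set ℂ}

lemma exists_re_le_neg_and_norm_one_sub_le (hK : IsCompact K) (hKre : ∀ z ∈ K, z.re < 0) :
    ∃ m R : ℝ, 0 < m ∧ ∀ z ∈ K, z.re ≤ -m ∧ ‖1 - z‖ ≤ R := by
  obtain ⟨a, ha, hKa⟩ : ∃ a < 0, ∀ z ∈ K, z.re ≤ a := by
    obtain rfl | hne := K.eq_empty_or_nonempty
    · exact ⟨-1, by norm_num, by simp⟩
    · obtain ⟨z₀, hz₀, hmax⟩ := hK.exists_isMaxOn hne continuous_re.continuousOn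
      exact ⟨z₀.re, hKre z₀ hz₀, fun z hz ↦ hmax hz⟩
  obtain ⟨R, hR⟩ := hK.exists_bound_of_continuousOn (f := fun z ↦ 1 - z) (by fun_prop)
  exact ⟨-a, R, neg_pos.2 ha, fun z hz ↦ ⟨(hKa z hz).trans_eq (neg_neg a).symm, hR z hz⟩⟩

lemma exists_truncDist_lt_imp_norm_log_sub_gTransform_le (hK : IsCompact K)
    (hK_conn : IsPreconnected K) (hKre : ∀ z ∈ K, z.re < 0) {c : ℝ} (hcK : (c : ℂ) ∈ K)
    {ε : ℝ} (hε : 0 < ε) :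
    ∃ d₀ > 0, ∀ (ν : Measure ℝ) [IsProbabilityMeasure ν], (∀ᵐ x ∂ν, 0 ≤ x) →
      truncDist ν < d₀ → ∀ f : ℂ → ℂ, ContinuousOn f K → f c ∈ OmegaDom →
      (∀ z ∈ K, etaT ν (f z) = z) → ∀ z ∈ K,
        ‖Complex.log (f z / z) - gTransform ν z‖ ≤ ε * ‖gTransform ν z‖ := by
  obtain ⟨M, R, hM, hbounds⟩ := exists_re_le_neg_and_norm_one_sub_le hK hKre
  obtain ⟨m, rfl⟩ : ∃ m, M = 2 * m := ⟨M / 2, by ring⟩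
  have hm : 0 < m := pos_of_mul_pos_right hM two_pos.le
  set τ := min (1 / 2) (ε / 4)
  have hτ : 0 < τ := by positivity
  have hτ_le : τ ≤ 1 / 2 := min_le_left _ _
  have hsmall : ∀ᶠ d : ℝ in nhds 0, d * R < 1 / 4 ∧ 4 * d * R ^ 2 < m * τ ∧
      4 * d * R ^ 2 + (R + m) * ((1 + m⁻¹) ^ 2 * d) < τ := by
    refine .and ?_ (.and ?_ ?_) <;>
      exact (Continuous.tendsto (by fun_prop) 0).eventually_lt_const (by simp [hm, hτ])
  obtain ⟨d₀, hd₀, hball⟩ := Metric.eventually_nhds_iff.1 hsmall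
  refine ⟨d₀, hd₀, fun ν _ hν hdν f hf hcΩ hη ↦ ?_⟩
  have hd : 0 ≤ truncDist ν := truncDist_nonneg
  obtain ⟨hdR, hdm, hdτ⟩ := hball (by rwa [Real.dist_0_eq_abs, abs_of_nonneg hd])
  have hf_re : ∀ z ∈ K, (f z).re ≤ 0 := by
    refine re_nonpos_of_rightInverse_etaT hν hK_conn hcK hf hcΩ hη hKre
      (fun z hz ↦ (mul_le_mul_of_nonneg_left (hbounds z hz).2 hd).trans hdR.le) fun z hz ↦ ?_
    calc 4 * truncDist ν * ‖1 - z‖ ^ 2 ≤ 4 * truncDist ν * R ^ 2 := by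
          gcongr; exact (hbounds z hz).2
      _ < -z.re := by nlinarith [(hbounds z hz).1]
  intro z hz
  calc ‖Complex.log (f z / z) - gTransform ν z‖ ≤ 4 * τ * ‖gTransform ν z‖ :=
        norm_log_div_sub_gTransform_le hν hm (hf_re z hz) (hbounds z hz).1 (hη z hz)
          (hbounds z hz).2 hτ_le hdR.le hdm.le hdτ.le
    _ ≤ ε * ‖gTransform ν z‖ := by
        gcongr
        linarith [min_le_right (1 / 2) (ε / 4)]

theorem log_Sigma_transform_approx_general (hK : IsCompact K) (hK_conn : IsPreconnected K)
    (hKre : ∀ z ∈ K, z.re < 0) {c : ℝ} (hcK : (c : ℂ) ∈ K) {k : ℕ → ℕ} {μ : ℕ → ℕ → Measure ℝ}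
    [∀ n j, IsProbabilityMeasure (μ n j)] (hsupp : ∀ n j, μ n j (Iio 0) = 0)
    (hinf : ∀ ε : ℝ, 0 < ε → ∀ δ : ℝ, 0 < δ → ∃ N : ℕ, ∀ n ≥ N, ∀ j,
      1 ≤ j → j ≤ k n → 1 - δ ≤ (μ n j (Ioo (1 - ε) (1 + ε))).toReal)
    {S : ℕ → ℕ → ℂ → ℂ} (hS : ∀ n j, 1 ≤ j → j ≤ k n → ContinuousOn (S n j) K ∧
      c * S n j c ∈ OmegaDom ∧ ∀ z ∈ K, etaT (scaledM (μ n j)) (z * S n j z) = z)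
    {ε : ℝ} (hε : 0 < ε) :
    ∃ N : ℕ, ∀ n ≥ N, ∀ j, 1 ≤ j → j ≤ k n → ∀ z ∈ K,
      ‖Complex.log (S n j z) - gAux (μ n j) z‖ ≤ ε * ‖gAux (μ n j) z‖ := by
  obtain ⟨d₀, hd₀, happrox⟩ :=
    exists_truncDist_lt_imp_norm_log_sub_gTransform_le hK hK_conn hKre hcK hε
  obtain ⟨δ, hδ, hscaled⟩ := exists_le_measure_Ioo_imp_truncDist_scaledM_lt hd₀
  obtain ⟨N, hN⟩ := hinf δ hδ δ hδ
  refine ⟨N, fun n hn j h1j hjk z hz ↦ ?_⟩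
  obtain ⟨hcont, hcΩ, hη⟩ := hS n j h1j hjk
  have hpos : ∀ᵐ x ∂μ n j, 0 ≤ x :=
    (measure_eq_zero_iff_ae_notMem.1 (hsupp n j)).mono fun _ ↦ notMem_Iio.1
  have hz0 : z ≠ 0 := ne_zero_of_re_neg (hKre z hz)
  have hlog := happrox (scaledM (μ n j)) (ae_nonneg_scaledM hpos)
    (hscaled (μ n j) (hN n hn j h1j hjk)) (fun z ↦ z * S n j z) (continuousOn_id.mul hcont)
    hcΩ hη z hz
  rwa [mul_div_cancel_left₀ _ hz0] at hlog

end CompactSets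

/-- Lemma 3.1 (ii): for an infinitesimal triangular array `{μ_{nj}}` on `[0,∞)` and a
closed disc `D` with center on the negative real axis on which all the Σ-transforms
`Σ_{μ°_{nj}} = S_{nj}` are defined (analytic on an open set containing `D`, with
`η_{μ°_{nj}}(z·S_{nj}(z)) = z` on `D`), there is a smaller closed disc `D₁ ⊆ D`, also
with center on the negative real axis, such that
`Log Σ_{μ°_{nj}}(z) = g_{nj}(z)(1+o(1))` uniformly in `1 ≤ j ≤ k_n` and `z ∈ D₁`. -/
theorem log_Sigma_transform_approx (k : ℕ → ℕ) (hk : ∀ n, 1 ≤ k n)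
    (μ : ℕ → ℕ → Measure ℝ) [∀ n j, IsProbabilityMeasure (μ n j)]
    (hsupp : ∀ n j, (μ n j) (Set.Iio (0 : ℝ)) = 0)
    (hinf : ∀ ε : ℝ, 0 < ε → ∀ δ : ℝ, 0 < δ → ∃ N : ℕ, ∀ n ≥ N, ∀ j,
      1 ≤ j → j ≤ k n → 1 - δ ≤ ((μ n j) (Set.Ioo (1 - ε) (1 + ε))).toReal)
    (c r : ℝ) (hc : c < 0) (hr : 0 < r)
    (hD : Metric.closedBall (c : ℂ) r ⊆ {z : ℂ | z.re < 0})
    (S : ℕ → ℕ → ℂ → ℂ)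
    (hS : ∀ n j, 1 ≤ j → j ≤ k n → ∃ U : Set ℂ, IsOpen U ∧
      Metric.closedBall (c : ℂ) r ⊆ U ∧ AnalyticOnNhd ℂ (S n j) U ∧
      ∀ z ∈ Metric.closedBall (c : ℂ) r,
        z * S n j z ∈ OmegaDom ∧ etaT (scaledM (μ n j)) (z * S n j z) = z) :
    ∃ c₁ r₁ : ℝ, c₁ < 0 ∧ 0 < r₁ ∧
      Metric.closedBall (c₁ : ℂ) r₁ ⊆ Metric.closedBall (c : ℂ) r ∧
      ∀ ε : ℝ, 0 < ε → ∃ N : ℕ, ∀ n ≥ N, ∀ j, 1 ≤ j → j ≤ k n →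
        ∀ z ∈ Metric.closedBall (c₁ : ℂ) r₁,
          ‖Complex.log (S n j z) - gAux (μ n j) z‖ ≤ ε * ‖gAux (μ n j) z‖ := by
  refine ⟨c, r, hc, hr, subset_rfl, fun ε hε ↦ ?_⟩
  have hc_mem : (c : ℂ) ∈ Metric.closedBall (c : ℂ) r := Metric.mem_closedBall_self hr.le
  refine log_Sigma_transform_approx_general (isCompact_closedBall _ _)
    (convex_closedBall _ _).isPreconnected hD hc_mem hsupp hinf (fun n j h1j hjk ↦ ?_) hε
  obtain ⟨U, -, hDU, hSU, hη⟩ := hS n j h1j hjk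
  exact ⟨hSU.continuousOn.mono hDU, (hη c hc_mem).1, fun z hz ↦ (hη z hz).2⟩
end

section
/- There exists a unique map ω : 𝔻̄ → 𝔻̄ with the following properties: ω is continuous and one-to-one on 𝔻̄, ω(𝔻) ⊆ 𝔻, ω is analytic in 𝔻, and Φ(ω(z)) = z for every z ∈ 𝔻. -/
open Complex Set Metric

/-- `ω` is a global inverse of `Φ`: continuous and one-to-one on the closed unit disc,
mapping `𝔻̄` into `𝔻̄` and `𝔻` into `𝔻`, analytic in `𝔻`, and satisfying `Φ(ω(z)) = z`
on `𝔻`. -/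
def IsGlobalInverse (Φ ω : ℂ → ℂ) : Prop :=
  ContinuousOn ω (closedBall 0 1) ∧ Set.InjOn ω (closedBall 0 1) ∧
    Set.MapsTo ω (closedBall 0 1) (closedBall 0 1) ∧
    Set.MapsTo ω (ball 0 1) (ball 0 1) ∧
    AnalyticOnNhd ℂ ω (ball 0 1) ∧
    ∀ z ∈ ball (0 : ℂ) 1, Φ (ω z) = z

/-!
The function `h z = z / Φ z` maps the disc into its closure, and `Φ v = x` reads `v = x * h v`.
Where `‖Φ‖ ≤ 1` we have `‖z‖ ≤ ‖h z‖`, so the Schwarz–Pick inequality makes `h` 1-Lipschitz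
there: each equation `v = x * h v` with `‖x‖ < 1` has at most one solution, and exactly one since
`Φ` is open and does not decrease moduli. This is the inverse `ω` on the open disc.

A cluster value `v` of `ω` at a boundary point `ζ` satisfies the conclusion of Julia's lemma for
`ζ * h`. If there were two cluster values, touching horodiscs based at them would yield a fixed
point `p` of `ζ * h` in the disc, that is `Φ p = ζ`; but then `ω` would tend to `p` at `ζ`. So `ω`
extends continuously. Finally `ω x / x = h (ω x)`, and the Lipschitz bound for `h`, which survives
on the closed disc, turns `ω x = ω y ≠ 0` into `x = y`.
-/

open Filter
open scoped ComplexConjugate Topology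

section SchwarzPick

theorem one_sub_norm_sq_pos {E : Type*} [SeminormedAddCommGroup E] {x : E}
    (hx : x ∈ ball (0 : E) 1) : 0 < 1 - ‖x‖ ^ 2 :=
  sub_pos.2 (pow_lt_one₀ (norm_nonneg x) (mem_ball_zero_iff.1 hx) two_ne_zero)

theorem one_sub_norm_sq_nonneg {E : Type*} [SeminormedAddCommGroup E] {x : E}
    (hx : x ∈ closedBall (0 : E) 1) : 0 ≤ 1 - ‖x‖ ^ 2 :=
  sub_nonneg.2 (pow_le_one₀ (norm_nonneg x) (mem_closedBall_zero_iff.1 hx))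

theorem norm_one_sub_conj_mul_sq (a b : ℂ) :
    ‖1 - conj a * b‖ ^ 2 = ‖b - a‖ ^ 2 + (1 - ‖a‖ ^ 2) * (1 - ‖b‖ ^ 2) := by
  simp only [← normSq_eq_norm_sq, normSq_apply, sub_re, sub_im, mul_re, mul_im, conj_re, conj_im,
    one_re, one_im]
  ring

theorem one_sub_conj_mul_ne_zero {a b : ℂ} (ha : ‖a‖ < 1) (hb : ‖b‖ ≤ 1) :
    1 - conj a * b ≠ 0 := by
  refine sub_ne_zero.2 fun h => ?_
  have hab : ‖a‖ * ‖b‖ = 1 := by rw [← norm_conj, ← norm_mul, ← h, norm_one]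
  nlinarith [norm_nonneg a]

/-- The automorphism `z ↦ (z - a) / (1 - ā z)` of the unit disc, for `‖a‖ < 1`, sending `a` to
`0`; it moves the base points of the Schwarz lemma to the origin. -/
noncomputable def discAut (a z : ℂ) : ℂ := (z - a) / (1 - conj a * z)

theorem norm_discAut (a z : ℂ) : ‖discAut a z‖ = ‖z - a‖ / ‖1 - conj a * z‖ := norm_div _ _

theorem one_sub_norm_discAut_sq {a z : ℂ} (ha : ‖a‖ < 1) (hz : ‖z‖ ≤ 1) :
    1 - ‖discAut a z‖ ^ 2 = (1 - ‖a‖ ^ 2) * (1 - ‖z‖ ^ 2) / ‖1 - conj a * z‖ ^ 2 := by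
  have hpos : ‖1 - conj a * z‖ ^ 2 ≠ 0 := by simpa using one_sub_conj_mul_ne_zero ha hz
  rw [norm_discAut, div_pow, eq_div_iff hpos, sub_mul, div_mul_cancel₀ _ hpos,
    norm_one_sub_conj_mul_sq]
  ring

theorem mapsTo_discAut_closedBall {a : ℂ} (ha : ‖a‖ < 1) :
    MapsTo (discAut a) (closedBall 0 1) (closedBall 0 1) := fun z hz => by
  rw [mem_closedBall_zero_iff] at hz ⊢
  have : 0 ≤ 1 - ‖discAut a z‖ ^ 2 := by
    rw [one_sub_norm_discAut_sq ha hz]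
    have := one_sub_norm_sq_nonneg (mem_closedBall_zero_iff.2 ha.le)
    have := one_sub_norm_sq_nonneg (mem_closedBall_zero_iff.2 hz)
    positivity
  nlinarith

theorem discAut_neg_discAut {a z : ℂ} (ha : ‖a‖ < 1) (hz : ‖z‖ ≤ 1) :
    discAut (-a) (discAut a z) = z := by
  have hdisc : ‖discAut a z‖ ≤ 1 :=
    mem_closedBall_zero_iff.1 (mapsTo_discAut_closedBall ha (mem_closedBall_zero_iff.2 hz))
  have hden : 1 - conj (-a) * discAut a z ≠ 0 :=
    one_sub_conj_mul_ne_zero (by rwa [norm_neg]) hdisc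
  have hmul : discAut a z * (1 - conj a * z) = z - a :=
    div_mul_cancel₀ _ (one_sub_conj_mul_ne_zero ha hz)
  rw [discAut, div_eq_iff hden, map_neg]
  linear_combination hmul

theorem mapsTo_discAut_ball {a : ℂ} (ha : ‖a‖ < 1) :
    MapsTo (discAut a) (ball 0 1) (ball 0 1) := fun z hz => by
  rw [mem_ball_zero_iff] at hz ⊢
  have hpos : 0 < ‖1 - conj a * z‖ := norm_pos_iff.2 (one_sub_conj_mul_ne_zero ha hz.le)
  have : 0 < 1 - ‖discAut a z‖ ^ 2 := by
    rw [one_sub_norm_discAut_sq ha hz.le]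
    have := one_sub_norm_sq_pos (mem_ball_zero_iff.2 ha)
    have := one_sub_norm_sq_pos (mem_ball_zero_iff.2 hz)
    positivity
  nlinarith

theorem differentiableOn_discAut {a : ℂ} (ha : ‖a‖ < 1) :
    DifferentiableOn ℂ (discAut a) (closedBall 0 1) := by
  refine DifferentiableOn.div (by fun_prop) (by fun_prop) fun z hz => ?_
  exact one_sub_conj_mul_ne_zero ha (mem_closedBall_zero_iff.1 hz)

variable {f : ℂ → ℂ} {v w z : ℂ}

theorem norm_discAut_le_of_mapsTo (hf : DifferentiableOn ℂ f (ball 0 1))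
    (hmaps : MapsTo f (ball 0 1) (closedBall 0 1)) (hv : v ∈ ball (0 : ℂ) 1)
    (hw : w ∈ ball (0 : ℂ) 1) (hfw : ‖f w‖ < 1) :
    ‖discAut (f w) (f v)‖ ≤ ‖discAut w v‖ := by
  rw [mem_ball_zero_iff] at hv hw
  have hw' : ‖-w‖ < 1 := by rwa [norm_neg]
  have hback : MapsTo (discAut (-w)) (ball 0 1) (ball 0 1) := mapsTo_discAut_ball hw'
  have hdiff : DifferentiableOn ℂ (discAut (f w) ∘ f ∘ discAut (-w)) (ball 0 1) :=
    (differentiableOn_discAut hfw).comp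
      (hf.comp ((differentiableOn_discAut hw').mono ball_subset_closedBall) hback)
      (hmaps.comp hback)
  have hself : MapsTo (discAut (f w) ∘ f ∘ discAut (-w)) (ball 0 1) (closedBall 0 1) :=
    (mapsTo_discAut_closedBall hfw).comp (hmaps.comp hback)
  have hzero : (discAut (f w) ∘ f ∘ discAut (-w)) 0 = 0 := by
    simp [discAut]
  have hlt : ‖discAut w v‖ < 1 :=
    mem_ball_zero_iff.1 (mapsTo_discAut_ball hw (mem_ball_zero_iff.2 hv))
  simpa [discAut_neg_discAut hw hv.le] using norm_le_norm_of_mapsTo_ball hdiff hself hzero hlt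

theorem schwarz_pick (hf : DifferentiableOn ℂ f (ball 0 1))
    (hmaps : MapsTo f (ball 0 1) (closedBall 0 1)) (hv : v ∈ ball (0 : ℂ) 1)
    (hw : w ∈ ball (0 : ℂ) 1) :
    ‖f v - f w‖ * ‖1 - conj w * v‖ ≤ ‖v - w‖ * ‖1 - conj (f w) * f v‖ := by
  have hle : ∀ z ∈ ball (0 : ℂ) 1, ‖f z‖ ≤ 1 := fun z hz => mem_closedBall_zero_iff.1 (hmaps hz)
  rcases (hle w hw).lt_or_eq with hfw | hfw
  · have hdist := norm_discAut_le_of_mapsTo hf hmaps hv hw hfw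
    rwa [norm_discAut, norm_discAut, div_le_div_iff₀
      (norm_pos_iff.2 (one_sub_conj_mul_ne_zero hfw (hle v hv)))
      (norm_pos_iff.2 (one_sub_conj_mul_ne_zero (mem_ball_zero_iff.1 hw)
        (mem_ball_zero_iff.1 hv).le))] at hdist
  · have hmax : IsMaxOn (norm ∘ f) (ball 0 1) w := fun z hz => (hle z hz).trans_eq hfw.symm
    have hconst : f v = f w := eqOn_of_isPreconnected_of_isMaxOn_norm
      (convex_ball _ _).isPreconnected isOpen_ball hf hw hmax hv
    rw [hconst, sub_self, norm_zero, zero_mul]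
    positivity

theorem schwarz_pick_sq (hf : DifferentiableOn ℂ f (ball 0 1))
    (hmaps : MapsTo f (ball 0 1) (closedBall 0 1)) (hv : v ∈ ball (0 : ℂ) 1)
    (hw : w ∈ ball (0 : ℂ) 1) :
    ‖f v - f w‖ ^ 2 * ((1 - ‖w‖ ^ 2) * (1 - ‖v‖ ^ 2)) ≤
      ‖v - w‖ ^ 2 * ((1 - ‖f w‖ ^ 2) * (1 - ‖f v‖ ^ 2)) := by
  have hsq := pow_le_pow_left₀ (by positivity) (schwarz_pick hf hmaps hv hw) 2
  rw [mul_pow, mul_pow, norm_one_sub_conj_mul_sq, norm_one_sub_conj_mul_sq] at hsq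
  linarith

theorem norm_sub_le_of_norm_le_norm (hf : DifferentiableOn ℂ f (ball 0 1))
    (hmaps : MapsTo f (ball 0 1) (closedBall 0 1)) (hv : v ∈ ball (0 : ℂ) 1)
    (hw : w ∈ ball (0 : ℂ) 1) (hfv : ‖v‖ ≤ ‖f v‖) (hfw : ‖w‖ ≤ ‖f w‖) :
    ‖f v - f w‖ ≤ ‖v - w‖ := by
  have hfv1 : 0 ≤ 1 - ‖f v‖ ^ 2 := one_sub_norm_sq_nonneg (hmaps hv)
  have hv1 := one_sub_norm_sq_pos hv
  have hw1 := one_sub_norm_sq_pos hw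
  refine le_of_sq_le_sq ?_ (norm_nonneg _)
  refine le_of_mul_le_mul_right ?_ (mul_pos hw1 hv1)
  calc
    ‖f v - f w‖ ^ 2 * ((1 - ‖w‖ ^ 2) * (1 - ‖v‖ ^ 2))
      ≤ ‖v - w‖ ^ 2 * ((1 - ‖f w‖ ^ 2) * (1 - ‖f v‖ ^ 2)) := schwarz_pick_sq hf hmaps hv hw
    _ ≤ ‖v - w‖ ^ 2 * ((1 - ‖w‖ ^ 2) * (1 - ‖v‖ ^ 2)) := by gcongr

theorem norm_one_sub_conj_mul_sq_le_of_norm_le_norm (hf : DifferentiableOn ℂ f (ball 0 1))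
    (hmaps : MapsTo f (ball 0 1) (closedBall 0 1)) (hv : v ∈ ball (0 : ℂ) 1)
    (hz : z ∈ ball (0 : ℂ) 1) (hfv : ‖v‖ ≤ ‖f v‖) :
    ‖1 - conj (f v) * f z‖ ^ 2 * (1 - ‖z‖ ^ 2) ≤ ‖1 - conj v * z‖ ^ 2 * (1 - ‖f z‖ ^ 2) := by
  have hfz1 : 0 ≤ 1 - ‖f z‖ ^ 2 := one_sub_norm_sq_nonneg (hmaps hz)
  have hv1 := one_sub_norm_sq_pos hv
  refine le_of_mul_le_mul_right ?_ hv1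
  calc
    ‖1 - conj (f v) * f z‖ ^ 2 * (1 - ‖z‖ ^ 2) * (1 - ‖v‖ ^ 2)
      ≤ ‖1 - conj v * z‖ ^ 2 * (1 - ‖f z‖ ^ 2) * (1 - ‖f v‖ ^ 2) := by
        have hpick := schwarz_pick_sq hf hmaps hz hv
        rw [norm_one_sub_conj_mul_sq, norm_one_sub_conj_mul_sq]
        linarith
    _ ≤ ‖1 - conj v * z‖ ^ 2 * (1 - ‖f z‖ ^ 2) * (1 - ‖v‖ ^ 2) := by gcongr

end SchwarzPick

/-- `f` maps every horodisc `{z ∈ 𝔻 : |1 - v̄ z|² < R (1 - |z|²)}` based at `v` into itself, as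
Julia's lemma gives at the Denjoy–Wolff point `v` of a self-map of the disc. For `v ∈ 𝔻` these
are the hyperbolic discs centred at `v`. The inequality is stated without denominators so that it
covers unimodular values of `f`. -/
def PreservesHorodiscs (f : ℂ → ℂ) (v : ℂ) : Prop :=
  ∀ z ∈ ball (0 : ℂ) 1,
    ‖1 - conj v * f z‖ ^ 2 * (1 - ‖z‖ ^ 2) ≤ ‖1 - conj v * z‖ ^ 2 * (1 - ‖f z‖ ^ 2)

theorem two_mul_norm_add_lt {E : Type*} [NormedAddCommGroup E] [InnerProductSpace ℝ E] {v w : E}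
    (hvw : v ≠ w) : 2 * ‖v + w‖ < 2 + ‖v‖ ^ 2 + ‖w‖ ^ 2 := by
  have hparallel : ‖v + w‖ ^ 2 + ‖v - w‖ ^ 2 = 2 * (‖v‖ ^ 2 + ‖w‖ ^ 2) := by
    simpa only [sq] using parallelogram_law_with_norm ℝ v w
  have hdist : 0 < ‖v - w‖ := norm_sub_pos_iff.2 hvw
  nlinarith [sq_nonneg (‖v + w‖ - 2)]

-- `p` is the point where two horodiscs based at `v` and `w` touch.
theorem exists_norm_one_sub_conj_mul_sq_add_eq {v w : ℂ} (hvw : v ≠ w) :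
    ∃ p ∈ ball (0 : ℂ) 1, ∃ B > 0, ∃ C : ℝ, ∀ z : ℂ,
      ‖1 - conj v * z‖ ^ 2 + ‖1 - conj w * z‖ ^ 2 = B * ‖z - p‖ ^ 2 + C * (1 - ‖z‖ ^ 2) := by
  set m := v + w
  set S := 2 + ‖v‖ ^ 2 + ‖w‖ ^ 2
  have hm : 2 * ‖m‖ < S := two_mul_norm_add_lt hvw
  have hdisc : 0 ≤ S ^ 2 - 4 * ‖m‖ ^ 2 := by nlinarith [norm_nonneg m]
  set B := (S + √(S ^ 2 - 4 * ‖m‖ ^ 2)) / 2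
  have hmB : ‖m‖ < B := by
    have := Real.sqrt_nonneg (S ^ 2 - 4 * ‖m‖ ^ 2)
    simp only [B]
    linarith
  have hB : 0 < B := (norm_nonneg m).trans_lt hmB
  have hroot : B ^ 2 - S * B + ‖m‖ ^ 2 = 0 := by
    have := Real.sq_sqrt hdisc
    simp only [B]
    linarith
  have hnorm : ‖m / B‖ = ‖m‖ / B := by rw [norm_div, norm_real, Real.norm_of_nonneg hB.le]
  refine ⟨m / B, ?_, B, hB, B - (‖v‖ ^ 2 + ‖w‖ ^ 2), fun z => ?_⟩
  · rwa [mem_ball_zero_iff, hnorm, div_lt_one hB]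
  · have hmid : B * ‖m / B‖ ^ 2 = S - B := by
      rw [hnorm]
      field_simp
      linarith
    have hre : B * (m / B).re = v.re + w.re := by simp [m, mul_div_cancel₀, hB.ne']
    have him : B * (m / B).im = v.im + w.im := by simp [m, mul_div_cancel₀, hB.ne']
    simp only [S, ← normSq_eq_norm_sq, normSq_apply, sub_re, sub_im, mul_re, mul_im, conj_re,
      conj_im, one_re, one_im] at hmid ⊢
    linear_combination 2 * z.re * hre + 2 * z.im * him - hmid

theorem PreservesHorodiscs.exists_fixedPoint {f : ℂ → ℂ} {v w : ℂ} (hv : PreservesHorodiscs f v)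
    (hw : PreservesHorodiscs f w) (hvw : v ≠ w) : ∃ p ∈ ball (0 : ℂ) 1, f p = p := by
  obtain ⟨p, hp, B, hB, C, hsum⟩ := exists_norm_one_sub_conj_mul_sq_add_eq hvw
  refine ⟨p, hp, ?_⟩
  have hp' := one_sub_norm_sq_pos hp
  have hle : B * ‖f p - p‖ ^ 2 * (1 - ‖p‖ ^ 2) ≤ 0 := by
    have hfp := hsum (f p)
    have hpp := hsum p
    rw [sub_self, norm_zero] at hpp
    linear_combination hv p hp + hw p hp - (1 - ‖p‖ ^ 2) * hfp + (1 - ‖f p‖ ^ 2) * hpp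
  have hsq : ‖f p - p‖ ^ 2 ≤ 0 := by
    by_contra! hpos
    exact hle.not_gt (by positivity)
  exact sub_eq_zero.1 (norm_eq_zero.1 (by nlinarith))

theorem le_norm_of_hasDerivAt_of_le_norm_sub {𝕜 F : Type*} [NontriviallyNormedField 𝕜]
    [NormedAddCommGroup F] [NormedSpace 𝕜 F] {f : 𝕜 → F} {f' : F} {a : 𝕜} {c : ℝ}
    (hf : HasDerivAt f f' a) (hle : ∀ᶠ z in 𝓝 a, c * ‖z - a‖ ≤ ‖f z - f a‖) : c ≤ ‖f'‖ := by
  refine ge_of_tendsto hf.tendsto_slope.norm ?_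
  filter_upwards [self_mem_nhdsWithin, nhdsWithin_le_nhds hle] with z hza hz
  rw [slope_def_module, norm_smul, norm_inv, inv_mul_eq_div,
    le_div_iff₀ (norm_pos_iff.2 (sub_ne_zero.2 hza))]
  exact hz

theorem apply_eq_of_rightInvOn_of_mem_closure {X Y : Type*} [TopologicalSpace X] [T2Space X]
    [TopologicalSpace Y] {f : Y → X} {g : X → Y} {s : Set X} {x : X} (hinv : RightInvOn g f s)
    (hx : x ∈ closure s) (hg : ContinuousWithinAt g s x) (hf : ContinuousAt f (g x)) :
    f (g x) = x := by
  have : (𝓝[s] x).NeBot := mem_closure_iff_nhdsWithin_neBot.1 hx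
  have hid : f ∘ g =ᶠ[𝓝[s] x] id := eventually_nhdsWithin_of_forall hinv
  exact tendsto_nhds_unique ((hf.tendsto.comp hg).congr' hid) nhdsWithin_le_nhds

/-- The standing assumptions on `Φ`: it is analytic on the unit disc, fixes `0`, and does not
decrease the modulus. -/
structure IsModulusExpanding (Φ : ℂ → ℂ) : Prop where
  analyticOnNhd : AnalyticOnNhd ℂ Φ (ball 0 1)
  map_zero : Φ 0 = 0
  norm_le : ∀ z ∈ ball (0 : ℂ) 1, ‖z‖ ≤ ‖Φ z‖

/-- The Schwarz quotient `z ↦ z / Φ z`. It is written as the inverse of a divided slope so that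
it takes the value `1 / Φ' 0` at the origin, where `z / Φ z` is the junk value `0 / 0`. -/
noncomputable def schwarzQuotient (Φ : ℂ → ℂ) (z : ℂ) : ℂ := (dslope Φ 0 z)⁻¹

namespace IsModulusExpanding

variable {Φ : ℂ → ℂ} (hΦ : IsModulusExpanding Φ)
include hΦ

theorem differentiableOn_dslope : DifferentiableOn ℂ (dslope Φ 0) (ball 0 1) :=
  (Complex.differentiableOn_dslope (ball_mem_nhds _ one_pos)).2 hΦ.analyticOnNhd.differentiableOn

theorem mul_dslope (z : ℂ) : z * dslope Φ 0 z = Φ z := by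
  simpa [hΦ.map_zero] using sub_smul_dslope Φ 0 z

theorem one_le_norm_dslope {z : ℂ} (hz : z ∈ ball (0 : ℂ) 1) : 1 ≤ ‖dslope Φ 0 z‖ := by
  have hpunctured : ∀ z ∈ ball (0 : ℂ) 1, z ≠ 0 → 1 ≤ ‖dslope Φ 0 z‖ := fun z hz hz0 => by
    have hle := hΦ.norm_le z hz
    rw [← hΦ.mul_dslope, norm_mul] at hle
    exact (le_mul_iff_one_le_right (norm_pos_iff.2 hz0)).1 hle
  rcases ne_or_eq z 0 with hz0 | rfl
  · exact hpunctured z hz hz0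
  · have hcont : ContinuousAt (dslope Φ 0) 0 :=
      hΦ.differentiableOn_dslope.continuousOn.continuousAt (isOpen_ball.mem_nhds hz)
    have hlim : Tendsto (fun z => ‖dslope Φ 0 z‖) (𝓝[≠] 0) (𝓝 ‖dslope Φ 0 0‖) :=
      hcont.norm.tendsto.mono_left nhdsWithin_le_nhds
    refine ge_of_tendsto hlim ?_
    filter_upwards [self_mem_nhdsWithin, mem_nhdsWithin_of_mem_nhds (isOpen_ball.mem_nhds hz)]
      with z hz0 hz using hpunctured z hz hz0

theorem dslope_ne_zero {z : ℂ} (hz : z ∈ ball (0 : ℂ) 1) : dslope Φ 0 z ≠ 0 :=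
  norm_pos_iff.1 (one_pos.trans_le (hΦ.one_le_norm_dslope hz))

theorem differentiableOn_schwarzQuotient : DifferentiableOn ℂ (schwarzQuotient Φ) (ball 0 1) :=
  hΦ.differentiableOn_dslope.inv fun _ => hΦ.dslope_ne_zero

theorem mapsTo_schwarzQuotient : MapsTo (schwarzQuotient Φ) (ball 0 1) (closedBall 0 1) :=
  fun z hz => by
    rw [mem_closedBall_zero_iff, schwarzQuotient, norm_inv]
    exact inv_le_one_of_one_le₀ (hΦ.one_le_norm_dslope hz)

theorem schwarzQuotient_ne_zero {z : ℂ} (hz : z ∈ ball (0 : ℂ) 1) : schwarzQuotient Φ z ≠ 0 :=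
  inv_ne_zero (hΦ.dslope_ne_zero hz)

theorem mul_schwarzQuotient {z : ℂ} (hz : z ∈ ball (0 : ℂ) 1) : Φ z * schwarzQuotient Φ z = z := by
  rw [schwarzQuotient, ← hΦ.mul_dslope, mul_inv_cancel_right₀ (hΦ.dslope_ne_zero hz)]

theorem norm_le_norm_schwarzQuotient {z : ℂ} (hz : z ∈ ball (0 : ℂ) 1) (hΦz : ‖Φ z‖ ≤ 1) :
    ‖z‖ ≤ ‖schwarzQuotient Φ z‖ := by
  conv_lhs => rw [← hΦ.mul_schwarzQuotient hz, norm_mul]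
  exact mul_le_of_le_one_left (norm_nonneg _) hΦz

theorem norm_schwarzQuotient_sub_le {v w : ℂ} (hv : v ∈ ball (0 : ℂ) 1)
    (hw : w ∈ ball (0 : ℂ) 1) (hΦv : ‖Φ v‖ ≤ 1) (hΦw : ‖Φ w‖ ≤ 1) :
    ‖schwarzQuotient Φ v - schwarzQuotient Φ w‖ ≤ ‖v - w‖ :=
  norm_sub_le_of_norm_le_norm hΦ.differentiableOn_schwarzQuotient hΦ.mapsTo_schwarzQuotient hv hw
    (hΦ.norm_le_norm_schwarzQuotient hv hΦv) (hΦ.norm_le_norm_schwarzQuotient hw hΦw)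

theorem mul_norm_sub_le {v w : ℂ} (hv : v ∈ ball (0 : ℂ) 1) (hw : w ∈ ball (0 : ℂ) 1)
    (hΦv : ‖Φ v‖ ≤ 1) (hΦw : ‖Φ w‖ ≤ 1) : (1 - ‖Φ v‖) * ‖v - w‖ ≤ ‖Φ v - Φ w‖ := by
  set h := schwarzQuotient Φ
  have hdecomp : v - w = Φ v * (h v - h w) + (Φ v - Φ w) * h w := by
    linear_combination -hΦ.mul_schwarzQuotient hv + hΦ.mul_schwarzQuotient hw
  have hhw : ‖h w‖ ≤ 1 := mem_closedBall_zero_iff.1 (hΦ.mapsTo_schwarzQuotient hw)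
  have hle : ‖v - w‖ ≤ ‖Φ v‖ * ‖v - w‖ + ‖Φ v - Φ w‖ := calc
    ‖v - w‖ ≤ ‖Φ v‖ * ‖h v - h w‖ + ‖Φ v - Φ w‖ * ‖h w‖ := by
        rw [← norm_mul, ← norm_mul]
        exact hdecomp ▸ norm_add_le _ _
    _ ≤ ‖Φ v‖ * ‖v - w‖ + ‖Φ v - Φ w‖ := by
        gcongr
        · exact hΦ.norm_schwarzQuotient_sub_le hv hw hΦv hΦw
        · exact mul_le_of_le_one_right (norm_nonneg _) hhw
  linarith

theorem injOn : InjOn Φ (ball 0 1 ∩ Φ ⁻¹' ball 0 1) := by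
  rintro v ⟨hv, hΦv⟩ w ⟨hw, hΦw⟩ heq
  rw [mem_preimage, mem_ball_zero_iff] at hΦv hΦw
  have hle := hΦ.mul_norm_sub_le hv hw hΦv.le hΦw.le
  rw [heq, sub_self, norm_zero] at hle
  exact sub_eq_zero.1 (norm_eq_zero.1 (by nlinarith [norm_nonneg (v - w)]))

theorem deriv_ne_zero {w : ℂ} (hw : w ∈ ball (0 : ℂ) 1) (hΦw : ‖Φ w‖ < 1) : deriv Φ w ≠ 0 := by
  have hdiff : DifferentiableAt ℂ Φ w := (hΦ.analyticOnNhd w hw).differentiableAt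
  refine norm_pos_iff.1 ((sub_pos.2 hΦw).trans_le
    (le_norm_of_hasDerivAt_of_le_norm_sub hdiff.hasDerivAt ?_))
  filter_upwards [isOpen_ball.mem_nhds hw, hdiff.continuousAt.norm.eventually_lt_const hΦw]
    with z hz hΦz
  simpa only [norm_sub_rev] using hΦ.mul_norm_sub_le hw hz hΦw.le hΦz.le

theorem isOpen_image {U : Set ℂ} (hU : IsOpen U) (hsub : U ⊆ ball 0 1) : IsOpen (Φ '' U) := by
  rcases hΦ.analyticOnNhd.is_constant_or_isOpen (convex_ball _ _).isPreconnected with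
    ⟨c, hc⟩ | hopen
  · have hhalf : (1 / 2 : ℂ) ∈ ball (0 : ℂ) 1 := by norm_num
    have hle := hΦ.norm_le _ hhalf
    rw [hc _ hhalf, ← hc 0 (mem_ball_self one_pos), hΦ.map_zero] at hle
    norm_num at hle
  · exact hopen U hsub hU

-- The image is relatively closed: a point of modulus `r < 1` has its preimages in `closedBall 0 r`.
theorem surjOn : SurjOn Φ (ball 0 1) (ball 0 1) := by
  refine (convex_ball _ _).isPreconnected.subset_of_closure_inter_subset
    (hΦ.isOpen_image isOpen_ball subset_rfl)
    ⟨0, mem_ball_self one_pos, 0, mem_ball_self one_pos, hΦ.map_zero⟩ ?_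
  rintro z ⟨hz, hzball⟩
  obtain ⟨r, hzr, hr⟩ := exists_between (mem_ball_zero_iff.1 hzball)
  have hsub : closedBall (0 : ℂ) r ⊆ ball 0 1 := closedBall_subset_ball hr
  have hclosed : IsClosed (Φ '' closedBall 0 r) :=
    ((isCompact_closedBall 0 r).image_of_continuousOn
      (hΦ.analyticOnNhd.continuousOn.mono hsub)).isClosed
  have hlocal : ball 0 r ∩ Φ '' ball 0 1 ⊆ Φ '' closedBall 0 r := by
    rintro _ ⟨hΦw, w, hw, rfl⟩
    rw [mem_ball_zero_iff] at hΦw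
    exact ⟨w, mem_closedBall_zero_iff.2 ((hΦ.norm_le w hw).trans hΦw.le), rfl⟩
  have hmem : z ∈ closure (ball 0 r ∩ Φ '' ball 0 1) :=
    isOpen_ball.inter_closure ⟨mem_ball_zero_iff.2 hzr, hz⟩
  exact image_mono hsub (closure_minimal hlocal hclosed hmem)

section RightInverse

variable {ω : ℂ → ℂ} {ζ : ℂ}

variable (hmaps : MapsTo ω (ball 0 1) (ball 0 1)) (hinv : RightInvOn ω Φ (ball 0 1))
include hmaps hinv

theorem mul_schwarzQuotient_rightInverse {x : ℂ} (hx : x ∈ ball (0 : ℂ) 1) :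
    x * schwarzQuotient Φ (ω x) = ω x := by
  have hmul := hΦ.mul_schwarzQuotient (hmaps hx)
  rwa [hinv hx] at hmul

-- By the open mapping theorem, `Φ` attains the values near `Φ p` near `p`, and it is injective.
theorem tendsto_rightInverse {p : ℂ} (hp : p ∈ ball (0 : ℂ) 1) :
    Tendsto ω (𝓝[ball 0 1] (Φ p)) (𝓝 p) := by
  refine (nhds_basis_opens p).tendsto_right_iff.2 fun U ⟨hpU, hU⟩ => ?_
  have himage : Φ '' (U ∩ ball 0 1) ∈ 𝓝 (Φ p) :=
    (hΦ.isOpen_image (hU.inter isOpen_ball) inter_subset_right).mem_nhds ⟨p, ⟨hpU, hp⟩, rfl⟩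
  filter_upwards [self_mem_nhdsWithin, mem_nhdsWithin_of_mem_nhds himage]
  rintro _ hx ⟨u, ⟨huU, hu⟩, rfl⟩
  have hωu : ω (Φ u) = u :=
    hΦ.injOn ⟨hmaps hx, by rwa [mem_preimage, hinv hx]⟩ ⟨hu, hx⟩ (hinv hx)
  rwa [hωu]

theorem continuousOn_rightInverse : ContinuousOn ω (ball 0 1) := fun x hx => by
  simpa only [ContinuousWithinAt, hinv hx] using hΦ.tendsto_rightInverse hmaps hinv (hmaps hx)

theorem differentiableOn_rightInverse : DifferentiableOn ℂ ω (ball 0 1) := fun x hx => by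
  have hnhds : ball (0 : ℂ) 1 ∈ 𝓝 x := isOpen_ball.mem_nhds hx
  have hderiv : deriv Φ (ω x) ≠ 0 :=
    hΦ.deriv_ne_zero (hmaps hx) (by rwa [hinv hx, ← mem_ball_zero_iff])
  refine (HasDerivAt.of_local_left_inverse
    ((hΦ.continuousOn_rightInverse hmaps hinv).continuousAt hnhds)
    (hΦ.analyticOnNhd _ (hmaps hx)).differentiableAt.hasDerivAt hderiv
    ?_).differentiableAt.differentiableWithinAt
  filter_upwards [hnhds] with y hy using hinv hy

theorem preservesHorodiscs_of_mapClusterPt (hζ : ‖ζ‖ = 1) {v : ℂ}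
    (hv : MapClusterPt v (𝓝[ball 0 1] ζ) ω) :
    PreservesHorodiscs (fun z => ζ * schwarzQuotient Φ z) v := by
  intro z hz
  set h := schwarzQuotient Φ
  obtain ⟨U, hU, hωU⟩ := mapClusterPt_iff_ultrafilter.1 hv
  have hUζ : Tendsto id U.toFilter (𝓝 ζ) := hU.trans nhdsWithin_le_nhds
  have hζ0 : ζ ≠ 0 := norm_pos_iff.1 (hζ ▸ one_pos)
  have hball : ∀ᶠ x in U.toFilter, x ∈ ball (0 : ℂ) 1 := hU self_mem_nhdsWithin
  have hquot : Tendsto (fun x => h (ω x)) U.toFilter (𝓝 (v / ζ)) := by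
    refine (hωU.div hUζ hζ0).congr' ?_
    filter_upwards [hball, hUζ.eventually_ne hζ0] with x hx hx0
    exact (eq_div_of_mul_eq hx0 ((mul_comm _ _).trans
      (hΦ.mul_schwarzQuotient_rightInverse hmaps hinv hx))).symm
  have hlim : ‖1 - conj (v / ζ) * h z‖ ^ 2 * (1 - ‖z‖ ^ 2) ≤
      ‖1 - conj v * z‖ ^ 2 * (1 - ‖h z‖ ^ 2) := by
    have hcont : ∀ c : ℂ, Continuous fun u : ℂ => ‖1 - conj u * c‖ ^ 2 := fun c => by fun_prop
    refine le_of_tendsto_of_tendsto ((((hcont (h z)).tendsto _).comp hquot).mul_const _)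
      ((((hcont z).tendsto _).comp hωU).mul_const _) ?_
    filter_upwards [hball] with x hx
    exact norm_one_sub_conj_mul_sq_le_of_norm_le_norm hΦ.differentiableOn_schwarzQuotient
      hΦ.mapsTo_schwarzQuotient (hmaps hx) hz (hΦ.norm_le_norm_schwarzQuotient (hmaps hx)
        (by rw [hinv hx]; exact (mem_ball_zero_iff.1 hx).le))
  have hconj : conj (v / ζ) = conj v * ζ := by
    rw [map_div₀, ← inv_eq_conj hζ, div_inv_eq_mul]
  simpa only [hconj, mul_assoc, norm_mul, hζ, one_mul] using hlim

theorem eq_of_mapClusterPt (hζ : ‖ζ‖ = 1) {v w : ℂ}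
    (hv : MapClusterPt v (𝓝[ball 0 1] ζ) ω) (hw : MapClusterPt w (𝓝[ball 0 1] ζ) ω) : v = w := by
  by_contra hvw
  obtain ⟨p, hp, hfix⟩ := (hΦ.preservesHorodiscs_of_mapClusterPt hmaps hinv hζ hv).exists_fixedPoint
    (hΦ.preservesHorodiscs_of_mapClusterPt hmaps hinv hζ hw) hvw
  have hΦp : Φ p = ζ := mul_right_cancel₀ (hΦ.schwarzQuotient_ne_zero hp)
    ((hΦ.mul_schwarzQuotient hp).trans hfix.symm)
  have hlim : Tendsto ω (𝓝[ball 0 1] ζ) (𝓝 p) := hΦp ▸ hΦ.tendsto_rightInverse hmaps hinv hp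
  have heq : ∀ u, MapClusterPt u (𝓝[ball 0 1] ζ) ω → u = p := fun u hu =>
    (hu.neBot.mono (inf_le_inf_left _ hlim) : (𝓝 u ⊓ 𝓝 p).NeBot) |> eq_of_nhds_neBot
  exact hvw ((heq v hv).trans (heq w hw).symm)

theorem exists_tendsto_rightInverse (hζ : ζ ∈ closedBall (0 : ℂ) 1) :
    ∃ v, Tendsto ω (𝓝[ball 0 1] ζ) (𝓝 v) := by
  rcases (mem_closedBall_zero_iff.1 hζ).lt_or_eq with hlt | heq
  · exact ⟨ω ζ, hΦ.continuousOn_rightInverse hmaps hinv ζ (mem_ball_zero_iff.2 hlt)⟩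
  · have : (𝓝[ball 0 1] ζ).NeBot :=
      mem_closure_iff_nhdsWithin_neBot.1 (closure_ball (0 : ℂ) one_ne_zero ▸ hζ)
    have hcompact : ∀ᶠ x in 𝓝[ball 0 1] ζ, ω x ∈ closedBall (0 : ℂ) 1 :=
      eventually_nhdsWithin_of_forall fun x hx => ball_subset_closedBall (hmaps hx)
    obtain ⟨v, -, hv⟩ := (isCompact_closedBall (0 : ℂ) 1).exists_mapClusterPt_of_frequently
      hcompact.frequently
    exact ⟨v, (isCompact_closedBall 0 1).tendsto_nhds_of_unique_mapClusterPt hcompact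
      fun w _ hw => hΦ.eq_of_mapClusterPt hmaps hinv heq hw hv⟩

variable (hcont : ContinuousOn ω (closedBall 0 1))
include hcont

theorem norm_mul_sub_mul_le {x y : ℂ} (hx : x ∈ closedBall (0 : ℂ) 1)
    (hy : y ∈ closedBall (0 : ℂ) 1) :
    ‖y * ω x - x * ω y‖ ≤ ‖x‖ * ‖y‖ * ‖ω x - ω y‖ := by
  have hball : ∀ x ∈ ball (0 : ℂ) 1, ∀ y ∈ ball (0 : ℂ) 1,
      ‖y * ω x - x * ω y‖ ≤ ‖x‖ * ‖y‖ * ‖ω x - ω y‖ := fun x hx y hy => by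
    have hΦω : ∀ {z}, z ∈ ball (0 : ℂ) 1 → ‖Φ (ω z)‖ ≤ 1 := fun hz => by
      rw [hinv hz]
      exact (mem_ball_zero_iff.1 hz).le
    have hfactor : y * ω x - x * ω y =
        x * y * (schwarzQuotient Φ (ω x) - schwarzQuotient Φ (ω y)) := by
      linear_combination -y * hΦ.mul_schwarzQuotient_rightInverse hmaps hinv hx +
        x * hΦ.mul_schwarzQuotient_rightInverse hmaps hinv hy
    rw [hfactor, norm_mul, norm_mul]
    gcongr
    exact hΦ.norm_schwarzQuotient_sub_le (hmaps hx) (hmaps hy) (hΦω hx) (hΦω hy)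
  have hclosure := closure_ball (0 : ℂ) one_ne_zero
  rw [← hclosure] at hcont hx hy
  refine le_on_closure (s := ball 0 1) (fun x hx => le_on_closure (s := ball 0 1)
    (fun y hy => hball x hx y hy) ?_ ?_ hy) ?_ ?_ hx <;> fun_prop

theorem injOn_rightInverse : InjOn ω (closedBall 0 1) := by
  intro x hx y hy hxy
  have hle := hΦ.norm_mul_sub_mul_le hmaps hinv hcont hx hy
  rw [hxy, ← sub_mul, sub_self, norm_zero, mul_zero, norm_le_zero_iff, mul_eq_zero,
    sub_eq_zero] at hle
  rcases hle with heq | hzero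
  · exact heq.symm
  · have hΦω : ∀ z ∈ closedBall (0 : ℂ) 1, ω z = 0 → Φ (ω z) = z := fun z hz hωz =>
      apply_eq_of_rightInvOn_of_mem_closure hinv (closure_ball (0 : ℂ) one_ne_zero ▸ hz)
        ((hcont z hz).mono ball_subset_closedBall)
        (hΦ.analyticOnNhd _ (by simp [hωz])).continuousAt
    rw [← hΦω x hx (hxy.trans hzero), hxy, hΦω y hy hzero]

theorem isGlobalInverse_of_continuousOn : IsGlobalInverse Φ ω := by
  have hclosure := closure_ball (0 : ℂ) one_ne_zero
  refine ⟨hcont, hΦ.injOn_rightInverse hmaps hinv hcont, ?_, hmaps,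
    (hΦ.differentiableOn_rightInverse hmaps hinv).analyticOnNhd isOpen_ball, hinv⟩
  simpa only [hclosure] using hmaps.closure_of_continuousOn (hclosure.symm ▸ hcont)

end RightInverse

theorem exists_isGlobalInverse : ∃ ω, IsGlobalInverse Φ ω := by
  set ω₀ := Function.invFunOn Φ (ball 0 1)
  have hmaps : MapsTo ω₀ (ball 0 1) (ball 0 1) := hΦ.surjOn.mapsTo_invFunOn
  have hinv : RightInvOn ω₀ Φ (ball 0 1) := hΦ.surjOn.rightInvOn_invFunOn
  have hext : EqOn (extendFrom (ball 0 1) ω₀) ω₀ (ball 0 1) :=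
    extendFrom_extends (hΦ.continuousOn_rightInverse hmaps hinv)
  exact ⟨extendFrom (ball 0 1) ω₀, hΦ.isGlobalInverse_of_continuousOn (hmaps.congr hext.symm)
    (hinv.congr_left hext.symm)
    (continuousOn_extendFrom (closure_ball (0 : ℂ) one_ne_zero).ge
      fun _ => hΦ.exists_tendsto_rightInverse hmaps hinv)⟩

theorem eqOn_of_isGlobalInverse {ω ω' : ℂ → ℂ} (hω : IsGlobalInverse Φ ω)
    (hω' : IsGlobalInverse Φ ω') : EqOn ω' ω (closedBall 0 1) := by
  obtain ⟨hcont, -, -, hmaps, -, hinv⟩ := hω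
  obtain ⟨hcont', -, -, hmaps', -, hinv'⟩ := hω'
  have hball : EqOn ω' ω (ball 0 1) := fun x hx =>
    hΦ.injOn ⟨hmaps' hx, by rwa [mem_preimage, hinv' x hx]⟩
      ⟨hmaps hx, by rwa [mem_preimage, hinv x hx]⟩ ((hinv' x hx).trans (hinv x hx).symm)
  exact hball.of_subset_closure hcont' hcont ball_subset_closedBall
    (closure_ball (0 : ℂ) one_ne_zero).ge

end IsModulusExpanding

/-- Global inversion (Proposition 2.3 (1)): if `Φ` is analytic on the open unit disc
with `Φ(0) = 0` and `|Φ(z)| ≥ |z|` on `𝔻`, then there is a unique continuous injective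
map `ω : 𝔻̄ → 𝔻̄`, analytic in `𝔻` with `ω(𝔻) ⊆ 𝔻`, such that `Φ(ω(z)) = z` on `𝔻`. -/
theorem global_inverse_exists_unique (Φ : ℂ → ℂ)
    (hΦ : AnalyticOnNhd ℂ Φ (ball 0 1)) (hΦ0 : Φ 0 = 0)
    (hΦge : ∀ z ∈ ball (0 : ℂ) 1, ‖z‖ ≤ ‖Φ z‖) :
    ∃ ω : ℂ → ℂ, IsGlobalInverse Φ ω ∧
      ∀ ω' : ℂ → ℂ, IsGlobalInverse Φ ω' → Set.EqOn ω' ω (closedBall 0 1) := by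
  have hexp : IsModulusExpanding Φ := ⟨hΦ, hΦ0, hΦge⟩
  obtain ⟨ω, hω⟩ := hexp.exists_isGlobalInverse
  exact ⟨ω, hω, fun _ => hexp.eqOn_of_isGlobalInverse hω⟩
end

section
/- The range ω(𝔻) satisfies ω(𝔻) = {z ∈ 𝔻 : |Φ(z)| < 1}, the topological boundary of ω(𝔻) equals ω(𝕋), and a point z ∈ 𝔻 lies on the curve ω(𝕋) if and only if |Φ(z)| = 1. -/
open Complex Set Metric

/-!
Both `ω(𝔻)` and its complement in `{z | ‖Φ z‖ < 1}` are open: the first because a continuous right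
inverse of an analytic function is analytic and nowhere locally constant, the second because
`Φ (ω ξ) = ξ` persists at every `ξ ∈ 𝕋` for which `ω ξ` lies in the domain of `Φ`. The sublevel sets
of `‖Φ‖` below `1` are compact, so the minimum modulus principle forces a zero of `Φ` in that
complement if it is nonempty. But the only zero of `Φ` is `ω 0`, which lies in `ω(𝔻)`. Points with
`‖Φ z‖ = 1` are limits of `ω(𝔻)` because `Φ` is open, hence lie on `ω(𝕋)`.
-/

section Topology

open Filter Topology

variable {X Y : Type*} [TopologicalSpace X] [TopologicalSpace Y] {f : X → Y} {g : Y → X} {s : Set X}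

lemma leftInverse_of_mem_closure [T2Space X] (hinv : LeftInvOn g f s) {x : X} (hx : x ∈ closure s)
    (hf : ContinuousWithinAt f s x) (hg : ContinuousAt g (f x)) : g (f x) = x := by
  have : (𝓝[s] x).NeBot := mem_closure_iff_nhdsWithin_neBot.1 hx
  have hgf : Tendsto (g ∘ f) (𝓝[s] x) (𝓝 (g (f x))) := hg.tendsto.comp hf
  exact tendsto_nhds_unique (hgf.congr' (eventually_mem_nhdsWithin.mono hinv)) nhdsWithin_le_nhds

lemma frontier_image_of_leftInvOn [T2Space X] [T2Space Y] (hs : IsOpen s)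
    (hsc : IsCompact (closure s)) (hfs : IsOpen (f '' s)) (hf : ContinuousOn f (closure s))
    (hg : ∀ x ∈ s, ContinuousAt g (f x)) (hinv : LeftInvOn g f s) :
    frontier (f '' s) = f '' frontier s := by
  have hdisj : ∀ x ∈ closure s, f x ∈ f '' s → x ∈ s := by
    rintro x hx ⟨w, hw, hwx⟩
    have hgx : g (f x) = x :=
      leftInverse_of_mem_closure hinv hx ((hf x hx).mono subset_closure) (hwx ▸ hg w hw)
    rwa [← hgx, ← hwx, hinv hw]
  rw [hfs.frontier_eq, hs.frontier_eq, ← image_closure_of_isCompact hsc hf]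
  ext y
  constructor
  · rintro ⟨⟨x, hx, rfl⟩, hxs⟩
    exact ⟨x, ⟨hx, fun h => hxs (mem_image_of_mem f h)⟩, rfl⟩
  · rintro ⟨x, ⟨hx, hxs⟩, rfl⟩
    exact ⟨mem_image_of_mem f hx, fun h => hxs (hdisj x hx h)⟩

lemma mem_closure_preimage_of_nhds_le_map {t : Set Y} {x : X} (hf : 𝓝 (f x) ≤ map f (𝓝 x))
    (hx : f x ∈ closure t) : x ∈ closure (f ⁻¹' t) :=
  (frequently_map.1 ((mem_closure_iff_frequently.1 hx).filter_mono hf)).mem_closure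

end Topology

section NormBound

variable {E F : Type*} [NormedAddCommGroup E] [SeminormedAddCommGroup F] {f : E → F}

lemma isCompact_setOf_norm_map_le [ProperSpace E] {r R : ℝ} (hf : ContinuousOn f (ball 0 R))
    (hle : ∀ x ∈ ball 0 R, ‖x‖ ≤ ‖f x‖) (hr : r < R) :
    IsCompact {x ∈ ball 0 R | ‖f x‖ ≤ r} := by
  have hsub : closedBall (0 : E) r ⊆ ball 0 R := closedBall_subset_ball hr
  have heq : {x ∈ ball 0 R | ‖f x‖ ≤ r} = closedBall 0 r ∩ f ⁻¹' closedBall 0 r := by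
    ext x
    simp only [mem_ofPred_eq, mem_inter_iff, mem_preimage, mem_closedBall_zero_iff]
    exact ⟨fun hx => ⟨(hle x hx.1).trans hx.2, hx.2⟩,
      fun hx => ⟨hsub (mem_closedBall_zero_iff.2 hx.1), hx.2⟩⟩
  rw [heq]
  exact (isCompact_closedBall 0 r).of_isClosed_subset
    ((hf.mono hsub).preimage_isClosed_of_isClosed isClosed_closedBall isClosed_closedBall)
    inter_subset_left

lemma eq_of_map_eq_zero_of_norm_le {s : Set E} (hle : ∀ x ∈ s, ‖x‖ ≤ ‖f x‖) {x y : E}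
    (hx : x ∈ s) (hy : y ∈ s) (hfx : f x = 0) (hfy : f y = 0) : x = y := by
  have hzero : ∀ w ∈ s, f w = 0 → w = 0 := fun w hw h => by simpa [h] using hle w hw
  rw [hzero x hx hfx, hzero y hy hfy]

end NormBound

section Holomorphic

open Filter Topology

variable {E : Type*} [NormedAddCommGroup E] [NormedSpace ℂ E]

/-- Otherwise `1 / f` violates the maximum modulus principle on `{y ∈ U | ‖f y‖ < r}`. -/
lemma exists_eq_zero_of_isClosed_sublevel [Nontrivial E] {f : E → ℂ} {U : Set E} {r : ℝ}
    (hU : IsOpen U) (hf : DifferentiableOn ℂ f U) (hclosed : IsClosed {y ∈ U | ‖f y‖ ≤ r})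
    (hbdd : Bornology.IsBounded {y ∈ U | ‖f y‖ ≤ r}) {x : E} (hx : x ∈ U) (hxr : ‖f x‖ < r) :
    ∃ y ∈ U, f y = 0 := by
  by_contra! hne
  set V : Set E := {y ∈ U | ‖f y‖ < r}
  have hVK : V ⊆ {y ∈ U | ‖f y‖ ≤ r} := fun y hy => ⟨hy.1, hy.2.le⟩
  have hVo : IsOpen V := hf.continuousOn.norm.isOpen_inter_preimage hU isOpen_Iio
  have hclV : closure V ⊆ {y ∈ U | ‖f y‖ ≤ r} := closure_minimal hVK hclosed
  have hdiff : DiffContOnCl ℂ (fun y => (f y)⁻¹) V :=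
    ((hf.inv hne).mono fun y hy => (hclV hy).1).diffContOnCl
  have hr : 0 < r := (norm_nonneg _).trans_lt hxr
  have hfrontier : ∀ y ∈ frontier V, ‖(f y)⁻¹‖ ≤ r⁻¹ := by
    intro y hy
    rw [hVo.frontier_eq] at hy
    have hry : r ≤ ‖f y‖ := not_lt.1 fun h => hy.2 ⟨(hclV hy.1).1, h⟩
    rw [norm_inv]
    exact inv_anti₀ hr hry
  have hmax : ‖(f x)⁻¹‖ ≤ r⁻¹ := norm_le_of_forall_mem_frontier_norm_le (hbdd.subset hVK) hdiff
    hfrontier (subset_closure ⟨hx, hxr⟩)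
  rw [norm_inv, inv_le_inv₀ (norm_pos_iff.2 (hne x hx)) hr] at hmax
  exact hxr.not_ge hmax

lemma eventually_eq_of_eventually_deriv_eq_zero {f : ℂ → ℂ} {z : ℂ} (hf : AnalyticAt ℂ f z)
    (hderiv : ∀ᶠ y in 𝓝 z, deriv f y = 0) : ∀ᶠ y in 𝓝 z, f y = f z := by
  obtain ⟨ε, hε, hball⟩ :=
    eventually_nhds_iff_ball.1 (hf.eventually_analyticAt.and hderiv)
  filter_upwards [ball_mem_nhds z hε] with y hy
  exact isOpen_ball.is_const_of_deriv_eq_zero (convex_ball z ε).isPreconnected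
    (fun u hu => (hball u hu).1.differentiableAt.differentiableWithinAt)
    (fun u hu => (hball u hu).2) hy (mem_ball_self hε)

/-- The critical points of `Φ` are isolated and `ω` is injective, so `ω` is differentiable in a
punctured neighbourhood of `w`, and the singularity at `w` is removable by continuity. -/
lemma analyticAt_of_eventually_leftInverse {Φ ω : ℂ → ℂ} {w : ℂ} (hΦ : AnalyticAt ℂ Φ (ω w))
    (hω : ∀ᶠ v in 𝓝 w, ContinuousAt ω v) (hinv : ∀ᶠ v in 𝓝 w, Φ (ω v) = v) :
    AnalyticAt ℂ ω w := by
  have hωw : ContinuousAt ω w := hω.self_of_nhds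
  have hΦw : Φ (ω w) = w := hinv.self_of_nhds
  have hcrit : ∀ᶠ z in 𝓝[≠] ω w, deriv Φ z ≠ 0 := by
    refine hΦ.deriv.eventually_eq_zero_or_eventually_ne_zero.resolve_left fun hzero => ?_
    have hconst := hωw.eventually (eventually_eq_of_eventually_deriv_eq_zero hΦ hzero)
    refine infinite_of_mem_nhds w ?_ (finite_singleton w)
    filter_upwards [hconst, hinv] with v hv hΦv
    exact hΦv.symm.trans (hv.trans hΦw)
  refine analyticAt_of_differentiable_on_punctured_nhds_of_continuousAt ?_ hωw
  rw [eventually_nhdsWithin_iff] at hcrit ⊢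
  filter_upwards [hωw.eventually hcrit, hωw.eventually hΦ.eventually_analyticAt, hω,
    hinv.eventually_nhds] with v hderiv hΦv hωv hinvv hvw
  have hne : ω v ≠ ω w := fun h => hvw <| calc
    v = Φ (ω v) := hinvv.self_of_nhds.symm
    _ = Φ (ω w) := by rw [h]
    _ = w := hΦw
  exact (hΦv.differentiableAt.hasDerivAt.of_local_left_inverse hωv (hderiv hne)
    hinvv).differentiableAt

lemma isOpen_image_of_leftInvOn {Φ ω : ℂ → ℂ} {s : Set ℂ} (hs : IsOpen s)
    (hω : ContinuousOn ω s) (hΦ : ∀ w ∈ s, AnalyticAt ℂ Φ (ω w)) (hinv : LeftInvOn Φ ω s) :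
    IsOpen (ω '' s) := by
  refine isOpen_iff_mem_nhds.2 (forall_mem_image.2 fun w hw => ?_)
  have hsw : s ∈ 𝓝 w := hs.mem_nhds hw
  have hωw : AnalyticAt ℂ ω w := analyticAt_of_eventually_leftInverse (hΦ w hw)
    (mem_of_superset hsw fun v hv => hω.continuousAt (hs.mem_nhds hv)) (mem_of_superset hsw hinv)
  refine hωw.eventually_constant_or_nhds_le_map_nhds.resolve_left (fun hconst => ?_)
    (image_mem_map hsw)
  refine infinite_of_mem_nhds w ?_ (finite_singleton w)
  filter_upwards [hconst, hsw] with v hv hvs using hinv.injOn hvs hw hv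

lemma nhds_le_map_nhds_of_leftInvOn {Φ : E → ℂ} {ω : ℂ → E} {D : Set E} {s : Set ℂ}
    (hD : IsPreconnected D) (hΦ : AnalyticOnNhd ℂ Φ D) (hs : s.Nontrivial) (hω : MapsTo ω s D)
    (hinv : LeftInvOn Φ ω s) {z : E} (hz : z ∈ D) : 𝓝 (Φ z) ≤ map Φ (𝓝 z) := by
  refine (hΦ z hz).eventually_constant_or_nhds_le_map_nhds.resolve_left fun hlocal => ?_
  have hconst : EqOn Φ (fun _ => Φ z) D :=
    hΦ.eqOn_of_preconnected_of_eventuallyEq analyticOnNhd_const hD hz hlocal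
  obtain ⟨v, hv, w, hw, hvw⟩ := hs
  exact hvw (by rw [← hinv hv, ← hinv hw, hconst (hω hv), hconst (hω hw)])

end Holomorphic

section UnitDisc

variable {D : Set ℂ} {Φ ω : ℂ → ℂ}

lemma leftInvOn_closedBall_inter_preimage (hΦ : ContinuousOn Φ D) (hD : IsOpen D)
    (hωc : ContinuousOn ω (closedBall 0 1)) (hinv : LeftInvOn Φ ω (ball 0 1)) :
    LeftInvOn Φ ω (closedBall 0 1 ∩ ω ⁻¹' D) := fun ξ ⟨hξ, hξD⟩ =>
  leftInverse_of_mem_closure hinv (by rwa [closure_ball 0 one_ne_zero])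
    ((hωc ξ hξ).mono ball_subset_closedBall) (hΦ.continuousAt (hD.mem_nhds hξD))

lemma closure_image_ball (hωc : ContinuousOn ω (closedBall 0 1)) :
    closure (ω '' ball 0 1) = ω '' closedBall 0 1 := by
  rw [← closure_ball (0 : ℂ) one_ne_zero] at hωc ⊢
  exact (image_closure_of_isCompact isBounded_ball.isCompact_closure hωc).symm

lemma image_ball_eq_setOf_norm_lt (hD : IsOpen D) (hΦ : AnalyticOnNhd ℂ Φ D)
    (hcompact : ∀ r < 1, IsCompact {z ∈ D | ‖Φ z‖ ≤ r}) (hzero : ∀ z ∈ D, Φ z = 0 → z = ω 0)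
    (hωc : ContinuousOn ω (closedBall 0 1)) (hω : MapsTo ω (ball 0 1) D)
    (hinv : LeftInvOn Φ ω (ball 0 1)) :
    ω '' ball 0 1 = {z ∈ D | ‖Φ z‖ < 1} := by
  set W : Set ℂ := ω '' ball 0 1 with hW
  have hWo : IsOpen W := isOpen_image_of_leftInvOn isOpen_ball
    (hωc.mono ball_subset_closedBall) (fun w hw => hΦ _ (hω hw)) hinv
  have hclosure : ∀ z ∈ D, ‖Φ z‖ < 1 → z ∈ closure W → z ∈ W := by
    intro z hz hz1 hzW
    rw [hW, closure_image_ball hωc] at hzW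
    obtain ⟨ξ, hξ, rfl⟩ := hzW
    rw [leftInvOn_closedBall_inter_preimage hΦ.continuousOn hD hωc hinv ⟨hξ, hz⟩] at hz1
    exact mem_image_of_mem ω (mem_ball_zero_iff.2 hz1)
  refine Subset.antisymm ?_ fun z ⟨hz, hz1⟩ => ?_
  · rintro _ ⟨w, hw, rfl⟩
    exact ⟨hω hw, by simpa only [hinv hw, mem_ball_zero_iff] using hw⟩
  · by_contra hzW
    obtain ⟨r, hzr, hr⟩ := exists_between hz1
    have hsublevel : {y ∈ D \ closure W | ‖Φ y‖ ≤ r} = {y ∈ D | ‖Φ y‖ ≤ r} \ W := by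
      ext y
      exact ⟨fun ⟨⟨hy, hyW⟩, hyr⟩ => ⟨⟨hy, hyr⟩, fun h => hyW (subset_closure h)⟩,
        fun ⟨⟨hy, hyr⟩, hyW⟩ => ⟨⟨hy, fun h => hyW (hclosure y hy (hyr.trans_lt hr) h)⟩, hyr⟩⟩
    have hK : IsCompact {y ∈ D \ closure W | ‖Φ y‖ ≤ r} := hsublevel ▸ (hcompact r hr).diff hWo
    obtain ⟨y, ⟨hy, hyW⟩, hy0⟩ := exists_eq_zero_of_isClosed_sublevel (hD.sdiff isClosed_closure)
      (hΦ.differentiableOn.mono sdiff_subset) hK.isClosed hK.isBounded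
      ⟨hz, fun h => hzW (hclosure z hz hz1 h)⟩ hzr
    rw [hzero y hy hy0] at hyW
    exact hyW (subset_closure (mem_image_of_mem ω (mem_ball_self one_pos)))

lemma mem_image_sphere_iff_norm_eq_one (hD : IsOpen D) (hDc : IsPreconnected D)
    (hΦ : AnalyticOnNhd ℂ Φ D) (hωc : ContinuousOn ω (closedBall 0 1))
    (hω : MapsTo ω (ball 0 1) D) (hinv : LeftInvOn Φ ω (ball 0 1))
    (hrange : ω '' ball 0 1 = {z ∈ D | ‖Φ z‖ < 1}) {z : ℂ} (hz : z ∈ D) :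
    z ∈ ω '' sphere 0 1 ↔ ‖Φ z‖ = 1 := by
  have hext := leftInvOn_closedBall_inter_preimage hΦ.continuousOn hD hωc hinv
  constructor
  · rintro ⟨ξ, hξ, rfl⟩
    rw [hext ⟨sphere_subset_closedBall hξ, hz⟩, mem_sphere_zero_iff_norm.1 hξ]
  · intro hz1
    have hopen := nhds_le_map_nhds_of_leftInvOn hDc hΦ
      (infinite_of_mem_nhds (0 : ℂ) (ball_mem_nhds 0 one_pos)).nontrivial hω hinv hz
    have hmem : z ∈ closure (Φ ⁻¹' ball 0 1) := mem_closure_preimage_of_nhds_le_map hopen <| by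
      rw [closure_ball 0 one_ne_zero, mem_closedBall_zero_iff, hz1]
    have hsub : D ∩ Φ ⁻¹' ball 0 1 ⊆ ω '' ball 0 1 := fun y ⟨hy, hy1⟩ =>
      hrange ▸ ⟨hy, mem_ball_zero_iff.1 hy1⟩
    have hzW : z ∈ closure (ω '' ball 0 1) := closure_mono hsub (hD.inter_closure ⟨hz, hmem⟩)
    rw [closure_image_ball hωc] at hzW
    obtain ⟨ξ, hξ, rfl⟩ := hzW
    rw [hext ⟨hξ, hz⟩] at hz1
    exact mem_image_of_mem ω (mem_sphere_zero_iff_norm.2 hz1)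

theorem global_inverse_range_general (hD : IsOpen D) (hDc : IsPreconnected D)
    (hΦ : AnalyticOnNhd ℂ Φ D) (hcompact : ∀ r < 1, IsCompact {z ∈ D | ‖Φ z‖ ≤ r})
    (hzero : ∀ z ∈ D, Φ z = 0 → z = ω 0) (hωc : ContinuousOn ω (closedBall 0 1))
    (hω : MapsTo ω (ball 0 1) D) (hinv : LeftInvOn Φ ω (ball 0 1)) :
    ω '' ball 0 1 = {z ∈ D | ‖Φ z‖ < 1} ∧
    frontier (ω '' ball 0 1) = ω '' sphere 0 1 ∧
    ∀ z ∈ D, (z ∈ ω '' sphere 0 1 ↔ ‖Φ z‖ = 1) := by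
  have hrange := image_ball_eq_setOf_norm_lt hD hΦ hcompact hzero hωc hω hinv
  have hopen : IsOpen (ω '' ball 0 1) := isOpen_image_of_leftInvOn isOpen_ball
    (hωc.mono ball_subset_closedBall) (fun w hw => hΦ _ (hω hw)) hinv
  refine ⟨hrange, ?_, fun z hz => mem_image_sphere_iff_norm_eq_one hD hDc hΦ hωc hω hinv hrange hz⟩
  rw [← frontier_ball (0 : ℂ) one_ne_zero]
  exact frontier_image_of_leftInvOn isOpen_ball isBounded_ball.isCompact_closure hopen
    (by rwa [closure_ball 0 one_ne_zero]) (fun w hw => (hΦ _ (hω hw)).continuousAt) hinv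

end UnitDisc

/-- Global inversion (Proposition 2.3 (2),(3)): if `Φ` is analytic on the open unit
disc with `Φ(0) = 0` and `|Φ(z)| ≥ |z|`, and `ω` is the global inverse of `Φ`
(continuous and one-to-one on `𝔻̄`, `ω(𝔻) ⊆ 𝔻`, analytic in `𝔻`, `Φ(ω(z)) = z` on `𝔻`),
then `ω(𝔻) = {z ∈ 𝔻 : |Φ(z)| < 1}`, the topological boundary of `ω(𝔻)` is the curve
`ω(𝕋)`, and a point `z ∈ 𝔻` lies on `ω(𝕋)` if and only if `|Φ(z)| = 1`. -/
theorem global_inverse_range (Φ ω : ℂ → ℂ)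
    (hΦ : AnalyticOnNhd ℂ Φ (ball 0 1)) (hΦ0 : Φ 0 = 0)
    (hΦge : ∀ z ∈ ball (0 : ℂ) 1, ‖z‖ ≤ ‖Φ z‖)
    (hωc : ContinuousOn ω (closedBall 0 1)) (hωinj : Set.InjOn ω (closedBall 0 1))
    (hωmapsc : Set.MapsTo ω (closedBall 0 1) (closedBall 0 1))
    (hωmaps : Set.MapsTo ω (ball 0 1) (ball 0 1))
    (hωan : AnalyticOnNhd ℂ ω (ball 0 1))
    (hinv : ∀ z ∈ ball (0 : ℂ) 1, Φ (ω z) = z) :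
    ω '' (ball 0 1) = {z ∈ ball (0 : ℂ) 1 | ‖Φ z‖ < 1} ∧
    frontier (ω '' (ball 0 1)) = ω '' (sphere 0 1) ∧
    ∀ z ∈ ball (0 : ℂ) 1, (z ∈ ω '' (sphere 0 1) ↔ ‖Φ z‖ = 1) :=
  global_inverse_range_general isOpen_ball (convex_ball 0 1).isPreconnected hΦ
    (fun _ hr => isCompact_setOf_norm_map_le hΦ.continuousOn hΦge hr)
    (fun _ hz hz0 => eq_of_map_eq_zero_of_norm_le hΦge hz (hωmaps (mem_ball_self one_pos)) hz0
      (hinv 0 (mem_ball_self one_pos))) hωc hωmaps hinv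
end

section
/- (i) If ξ ∈ ω(𝔻̄) ∩ 𝕋, then the entire radius {rξ : 0 ≤ r < 1} is contained in ω(𝔻). (ii) If ξ ∈ 𝕋 is such that |ω(ξ)| < 1, then ω extends analytically to a neighborhood of ξ; that is, there exist an open set U ⊆ ℂ containing ξ and an analytic function g on U that agrees with ω on U ∩ 𝔻̄. -/
open Complex Set Metric

/-!
By the Schwarz–Pick inequality on a half-plane, an analytic function `h` on the unit disc with
`1 ≤ ‖h‖` satisfies `‖h' / h‖ (1 - ‖z‖²) ≤ 2 log ‖h‖`. Applied to `h = Φ z / z` and combined with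
`2 t log t⁻¹ < 1 - t²`, this says that `(1 + t) / (1 - t) * log ‖Φ (t ξ)‖` is strictly increasing
along each radius. Consequently `{z | ‖Φ z‖ < 1}`, which is the image of `ω`, is strictly
star-shaped about `0`, and `Φ' ≠ 0` wherever `‖Φ‖ ≤ 1`, so that the local inverses of `Φ` extend `ω`
across the unit circle.
-/

open Filter
open scoped Topology ComplexConjugate

section DiscShift

variable {a w : ℂ}

/-- The Möbius automorphism `w ↦ (w + a) / (1 + a̅ w)` of the unit disc taking `0` to `a`, used to
transport estimates at the centre of the disc to other points. -/
noncomputable def discShift (a w : ℂ) : ℂ := (w + a) / (1 + conj a * w)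

@[simp]
lemma discShift_zero_right (a : ℂ) : discShift a 0 = a := by simp [discShift]

lemma one_add_conj_mul_ne_zero (h : ‖a‖ * ‖w‖ < 1) : 1 + conj a * w ≠ 0 := by
  intro h0
  have hnorm : ‖conj a * w‖ = ‖(-1 : ℂ)‖ := by rw [eq_neg_of_add_eq_zero_right h0]
  rw [norm_mul, RCLike.norm_conj, norm_neg, norm_one] at hnorm
  exact h.ne hnorm

lemma sq_norm_one_add_conj_mul_sub_sq_norm_add (a w : ℂ) :
    ‖1 + conj a * w‖ ^ 2 - ‖w + a‖ ^ 2 = (1 - ‖a‖ ^ 2) * (1 - ‖w‖ ^ 2) := by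
  simp only [Complex.sq_norm, normSq_apply, add_re, add_im, mul_re, mul_im, conj_re, conj_im,
    one_re, one_im]
  ring

lemma mapsTo_discShift_ball (ha : ‖a‖ < 1) : MapsTo (discShift a) (ball 0 1) (ball 0 1) := by
  intro w hw
  rw [mem_ball_zero_iff] at hw ⊢
  have hne := one_add_conj_mul_ne_zero <|
    mul_lt_one_of_nonneg_of_lt_one_left (norm_nonneg a) ha hw.le
  rw [discShift, norm_div, div_lt_one (norm_pos_iff.2 hne)]
  have hpos : 0 < (1 - ‖a‖ ^ 2) * (1 - ‖w‖ ^ 2) :=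
    mul_pos (by nlinarith [norm_nonneg a]) (by nlinarith [norm_nonneg w])
  rw [← sq_norm_one_add_conj_mul_sub_sq_norm_add, sub_pos] at hpos
  exact lt_of_pow_lt_pow_left₀ 2 (norm_nonneg _) hpos

lemma differentiableOn_discShift_ball (ha : ‖a‖ < 1) :
    DifferentiableOn ℂ (discShift a) (ball 0 1) :=
  DifferentiableOn.fun_div (by fun_prop) (by fun_prop) fun w hw => one_add_conj_mul_ne_zero <|
    mul_lt_one_of_nonneg_of_lt_one_left (norm_nonneg a) ha (mem_ball_zero_iff.1 hw).le

lemma hasDerivAt_discShift_zero (a : ℂ) : HasDerivAt (discShift a) ((1 - ‖a‖ ^ 2 : ℝ) : ℂ) 0 := by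
  have hnum : HasDerivAt (fun w : ℂ => w + a) 1 0 := (hasDerivAt_id _).add_const _
  have hden : HasDerivAt (fun w : ℂ => 1 + conj a * w) (conj a * 1) 0 :=
    ((hasDerivAt_id _).const_mul _).const_add _
  refine (hnum.fun_div hden (by simp)).congr_deriv ?_
  simp [mul_conj, ← Complex.sq_norm, mul_comm]

end DiscShift

section SchwarzPick

variable {F h : ℂ → ℂ} {c z : ℂ} {R : ℝ}

lemma norm_sub_le_norm_add_conj {z w : ℂ} (hz : 0 ≤ z.re) (hw : 0 ≤ w.re) :
    ‖z - w‖ ≤ ‖z + conj w‖ := by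
  refine le_of_sq_le_sq ?_ (norm_nonneg _)
  simp only [Complex.sq_norm, normSq_apply, add_re, add_im, sub_re, sub_im, conj_re, conj_im]
  nlinarith [mul_nonneg hz hw]

/- The Cayley transform `(F - F c) / (F + conj (F c))` maps into the unit disc, so the Schwarz lemma
applies to it. -/
lemma norm_deriv_le_two_mul_re_div_of_re_pos (hF : DifferentiableOn ℂ F (ball c R))
    (hre : ∀ z ∈ ball c R, 0 < (F z).re) (hR : 0 < R) :
    ‖deriv F c‖ ≤ 2 * (F c).re / R := by
  have hc : c ∈ ball c R := mem_ball_self hR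
  have hne : ∀ z ∈ ball c R, F z + conj (F c) ≠ 0 := by
    intro z hz h0
    have hre0 := congrArg re h0
    rw [add_re, conj_re, zero_re] at hre0
    linarith [hre z hz, hre c hc]
  set G : ℂ → ℂ := fun z => (F z - F c) / (F z + conj (F c)) with hG
  have hGd : DifferentiableOn ℂ G (ball c R) := (hF.sub_const _).div (hF.add_const _) hne
  have hmaps : MapsTo G (ball c R) (closedBall (G c) 1) := by
    intro z hz
    have hGc : G c = 0 := by simp [hG]
    rw [hGc, mem_closedBall_zero_iff, norm_div, div_le_one (norm_pos_iff.2 (hne z hz))]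
    exact norm_sub_le_norm_add_conj (hre z hz).le (hre c hc).le
  have hderiv : deriv G c = deriv F c / (2 * (F c).re : ℝ) := by
    have hFc := (hF.differentiableAt (isOpen_ball.mem_nhds hc)).hasDerivAt
    have hne' := hne c hc
    refine ((hFc.sub_const (F c)).fun_div (hFc.add_const _) hne').deriv.trans ?_
    rw [add_conj] at hne' ⊢
    field_simp
    simp
  have hschwarz := norm_deriv_le_div_of_mapsTo_ball hGd hmaps hR
  have hpos : 0 < 2 * (F c).re := by linarith [hre c hc]
  rwa [hderiv, norm_div, norm_real, Real.norm_of_nonneg hpos.le, div_le_iff₀ hpos, mul_comm,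
    mul_one_div] at hschwarz

lemma norm_deriv_le_two_mul_re_div (hF : DifferentiableOn ℂ F (ball c R))
    (hre : ∀ z ∈ ball c R, 0 ≤ (F z).re) (hR : 0 < R) :
    ‖deriv F c‖ ≤ 2 * (F c).re / R := by
  refine le_of_forall_pos_le_add fun ε hε => ?_
  have hpos := norm_deriv_le_two_mul_re_div_of_re_pos (F := fun z => F z + (ε * R / 2 : ℝ))
    (hF.add_const _)
    (fun z hz => by rw [add_re, ofReal_re]; have := hre z hz; positivity) hR
  rw [deriv_add_const, add_re, ofReal_re] at hpos
  refine hpos.trans_eq ?_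
  field_simp

lemma norm_deriv_mul_one_sub_sq_le_two_mul_re (hF : DifferentiableOn ℂ F (ball 0 1))
    (hre : ∀ z ∈ ball (0 : ℂ) 1, 0 ≤ (F z).re) (hz : z ∈ ball (0 : ℂ) 1) :
    ‖deriv F z‖ * (1 - ‖z‖ ^ 2) ≤ 2 * (F z).re := by
  have hz1 : ‖z‖ < 1 := mem_ball_zero_iff.1 hz
  have hmaps := mapsTo_discShift_ball hz1
  have hcentre := norm_deriv_le_two_mul_re_div (F := F ∘ discShift z)
    (hF.comp (differentiableOn_discShift_ball hz1) hmaps) (fun w hw => hre _ (hmaps hw)) one_pos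
  have hFz : HasDerivAt F (deriv F z) (discShift z 0) := by
    rw [discShift_zero_right]
    exact (hF.differentiableAt (isOpen_ball.mem_nhds hz)).hasDerivAt
  rwa [(hFz.comp 0 (hasDerivAt_discShift_zero z)).deriv, norm_mul, norm_real,
    Real.norm_of_nonneg (by nlinarith [norm_nonneg z]), Function.comp_apply, discShift_zero_right,
    div_one] at hcentre

lemma logDeriv_exp_comp {u : ℂ → ℂ} {u' z : ℂ} (hu : HasDerivAt u u' z) :
    logDeriv (exp ∘ u) z = u' :=
  (congrArg (· / exp (u z)) hu.cexp.deriv).trans (mul_div_cancel_left₀ u' (exp_ne_zero (u z)))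

lemma exists_differentiableOn_eqOn_exp (hh : DifferentiableOn ℂ h (ball c R))
    (hne : ∀ z ∈ ball c R, h z ≠ 0) :
    ∃ u : ℂ → ℂ, DifferentiableOn ℂ u (ball c R) ∧ EqOn h (exp ∘ u) (ball c R) := by
  rcases le_or_gt R 0 with hR | hR
  · exact ⟨0, by simp [ball_eq_empty.2 hR]⟩
  have hc : c ∈ ball c R := mem_ball_self hR
  have hlog : DifferentiableOn ℂ (logDeriv h) (ball c R) := (hh.deriv isOpen_ball).div hh hne
  obtain ⟨u, huc, hu⟩ := hlog.isExactOn_ball.with_val_at c (log (h c))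
  have hud : DifferentiableOn ℂ u (ball c R) :=
    fun z hz => (hu z hz).differentiableAt.differentiableWithinAt
  have hlogDeriv : EqOn (logDeriv h) (logDeriv (exp ∘ u)) (ball c R) :=
    fun z hz => (logDeriv_exp_comp (hu z hz)).symm
  obtain ⟨k, -, hk⟩ := (logDeriv_eqOn_iff hh hud.cexp isOpen_ball
    (convex_ball c R).isPreconnected (fun z _ => exp_ne_zero (u z)) hne).1 hlogDeriv
  have hk1 : k = 1 := by
    have hkc := hk hc
    simp only [Pi.smul_apply, huc, exp_log (hne c hc), smul_eq_mul] at hkc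
    exact (mul_eq_right₀ (hne c hc)).1 hkc.symm
  exact ⟨u, hud, by rwa [hk1, one_smul] at hk⟩

lemma norm_logDeriv_mul_one_sub_sq_le_two_mul_log_norm (hh : DifferentiableOn ℂ h (ball 0 1))
    (hge : ∀ z ∈ ball (0 : ℂ) 1, 1 ≤ ‖h z‖) (hz : z ∈ ball (0 : ℂ) 1) :
    ‖logDeriv h z‖ * (1 - ‖z‖ ^ 2) ≤ 2 * Real.log ‖h z‖ := by
  obtain ⟨u, hu, hexp⟩ := exists_differentiableOn_eqOn_exp hh
    fun z hz => norm_pos_iff.1 (one_pos.trans_le (hge z hz))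
  have hre : ∀ z ∈ ball (0 : ℂ) 1, Real.log ‖h z‖ = (u z).re := fun z hz => by
    rw [hexp hz, Function.comp_apply, norm_exp, Real.log_exp]
  have hnhds : ball (0 : ℂ) 1 ∈ 𝓝 z := isOpen_ball.mem_nhds hz
  have hlogDeriv : logDeriv h z = deriv u z :=
    (logDeriv_congr_nhds (hexp.eventuallyEq_of_mem hnhds)).eq_of_nhds.trans
      (logDeriv_exp_comp (hu.differentiableAt hnhds).hasDerivAt)
  rw [hlogDeriv, hre z hz]
  exact norm_deriv_mul_one_sub_sq_le_two_mul_re hu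
    (fun w hw => hre w hw ▸ Real.log_nonneg (hge w hw)) hz

end SchwarzPick

section RealLog

lemma one_sub_sq_add_two_mul_mul_log_pos {t : ℝ} (h0 : 0 < t) (h1 : t < 1) :
    0 < 1 - t ^ 2 + 2 * t * Real.log t := by
  have hsinh : (t - t⁻¹) / 2 < Real.log t := by
    rw [← Real.sinh_log h0]
    exact Real.sinh_lt_self_iff.2 (Real.log_neg h0 h1)
  have hmul := mul_lt_mul_of_pos_left hsinh h0
  rw [mul_div_assoc', mul_sub, mul_inv_cancel₀ h0.ne'] at hmul
  linarith

lemma hasDerivAt_log_norm {f : ℝ → ℂ} {f' : ℂ} {t : ℝ} (hf : HasDerivAt f f' t) (h0 : f t ≠ 0) :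
    HasDerivAt (fun s => Real.log ‖f s‖) (f' / f t).re t := by
  have hsq : HasDerivAt (fun s => Real.log (‖f s‖ ^ 2) / 2) _ t :=
    (hf.norm_sq.log (pow_ne_zero 2 (norm_ne_zero_iff.2 h0))).div_const 2
  simp only [Real.log_pow, Nat.cast_ofNat, ne_eq, OfNat.ofNat_ne_zero, not_false_eq_true,
    mul_div_cancel_left₀] at hsq
  refine hsq.congr_deriv ?_
  rw [div_re, Complex.inner, Complex.sq_norm]
  simp only [mul_re, conj_re, conj_im]
  ring

lemma hasDerivAt_log_norm_ofReal_mul {f : ℂ → ℂ} {z : ℂ} {t : ℝ}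
    (hf : DifferentiableAt ℂ f (t * z)) (h0 : f (t * z) ≠ 0) :
    HasDerivAt (fun s : ℝ => Real.log ‖f (s * z)‖) (z * logDeriv f (t * z)).re t := by
  have hray : HasDerivAt (fun s : ℂ => f (s * z)) (deriv f (t * z) * z) (t : ℂ) :=
    hf.hasDerivAt.comp (t : ℂ) (hasDerivAt_mul_const z)
  refine (hasDerivAt_log_norm hray.comp_ofReal h0).congr_deriv ?_
  rw [logDeriv_apply, mul_div_assoc', mul_comm z]

lemma hasDerivAt_one_add_mul_div_one_sub_mul {a t : ℝ} (h : 1 - t * a ≠ 0) :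
    HasDerivAt (fun s : ℝ => (1 + s * a) / (1 - s * a)) (2 * a / (1 - t * a) ^ 2) t := by
  have hmul : HasDerivAt (fun s : ℝ => s * a) a t := by
    simpa using (hasDerivAt_id t).mul_const a
  refine ((hmul.const_add 1).fun_div (hmul.const_sub 1) h).congr_deriv ?_
  ring

end RealLog

lemma le_norm_dslope {𝕜 E : Type*} [NontriviallyNormedField 𝕜] [NormedAddCommGroup E]
    [NormedSpace 𝕜 E] {f : 𝕜 → E} {c z : 𝕜} {s : Set 𝕜} {K : ℝ} (hs : s ∈ 𝓝 c)
    (hf : DifferentiableAt 𝕜 f c) (hK : ∀ z ∈ s, K * ‖z - c‖ ≤ ‖f z - f c‖) (hz : z ∈ s) :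
    K ≤ ‖dslope f c z‖ := by
  have hne : ∀ w ∈ s, w ≠ c → K ≤ ‖dslope f c w‖ := by
    intro w hw hwc
    have hKw := hK w hw
    rw [← sub_smul_dslope, norm_smul, mul_comm] at hKw
    exact le_of_mul_le_mul_left hKw (norm_pos_iff.2 (sub_ne_zero.2 hwc))
  rcases eq_or_ne z c with rfl | hzc
  · have hlim : Tendsto (fun w => ‖dslope f z w‖) (𝓝[≠] z) (𝓝 ‖dslope f z z‖) :=
      (continuousAt_dslope_same.2 hf).norm.tendsto.mono_left nhdsWithin_le_nhds
    refine ge_of_tendsto hlim ?_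
    filter_upwards [self_mem_nhdsWithin, nhdsWithin_le_nhds hs] with w hwz hws
    exact hne w hws hwz
  · exact hne z hz hzc

lemma ofReal_mul_mem_ball_zero {z : ℂ} {r R : ℝ} (hz : z ∈ ball 0 R) (hr0 : 0 ≤ r) (hr1 : r ≤ 1) :
    (r : ℂ) * z ∈ ball 0 R :=
  balanced_ball_zero.smul_mem (a := (r : ℂ)) (by rwa [norm_real, Real.norm_of_nonneg hr0]) hz

/-- The functions inverted in the theorem: analytic on the open unit disc, vanishing at `0`, and
satisfying `‖z‖ ≤ ‖Φ z‖` there. -/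
structure IsDiscExpanding (Φ : ℂ → ℂ) : Prop where
  analyticOnNhd : AnalyticOnNhd ℂ Φ (ball 0 1)
  map_zero : Φ 0 = 0
  norm_le_norm_map : ∀ z ∈ ball (0 : ℂ) 1, ‖z‖ ≤ ‖Φ z‖

namespace IsDiscExpanding

variable {Φ : ℂ → ℂ} {z : ℂ} {r : ℝ}

lemma one_le_norm_dslope (hΦ : IsDiscExpanding Φ) (hz : z ∈ ball (0 : ℂ) 1) :
    1 ≤ ‖dslope Φ 0 z‖ :=
  le_norm_dslope (ball_mem_nhds 0 one_pos)
    (hΦ.analyticOnNhd 0 (mem_ball_self one_pos)).differentiableAt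
    (by simpa [hΦ.map_zero] using hΦ.norm_le_norm_map) hz

lemma map_eq_mul_dslope (hΦ : IsDiscExpanding Φ) : Φ = fun z => z * dslope Φ 0 z := by
  funext z
  simpa [hΦ.map_zero] using (sub_smul_dslope Φ 0 z).symm

lemma map_ne_zero (hΦ : IsDiscExpanding Φ) (hz : z ∈ ball (0 : ℂ) 1) (hz0 : z ≠ 0) : Φ z ≠ 0 :=
  norm_pos_iff.1 ((norm_pos_iff.2 hz0).trans_le (hΦ.norm_le_norm_map z hz))

lemma re_mul_logDeriv_mul_add_log_norm_pos (hΦ : IsDiscExpanding Φ) (hz : z ∈ ball (0 : ℂ) 1)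
    (hz0 : z ≠ 0) :
    0 < (z * logDeriv Φ z).re * (1 - ‖z‖ ^ 2) + 2 * ‖z‖ * Real.log ‖Φ z‖ := by
  have hz1 : ‖z‖ < 1 := mem_ball_zero_iff.1 hz
  have hzpos : 0 < ‖z‖ := norm_pos_iff.2 hz0
  have hdiff : DifferentiableOn ℂ (dslope Φ 0) (ball 0 1) :=
    (differentiableOn_dslope (ball_mem_nhds 0 one_pos)).2 hΦ.analyticOnNhd.differentiableOn
  have hne : dslope Φ 0 z ≠ 0 := norm_pos_iff.1 (one_pos.trans_le (hΦ.one_le_norm_dslope hz))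
  have hlog : Real.log ‖Φ z‖ = Real.log ‖z‖ + Real.log ‖dslope Φ 0 z‖ := by
    rw [congrFun hΦ.map_eq_mul_dslope z, norm_mul,
      Real.log_mul hzpos.ne' (norm_ne_zero_iff.2 hne)]
  have hlogDeriv : z * logDeriv Φ z = 1 + z * logDeriv (dslope Φ 0) z := by
    conv_lhs => rw [hΦ.map_eq_mul_dslope]
    rw [logDeriv_mul (f := fun w => w) z hz0 hne differentiableAt_fun_id
      (hdiff.differentiableAt (isOpen_ball.mem_nhds hz)), logDeriv_id', mul_add,
      mul_one_div_cancel hz0]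
  have hre : -(‖z‖ * ‖logDeriv (dslope Φ 0) z‖) ≤ (z * logDeriv (dslope Φ 0) z).re := by
    rw [← norm_mul]
    exact (abs_le.1 (abs_re_le_norm _)).1
  have hpick := norm_logDeriv_mul_one_sub_sq_le_two_mul_log_norm hdiff
    (fun w hw => hΦ.one_le_norm_dslope hw) hz
  rw [hlogDeriv, hlog, add_re, one_re]
  calc 0 < 1 - ‖z‖ ^ 2 + 2 * ‖z‖ * Real.log ‖z‖ := one_sub_sq_add_two_mul_mul_log_pos hzpos hz1
    _ ≤ (1 - ‖z‖ * ‖logDeriv (dslope Φ 0) z‖) * (1 - ‖z‖ ^ 2)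
          + 2 * ‖z‖ * (Real.log ‖z‖ + Real.log ‖dslope Φ 0 z‖) := by
      linarith [mul_le_mul_of_nonneg_left hpick hzpos.le]
    _ ≤ _ := by
      have hsq : 0 ≤ 1 - ‖z‖ ^ 2 := by nlinarith
      gcongr
      linarith

lemma deriv_ne_zero (hΦ : IsDiscExpanding Φ) (hz : z ∈ ball (0 : ℂ) 1) (h : ‖Φ z‖ ≤ 1) :
    deriv Φ z ≠ 0 := by
  intro hderiv
  rcases eq_or_ne z 0 with rfl | hz0
  · have hone := hΦ.one_le_norm_dslope hz
    rw [dslope_same, hderiv, norm_zero] at hone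
    exact hone.not_gt one_pos
  · have hpos := hΦ.re_mul_logDeriv_mul_add_log_norm_pos hz hz0
    rw [logDeriv_apply, hderiv, zero_div, mul_zero, zero_re, zero_mul, zero_add] at hpos
    exact hpos.not_ge <| mul_nonpos_of_nonneg_of_nonpos (by positivity)
      (Real.log_nonpos (norm_nonneg _) h)

lemma strictMonoOn_mul_log_norm (hΦ : IsDiscExpanding Φ) (hz : z ∈ ball (0 : ℂ) 1)
    (hz0 : z ≠ 0) :
    StrictMonoOn
      (fun t : ℝ => (1 + t * ‖z‖) / (1 - t * ‖z‖) * Real.log ‖Φ (t * z)‖) (Ioc 0 1) := by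
  have hnorm : ∀ t ∈ Ioc (0 : ℝ) 1, ‖(t : ℂ) * z‖ = t * ‖z‖ := fun t ht => by
    rw [norm_mul, norm_real, Real.norm_of_nonneg ht.1.le]
  have hmem : ∀ t ∈ Ioc (0 : ℝ) 1, (t : ℂ) * z ∈ ball (0 : ℂ) 1 := fun t ht =>
    ofReal_mul_mem_ball_zero hz ht.1.le ht.2
  have hlt : ∀ t ∈ Ioc (0 : ℝ) 1, t * ‖z‖ < 1 := fun t ht =>
    (hnorm t ht).symm.trans_lt (mem_ball_zero_iff.1 (hmem t ht))
  have hne : ∀ t ∈ Ioc (0 : ℝ) 1, (t : ℂ) * z ≠ 0 := fun t ht =>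
    mul_ne_zero (ofReal_ne_zero.2 ht.1.ne') hz0
  have hderiv : ∀ t ∈ Ioc (0 : ℝ) 1, HasDerivAt
      (fun t : ℝ => (1 + t * ‖z‖) / (1 - t * ‖z‖) * Real.log ‖Φ (t * z)‖)
      (2 * ‖z‖ / (1 - t * ‖z‖) ^ 2 * Real.log ‖Φ (t * z)‖ +
        (1 + t * ‖z‖) / (1 - t * ‖z‖) * (z * logDeriv Φ (t * z)).re) t := fun t ht =>
    (hasDerivAt_one_add_mul_div_one_sub_mul (sub_pos.2 (hlt t ht)).ne').mul
      (hasDerivAt_log_norm_ofReal_mul (hΦ.analyticOnNhd _ (hmem t ht)).differentiableAt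
        (hΦ.map_ne_zero (hmem t ht) (hne t ht)))
  refine strictMonoOn_of_deriv_pos (convex_Ioc 0 1)
    (fun t ht => (hderiv t ht).continuousAt.continuousWithinAt) fun t ht => ?_
  replace ht := interior_subset ht
  have hpos := hΦ.re_mul_logDeriv_mul_add_log_norm_pos (hmem t ht) (hne t ht)
  rw [hnorm t ht, mul_assoc (t : ℂ), re_ofReal_mul] at hpos
  have hsub : 0 < 1 - t * ‖z‖ := sub_pos.2 (hlt t ht)
  rw [(hderiv t ht).deriv]
  have hfactor : 0 < t * (1 - t * ‖z‖) ^ 2 := mul_pos ht.1 (pow_pos hsub 2)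
  refine (mul_pos_iff_of_pos_left hfactor).1 (hpos.trans_eq ?_)
  field_simp
  ring

lemma norm_map_mul_lt_one (hΦ : IsDiscExpanding Φ) (hz : z ∈ ball (0 : ℂ) 1) (h : ‖Φ z‖ ≤ 1)
    (hr0 : 0 ≤ r) (hr1 : r < 1) : ‖Φ (r * z)‖ < 1 := by
  rcases eq_or_ne z 0 with rfl | hz0
  · simp [hΦ.map_zero]
  rcases hr0.eq_or_lt with rfl | hrpos
  · simp [hΦ.map_zero]
  have hz1 : ‖z‖ < 1 := mem_ball_zero_iff.1 hz
  have hrz : r * ‖z‖ < 1 := mul_lt_one_of_nonneg_of_lt_one_left hr0 hr1 hz1.le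
  have hmono := hΦ.strictMonoOn_mul_log_norm hz hz0 ⟨hrpos, hr1.le⟩ ⟨one_pos, le_rfl⟩ hr1
  simp only [ofReal_one, one_mul] at hmono
  have hright : (1 + ‖z‖) / (1 - ‖z‖) * Real.log ‖Φ z‖ ≤ 0 :=
    mul_nonpos_of_nonneg_of_nonpos (div_nonneg (by positivity) (sub_nonneg.2 hz1.le))
      (Real.log_nonpos (norm_nonneg _) h)
  have hweight : 0 ≤ (1 + r * ‖z‖) / (1 - r * ‖z‖) :=
    div_nonneg (by positivity) (sub_nonneg.2 hrz.le)
  by_contra! hge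
  exact (hmono.trans_le hright).not_ge (mul_nonneg hweight (Real.log_nonneg hge))

lemma isPreconnected_ball_inter_preimage_ball (hΦ : IsDiscExpanding Φ) :
    IsPreconnected (ball 0 1 ∩ Φ ⁻¹' ball 0 1) := by
  have hzero : (0 : ℂ) ∈ ball 0 1 ∩ Φ ⁻¹' ball 0 1 := by simp [hΦ.map_zero]
  have hstar : StarConvex ℝ 0 (ball 0 1 ∩ Φ ⁻¹' ball 0 1) := by
    refine starConvex_zero_iff.2 fun z hz r hr0 hr1 => ?_
    rcases hr1.eq_or_lt with rfl | hr1
    · rwa [one_smul]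
    rw [real_smul]
    exact ⟨ofReal_mul_mem_ball_zero hz.1 hr0 hr1.le, mem_ball_zero_iff.2 <|
      hΦ.norm_map_mul_lt_one hz.1 (mem_ball_zero_iff.1 hz.2).le hr0 hr1⟩
  exact (hstar.isPathConnected hzero).isConnected.isPreconnected

lemma mul_mem_of_mem_closure (hΦ : IsDiscExpanding Φ)
    (hz : z ∈ closure (ball 0 1 ∩ Φ ⁻¹' ball 0 1)) (hr0 : 0 ≤ r) (hr1 : r < 1) :
    (r : ℂ) * z ∈ ball 0 1 ∩ Φ ⁻¹' ball 0 1 := by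
  obtain ⟨s, hrs, hs1⟩ := exists_between hr1
  have hs0 : 0 < s := hr0.trans_lt hrs
  have hmem : MapsTo (fun w : ℂ => s * w) (closure (ball 0 1 ∩ Φ ⁻¹' ball 0 1)) (ball 0 1) := by
    intro w hw
    have hw1 := closure_ball_subset_closedBall (closure_mono inter_subset_left hw)
    rw [mem_closedBall_zero_iff] at hw1
    rw [mem_ball_zero_iff, norm_mul, norm_real, Real.norm_of_nonneg hs0.le]
    exact mul_lt_one_of_nonneg_of_lt_one_left hs0.le hs1 hw1
  have hcont : ContinuousOn (fun w : ℂ => ‖Φ (s * w)‖) (closure (ball 0 1 ∩ Φ ⁻¹' ball 0 1)) :=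
    (hΦ.analyticOnNhd.continuousOn.comp (by fun_prop) hmem).norm
  have hle : ‖Φ (s * z)‖ ≤ 1 := le_on_closure
    (fun w hw => (hΦ.norm_map_mul_lt_one hw.1 (mem_ball_zero_iff.1 hw.2).le hs0.le hs1).le)
    hcont continuousOn_const hz
  have hrz : (r : ℂ) * z = (r / s : ℝ) * (s * z) := by
    rw [← mul_assoc, ← ofReal_mul, div_mul_cancel₀ r hs0.ne']
  have hrs0 : 0 ≤ r / s := div_nonneg hr0 hs0.le
  have hrs1 : r / s < 1 := (div_lt_one hs0).2 hrs
  rw [hrz]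
  exact ⟨ofReal_mul_mem_ball_zero (hmem hz) hrs0 hrs1.le,
    mem_ball_zero_iff.2 (hΦ.norm_map_mul_lt_one (hmem hz) hle hrs0 hrs1)⟩

end IsDiscExpanding

section RightInverse

lemma leftInvOn_of_eventually_rightInverse {𝕜 : Type*} [NontriviallyNormedField 𝕜]
    {f g : 𝕜 → 𝕜} {S V : Set 𝕜} {z₀ : 𝕜} (hS : IsPreconnected S) (hf : AnalyticOnNhd 𝕜 f S)
    (hg : AnalyticOnNhd 𝕜 g V) (hmaps : MapsTo f S V) (hz₀ : z₀ ∈ V) (hgz₀ : g z₀ ∈ S)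
    (hfg : ∀ᶠ z in 𝓝 z₀, f (g z) = z) : LeftInvOn g f S := by
  have hne : ∀ᶠ z in 𝓝[≠] z₀, g z ≠ g z₀ := by
    filter_upwards [self_mem_nhdsWithin, nhdsWithin_le_nhds hfg] with z hz hfgz heq
    exact hz (hfgz.symm.trans ((congrArg f heq).trans hfg.self_of_nhds))
  have htendsto : Tendsto g (𝓝[≠] z₀) (𝓝[≠] (g z₀)) :=
    tendsto_nhdsWithin_iff.2 ⟨(hg z₀ hz₀).continuousAt.continuousWithinAt, hne⟩
  have hfixed : ∀ᶠ z in 𝓝[≠] z₀, g (f (g z)) = g z :=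
    nhdsWithin_le_nhds (hfg.mono fun z hz => congrArg g hz)
  exact (hg.comp hf hmaps).eqOn_of_preconnected_of_frequently_eq analyticOnNhd_id hS hgz₀
    (htendsto.frequently hfixed.frequently)

lemma leftInvOn_closure_inter_preimage {X Y : Type*} [TopologicalSpace X] [T2Space X]
    [TopologicalSpace Y] {f : Y → X} {g : X → Y} {s : Set X} {D : Set Y}
    (hf : ContinuousOn f D) (hg : ContinuousOn g (closure s)) (hmaps : MapsTo g s D)
    (hinv : LeftInvOn f g s) : LeftInvOn f g (closure s ∩ g ⁻¹' D) :=
  have hinv' : EqOn (f ∘ g) id s := hinv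
  hinv'.of_subset_closure (hf.comp (hg.mono inter_subset_left) fun _ hx => hx.2)
    continuousOn_id (subset_inter subset_closure hmaps) inter_subset_left

lemma exists_analyticAt_eventuallyEq_of_rightInverse {𝕜 : Type*} [NontriviallyNormedField 𝕜]
    [CompleteSpace 𝕜] [CharZero 𝕜] {f g : 𝕜 → 𝕜} {s : Set 𝕜} {ξ : 𝕜}
    (hf : AnalyticAt 𝕜 f (g ξ)) (hf' : deriv f (g ξ) ≠ 0) (hg : ContinuousWithinAt g s ξ)
    (hξ : ξ ∈ s) (hfg : ∀ᶠ z in 𝓝[s] ξ, f (g z) = z) :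
    ∃ G : 𝕜 → 𝕜, AnalyticAt 𝕜 G ξ ∧ G =ᶠ[𝓝[s] ξ] g := by
  have hanalytic := hf.analyticAt_localInverse hf'
  rw [hfg.self_of_nhdsWithin hξ] at hanalytic
  refine ⟨_, hanalytic, ?_⟩
  filter_upwards [hg.eventually (hf.hasStrictDerivAt.eventually_left_inverse hf'), hfg]
    with z hleft hfgz
  rwa [hfgz] at hleft

end RightInverse

namespace IsDiscExpanding

variable {Φ ω : ℂ → ℂ}

lemma analyticOnNhd_of_rightInverse (hΦ : IsDiscExpanding Φ) (hωc : ContinuousOn ω (ball 0 1))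
    (hωmaps : MapsTo ω (ball 0 1) (ball 0 1)) (hinv : LeftInvOn Φ ω (ball 0 1)) :
    AnalyticOnNhd ℂ ω (ball 0 1) := by
  intro z hz
  have hz1 : ‖Φ (ω z)‖ ≤ 1 := by
    rw [hinv hz]
    exact (mem_ball_zero_iff.1 hz).le
  obtain ⟨g, hg, hgω⟩ := exists_analyticAt_eventuallyEq_of_rightInverse
    (hΦ.analyticOnNhd _ (hωmaps hz)) (hΦ.deriv_ne_zero (hωmaps hz) hz1) (hωc z hz) hz
    (eventually_of_mem self_mem_nhdsWithin hinv)
  rw [isOpen_ball.nhdsWithin_eq hz] at hgω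
  exact hg.congr hgω

lemma image_ball_of_rightInverse (hΦ : IsDiscExpanding Φ) (hωc : ContinuousOn ω (ball 0 1))
    (hωmaps : MapsTo ω (ball 0 1) (ball 0 1)) (hinv : LeftInvOn Φ ω (ball 0 1)) :
    ω '' ball 0 1 = ball 0 1 ∩ Φ ⁻¹' ball 0 1 := by
  have hsub : MapsTo ω (ball 0 1) (ball 0 1 ∩ Φ ⁻¹' ball 0 1) := fun z hz =>
    ⟨hωmaps hz, by rwa [mem_preimage, hinv hz]⟩
  have hleft : LeftInvOn ω Φ (ball 0 1 ∩ Φ ⁻¹' ball 0 1) :=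
    leftInvOn_of_eventually_rightInverse hΦ.isPreconnected_ball_inter_preimage_ball
      (hΦ.analyticOnNhd.mono inter_subset_left)
      (hΦ.analyticOnNhd_of_rightInverse hωc hωmaps hinv) (fun _ hw => hw.2)
      (mem_ball_self one_pos) (hsub (mem_ball_self one_pos))
      (eventually_of_mem (ball_mem_nhds 0 one_pos) hinv)
  exact hsub.image_subset.antisymm fun w hw => ⟨Φ w, hw.2, hleft hw⟩

end IsDiscExpanding

theorem global_inverse_radius_and_extension_general {Φ ω : ℂ → ℂ} (hΦ : IsDiscExpanding Φ)
    (hωc : ContinuousOn ω (closedBall 0 1)) (hωmaps : MapsTo ω (ball 0 1) (ball 0 1))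
    (hinv : LeftInvOn Φ ω (ball 0 1)) :
    (∀ ξ ∈ ω '' closedBall 0 1, ∀ r : ℝ, 0 ≤ r → r < 1 → (r : ℂ) * ξ ∈ ω '' ball 0 1) ∧
    (∀ ξ ∈ closedBall (0 : ℂ) 1, ‖ω ξ‖ < 1 →
      ∃ U : Set ℂ, IsOpen U ∧ ξ ∈ U ∧
        ∃ g : ℂ → ℂ, AnalyticOnNhd ℂ g U ∧ EqOn g ω (U ∩ closedBall 0 1)) := by
  have himage := hΦ.image_ball_of_rightInverse (hωc.mono ball_subset_closedBall) hωmaps hinv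
  rw [← closure_ball (0 : ℂ) one_ne_zero] at hωc ⊢
  refine ⟨fun ξ hξ r hr0 hr1 => ?_, fun ξ hξ hξlt => ?_⟩
  · rw [himage]
    exact hΦ.mul_mem_of_mem_closure (himage ▸ hωc.image_closure hξ) hr0 hr1
  · have hξball : ω ξ ∈ ball (0 : ℂ) 1 := mem_ball_zero_iff.2 hξlt
    have hinv' := leftInvOn_closure_inter_preimage hΦ.analyticOnNhd.continuousOn hωc hωmaps hinv
    have hξ1 : ‖Φ (ω ξ)‖ ≤ 1 := by
      rw [hinv' ⟨hξ, hξball⟩]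
      exact mem_closedBall_zero_iff.1 (closure_ball_subset_closedBall hξ)
    have hnear : ∀ᶠ z in 𝓝[closure (ball 0 1)] ξ, Φ (ω z) = z := by
      filter_upwards [(hωc ξ hξ).eventually (isOpen_ball.mem_nhds hξball), self_mem_nhdsWithin]
        with z hωz hz using hinv' ⟨hz, hωz⟩
    obtain ⟨g, hg, hgω⟩ := exists_analyticAt_eventuallyEq_of_rightInverse
      (hΦ.analyticOnNhd _ hξball) (hΦ.deriv_ne_zero hξball hξ1) (hωc ξ hξ) hξ hnear
    obtain ⟨U, hU, hUo, hξU⟩ := _root_.eventually_nhds_iff.1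
      ((eventually_nhdsWithin_iff.1 hgω).and hg.eventually_analyticAt)
    exact ⟨U, hUo, hξU, g, fun z hz => (hU z hz).2, fun z hz => (hU z hz.1).1 hz.2⟩

/-- Global inversion (Proposition 2.3 (4),(5)): with `Φ` analytic on the open unit
disc, `Φ(0) = 0`, `|Φ(z)| ≥ |z|`, and `ω` the global inverse of `Φ`:
(i) if `ξ ∈ ω(𝔻̄) ∩ 𝕋`, then the entire radius `{rξ : 0 ≤ r < 1}` lies in `ω(𝔻)`;
(ii) if `ξ ∈ 𝕋` and `|ω(ξ)| < 1`, then `ω` extends analytically to a neighborhood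
of `ξ`. -/
theorem global_inverse_radius_and_extension (Φ ω : ℂ → ℂ)
    (hΦ : AnalyticOnNhd ℂ Φ (ball 0 1)) (hΦ0 : Φ 0 = 0)
    (hΦge : ∀ z ∈ ball (0 : ℂ) 1, ‖z‖ ≤ ‖Φ z‖)
    (hωc : ContinuousOn ω (closedBall 0 1)) (hωinj : Set.InjOn ω (closedBall 0 1))
    (hωmapsc : Set.MapsTo ω (closedBall 0 1) (closedBall 0 1))
    (hωmaps : Set.MapsTo ω (ball 0 1) (ball 0 1))
    (hωan : AnalyticOnNhd ℂ ω (ball 0 1))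
    (hinv : ∀ z ∈ ball (0 : ℂ) 1, Φ (ω z) = z) :
    (∀ ξ ∈ (ω '' (closedBall 0 1)) ∩ sphere (0 : ℂ) 1,
      ∀ r : ℝ, 0 ≤ r → r < 1 → (r : ℂ) * ξ ∈ ω '' (ball 0 1)) ∧
    (∀ ξ ∈ sphere (0 : ℂ) 1, ‖ω ξ‖ < 1 →
      ∃ U : Set ℂ, IsOpen U ∧ ξ ∈ U ∧
        ∃ g : ℂ → ℂ, AnalyticOnNhd ℂ g U ∧ Set.EqOn g ω (U ∩ closedBall 0 1)) :=
  have hgeneral := global_inverse_radius_and_extension_general ⟨hΦ, hΦ0, hΦge⟩ hωc hωmaps hinv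
  ⟨fun ξ hξ => hgeneral.1 ξ hξ.1, fun ξ hξ => hgeneral.2 ξ (sphere_subset_closedBall hξ)⟩
end
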